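/- arXiv:0901.3518 — 5 statements merged into one kernel-verified Lean document; each statement's English description precedes it below -/
import Mathlib

section
/- Let q be a function of class Q and n a positive integer. Then there exist a constant c' > 0 and a finite or countably infinite collection (α*_j) of positive real numbers with ∑_j 1/(α*_j)² < ∞ such that G_n(z) = c'·∏_j (1 - z²/(α*_j)²) for all z ∈ ℂ (the product being taken as 1 if the collection is empty); in particular G_n is a Laguerre–Pólya function. -/
/-!
Up to the factor `n / (n + 1)`, `Gₙ` is the Fourier transform over `[-λ, λ]` of `(1 - q/n)^{n+1}`.
Let `IsEvenLP` be the class of positive multiples of products `∏ (1 - z² xⱼ)` with `xⱼ ≥ 0`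
summable. The claim is that the transform of every power `(1 - q/n)^p` lies in this class.

The class is closed under pointwise limits that are positive at `0` and of exponential growth on
the imaginary axis (`isEvenLP_of_tendsto`): the value at `i` bounds `∑ xⱼ`, so a subsequence of the
root sequences converges entrywise, the products then converge up to a factor `exp (-γ z²)` coming
from mass lost at infinity, and the growth condition forces `γ = 0`.

It is also closed under `g - D²` for `g ≥ 0` (`IsEvenLP.sub_deriv_deriv`) and under
`f ↦ -f'(z)/z` (`IsEvenLP.deriv_div`). Both are limits of the same operations on the partial
products, for which they follow from the fact that `P' + γ P` has only real zeros if `P` has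
(`realRooted_derivative_add`).

If `q/n = v(t²)` with `v` a polynomial with nonpositive zeros, then `v'` is a positive multiple of a
product of factors `s + g` with `g ≥ 0`. Multiplying a weight by `t² + g` applies `g - D²` to its
transform, and an integration by parts expresses the transform of `(1 - v(t²))^{p+1}` as `-f'(z)/z`
with `f` the transform of a multiple of `v'(t²) (1 - v(t²))^p`. So the polynomial case follows by
induction on `p`, starting from `2 sin(λz)/z` and Euler's product (`isEvenLP_ft_pow`). A general `q`
is a limit of such polynomials, and the closure under limits applies (`isEvenLP_ft_classQ`).
-/

/-- A function `q : ℝ → ℝ` is of class Q (see paper). -/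
def IsClassQ (q : ℝ → ℝ) : Prop :=
  ∃ (k : ℝ) (m : ℕ) (μ : ℝ) (S : Set ℕ) (β : ℕ → ℝ),
    0 < k ∧ 0 < m ∧ 0 ≤ μ ∧ (∀ n ∈ S, β n ≠ 0) ∧
    Summable (fun n : S => 1 / (β n) ^ 2) ∧
    (∀ t : ℝ, q t = k * t ^ (2 * m) * Real.exp (μ * t ^ 2) *
      ∏' n : S, (1 + t ^ 2 / (β n) ^ 2)) ∧
    ∃ T α : ℝ, 0 < T ∧ 0 < α ∧ ∀ t : ℝ, T ≤ t → t ^ (2 + α) < q t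

open Filter Topology

/-! ### Products over root sequences and their limits -/

/-- A nonincreasing, nonnegative, summable sequence; the entries stand for the reciprocals of
the squares of the positive zeros of an even function, padded with zeros if there are
finitely many of them. -/
structure IsRootSeq (x : ℕ → ℝ) : Prop where
  anti : Antitone x
  nonneg : ∀ j, 0 ≤ x j
  summable : Summable x

/-- The even entire function `∏ (1 - z² xⱼ)`. -/
noncomputable def evenProd (x : ℕ → ℝ) (z : ℂ) : ℂ := ∏' j, (1 - z ^ 2 * (x j : ℂ))

/-- `f` is a positive multiple of a product `∏ (1 - z² xⱼ)`. -/
def IsEvenLP (f : ℂ → ℂ) : Prop :=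
  ∃ (c : ℝ) (x : ℕ → ℝ), 0 < c ∧ IsRootSeq x ∧ ∀ z, f z = c * evenProd x z

/-- The genus-one elementary factor differs from `1` by `O(‖u‖²)` on bounded sets. -/
lemma norm_elemFactor_sub_one_le {R : ℝ} (hR : 0 ≤ R) {u : ℂ} (hu : ‖u‖ ≤ R) :
    ‖(1 - u) * Complex.exp u - 1‖ ≤ ((1 + R) * Real.exp R + 3) * ‖u‖ ^ 2 := by
  have hpos : 0 ≤ (1 + R) * Real.exp R := by positivity
  rcases le_total ‖u‖ 1 with h | h
  · have e : (1 - u) * Complex.exp u - 1 = (1 - u) * (Complex.exp u - 1 - u) - u ^ 2 := by ring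
    have h1 := Complex.norm_exp_sub_one_sub_id_le h
    have h2 : ‖1 - u‖ ≤ 2 := (norm_sub_le _ _).trans (by simp; linarith)
    calc ‖(1 - u) * Complex.exp u - 1‖ ≤ ‖1 - u‖ * ‖Complex.exp u - 1 - u‖ + ‖u‖ ^ 2 := by
          rw [e, ← norm_mul, ← norm_pow]; exact norm_sub_le _ _
      _ ≤ 2 * ‖u‖ ^ 2 + ‖u‖ ^ 2 := by gcongr
      _ ≤ _ := by nlinarith [sq_nonneg ‖u‖]
  · have h1 : ‖Complex.exp u‖ ≤ Real.exp R :=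
      (Complex.norm_exp_le_exp_norm u).trans (Real.exp_le_exp.2 hu)
    have h2 : ‖1 - u‖ ≤ 1 + R := (norm_sub_le _ _).trans (by simp; linarith)
    calc ‖(1 - u) * Complex.exp u - 1‖ ≤ ‖1 - u‖ * ‖Complex.exp u‖ + 1 := by
          rw [← norm_mul]; exact (norm_sub_le _ _).trans (by simp)
      _ ≤ (1 + R) * Real.exp R + 1 := by gcongr
      _ ≤ ((1 + R) * Real.exp R + 3) * 1 := by linarith
      _ ≤ _ := by gcongr; nlinarith

namespace IsRootSeq
variable {x : ℕ → ℝ}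

lemma summable_norm (hx : IsRootSeq x) (z : ℂ) : Summable fun j => ‖-(z ^ 2 * (x j : ℂ))‖ := by
  have : (fun j => ‖-(z ^ 2 * (x j : ℂ))‖) = fun j => ‖z‖ ^ 2 * x j := by
    ext j; simp [abs_of_nonneg (hx.nonneg j)]
  rw [this]; exact hx.summable.mul_left _

lemma multipliable (hx : IsRootSeq x) (z : ℂ) :
    Multipliable fun j => (1 - z ^ 2 * (x j : ℂ)) := by
  simpa [sub_eq_add_neg] using multipliable_one_add_of_summable (hx.summable_norm z)

lemma mul_le_tsum (hx : IsRootSeq x) (j : ℕ) : (j + 1) * x j ≤ ∑' i, x i := by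
  calc ((j : ℝ) + 1) * x j = ∑ i ∈ Finset.range (j + 1), x j := by simp
    _ ≤ ∑ i ∈ Finset.range (j + 1), x i :=
        Finset.sum_le_sum fun i hi => hx.anti (by simp at hi; omega)
    _ ≤ _ := hx.summable.sum_le_tsum _ fun i _ => hx.nonneg i

lemma evenProd_mul_I (hx : IsRootSeq x) (y : ℝ) :
    evenProd x (y * Complex.I) = ((∏' j, (1 + y ^ 2 * x j) : ℝ) : ℂ) := by
  have hm : Multipliable fun j => (1 + y ^ 2 * x j) :=
    Real.multipliable_one_add_of_summable (hx.summable.mul_left _)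
  have := hm.hasProd.map (Complex.ofRealHom : ℝ →* ℂ) Complex.continuous_ofReal
  refine Eq.trans ?_ this.tprod_eq
  refine tprod_congr fun j => ?_
  simp [mul_pow]

/-- A value on the imaginary axis controls the sum of the root sequence. -/
lemma one_add_sum_le (hx : IsRootSeq x) {y : ℝ} :
    1 + y ^ 2 * ∑' j, x j ≤ ∏' j, (1 + y ^ 2 * x j) := by
  have hm : Multipliable fun j => (1 + y ^ 2 * x j) :=
    Real.multipliable_one_add_of_summable (hx.summable.mul_left _)
  refine le_of_tendsto_of_tendsto ((hx.summable.hasSum.mul_left (y ^ 2)).const_add 1) hm.hasProd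
    (Eventually.of_forall fun s => ?_)
  have hn : ∀ i, 0 ≤ y ^ 2 * x i := fun i => mul_nonneg (sq_nonneg _) (hx.nonneg i)
  beta_reduce
  induction s using Finset.induction_on with
  | empty => simp
  | insert a s ha ih =>
    have h1 : 0 ≤ ∑ i ∈ s, y ^ 2 * x i := Finset.sum_nonneg fun i _ => hn i
    rw [Finset.sum_insert ha, Finset.prod_insert ha]
    nlinarith [hn a, mul_nonneg (hn a) h1, mul_le_mul_of_nonneg_left ih (hn a)]

/-- Splitting off the exponential convergence factors. -/
lemma tprod_elemFactor (hx : IsRootSeq x) (z : ℂ) :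
    ∏' j, ((1 - z ^ 2 * (x j : ℂ)) * Complex.exp (z ^ 2 * (x j : ℂ))) =
      evenProd x z * Complex.exp (z ^ 2 * ((∑' j, x j : ℝ) : ℂ)) := by
  have h1 : HasSum (fun j => z ^ 2 * (x j : ℂ)) (z ^ 2 * ((∑' j, x j : ℝ) : ℂ)) :=
    (Complex.hasSum_ofReal.2 hx.summable.hasSum).mul_left _
  exact ((hx.multipliable z).hasProd.mul h1.cexp).tprod_eq

end IsRootSeq

lemma evenProd_zero (x : ℕ → ℝ) : evenProd x 0 = 1 := by simp [evenProd]

/-- Compactness: a sequence of root sequences with bounded sums has a subsequence along which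
the products converge, up to a factor `exp (-γ z²)` produced by mass escaping to infinity. -/
lemma exists_subseq_evenProd {x : ℕ → ℕ → ℝ} (hx : ∀ N, IsRootSeq (x N)) {B : ℝ}
    (hB : ∀ N, ∑' j, x N j ≤ B) :
    ∃ (φ : ℕ → ℕ) (y : ℕ → ℝ) (γ : ℝ), StrictMono φ ∧ IsRootSeq y ∧ 0 ≤ γ ∧
      ∀ z, Tendsto (fun N => evenProd (x (φ N)) z) atTop
        (𝓝 (Complex.exp (-(γ * z ^ 2)) * evenProd y z)) := by
  have hs0 : ∀ N, 0 ≤ ∑' j, x N j := fun N => tsum_nonneg (hx N).nonneg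
  have hB0 : 0 ≤ B := (hs0 0).trans (hB 0)
  have hxB : ∀ N j, x N j ≤ B / (j + 1) := fun N j => by
    rw [le_div_iff₀ (by positivity), mul_comm]; exact ((hx N).mul_le_tsum j).trans (hB N)
  have hxB' : ∀ N j, x N j ≤ B := fun N j =>
    (hxB N j).trans (div_le_self hB0 (by linarith [(Nat.cast_nonneg j : (0:ℝ) ≤ j)]))
  have hK : IsCompact ((Set.Icc 0 B) ×ˢ (Set.univ.pi fun _ : ℕ => Set.Icc (0 : ℝ) B)) :=
    isCompact_Icc.prod (isCompact_univ_pi fun _ => isCompact_Icc)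
  obtain ⟨⟨s, y⟩, -, φ, hφ, hlim⟩ := hK.tendsto_subseq (x := fun N => (∑' j, x N j, x N))
    fun N => ⟨⟨hs0 N, hB N⟩, fun j _ => ⟨(hx N).nonneg j, hxB' N j⟩⟩
  rw [Prod.tendsto_iff] at hlim
  obtain ⟨hs, hy⟩ := hlim
  rw [tendsto_pi_nhds] at hy
  simp only [Function.comp_apply] at hs hy
  have hy0 : ∀ j, 0 ≤ y j := fun j => ge_of_tendsto' (hy j) fun N => (hx _).nonneg j
  have hsum : ∀ t : Finset ℕ, ∑ j ∈ t, y j ≤ s := fun t =>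
    le_of_tendsto_of_tendsto' (tendsto_finsetSum t fun j _ => hy j) hs fun N =>
      (hx (φ N)).summable.sum_le_tsum _ fun i _ => (hx _).nonneg i
  have hsy : Summable y := summable_of_sum_le hy0 hsum
  have hyR : IsRootSeq y :=
    ⟨fun i j hij => le_of_tendsto_of_tendsto' (hy j) (hy i) fun N => (hx _).anti hij, hy0, hsy⟩
  refine ⟨φ, y, s - ∑' j, y j, hφ, hyR,
    sub_nonneg.2 (hsy.tsum_le_of_sum_le hsum), fun z => ?_⟩
  -- dominated convergence for the products of elementary factors
  have key : Tendsto (fun N => ∏' j, ((1 - z ^ 2 * (x (φ N) j : ℂ)) *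
      Complex.exp (z ^ 2 * (x (φ N) j : ℂ)))) atTop
      (𝓝 (∏' j, ((1 - z ^ 2 * (y j : ℂ)) * Complex.exp (z ^ 2 * (y j : ℂ))))) := by
    set R := ‖z‖ ^ 2 * B
    have hR : 0 ≤ R := by positivity
    have := tendsto_tprod_one_add_of_dominated_convergence (𝓕 := atTop)
      (f := fun N j => (1 - z ^ 2 * (x (φ N) j : ℂ)) *
        Complex.exp (z ^ 2 * (x (φ N) j : ℂ)) - 1)
      (g := fun j => (1 - z ^ 2 * (y j : ℂ)) * Complex.exp (z ^ 2 * (y j : ℂ)) - 1)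
      (bound := fun j : ℕ => ((1 + R) * Real.exp R + 3) * (R ^ 2 * (1 / ((j : ℝ) + 1) ^ 2)))
      ?_ ?_ ?_
    · simpa using this
    · refine (Summable.mul_left _ ?_).mul_left _
      exact_mod_cast (summable_nat_add_iff 1).2 (Real.summable_one_div_nat_pow.2 one_lt_two)
    · intro j
      have h1 : Tendsto (fun N => z ^ 2 * (x (φ N) j : ℂ)) atTop (𝓝 (z ^ 2 * (y j : ℂ))) :=
        ((Complex.continuous_ofReal.tendsto _).comp (hy j)).const_mul _
      exact ((h1.const_sub 1).mul h1.cexp).sub_const 1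
    · refine Eventually.of_forall fun N j => ?_
      have hn : ‖z ^ 2 * (x (φ N) j : ℂ)‖ = ‖z‖ ^ 2 * x (φ N) j := by
        simp [abs_of_nonneg ((hx (φ N)).nonneg j)]
      have h1 : ‖z ^ 2 * (x (φ N) j : ℂ)‖ ≤ R := by
        rw [hn]; exact mul_le_mul_of_nonneg_left (hxB' _ _) (by positivity)
      refine (norm_elemFactor_sub_one_le hR h1).trans ?_
      gcongr
      rw [hn]
      have h2 : ‖z‖ ^ 2 * x (φ N) j ≤ R * (1 / ((j : ℝ) + 1)) := by
        rw [mul_one_div, mul_div_assoc]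
        exact mul_le_mul_of_nonneg_left (hxB _ _) (by positivity)
      calc _ ≤ (R * (1 / ((j : ℝ) + 1))) ^ 2 :=
            pow_le_pow_left₀ (mul_nonneg (by positivity) ((hx _).nonneg j)) h2 2
        _ = _ := by rw [mul_pow, div_pow, one_pow]
  have hexp : Tendsto (fun N => Complex.exp (-(z ^ 2 * ((∑' j, x (φ N) j : ℝ) : ℂ)))) atTop
      (𝓝 (Complex.exp (-(z ^ 2 * (s : ℂ))))) :=
    (((Complex.continuous_ofReal.tendsto _).comp hs).const_mul _).neg.cexp
  have := key.mul hexp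
  simp only [fun N => (hx (φ N)).tprod_elemFactor z, hyR.tprod_elemFactor z] at this
  convert this using 2
  · rw [mul_assoc, ← Complex.exp_add]; simp
  · rw [mul_assoc, ← Complex.exp_add, mul_comm]; congr 2; push_cast; ring

/-- A pointwise limit of constant multiples of products `∏ (1 - z² xⱼ)` is again of this form, as
soon as it is positive at `0` and of exponential growth on the imaginary axis; the growth
condition excludes a Gaussian factor. -/
lemma isEvenLP_of_tendsto {F : ℕ → ℂ → ℂ} {f : ℂ → ℂ}
    (hF : ∀ᶠ N in atTop, ∃ (c : ℂ) (x : ℕ → ℝ), IsRootSeq x ∧ ∀ z, F N z = c * evenProd x z)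
    (hlim : ∀ z, Tendsto (fun N => F N z) atTop (𝓝 (f z)))
    {r : ℝ} (hr : 0 < r) (hf0 : f 0 = r) {C l : ℝ}
    (hgrowth : ∀ y : ℝ, 0 ≤ y → ‖f (y * Complex.I)‖ ≤ C * Real.exp (l * y)) : IsEvenLP f := by
  have hr' : (r : ℂ) ≠ 0 := by exact_mod_cast hr.ne'
  have h0 : ∀ᶠ N in atTop, F N 0 ≠ 0 := (hlim 0).eventually_ne (by rwa [hf0])
  obtain ⟨N₀, hN₀⟩ := eventually_atTop.1 (hF.and h0)
  choose c x hx hc using fun N => (hN₀ (N + N₀) (by omega)).1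
  have hF0 : ∀ N, F (N + N₀) 0 = c N := fun N => by rw [hc, evenProd_zero, mul_one]
  have hc0 : ∀ N, c N ≠ 0 := fun N => hF0 N ▸ (hN₀ (N + N₀) (by omega)).2
  have hlimc : Tendsto c atTop (𝓝 (r : ℂ)) := by
    rw [← hf0, ← funext hF0]; exact (hlim 0).comp (tendsto_add_atTop_nat N₀)
  have hlimp : ∀ z, Tendsto (fun N => evenProd (x N) z) atTop (𝓝 (f z / r)) := fun z => by
    refine (((hlim z).comp (tendsto_add_atTop_nat N₀)).div hlimc hr').congr fun N => ?_
    simp [hc, hc0 N]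
  obtain ⟨B, hB⟩ := (hlimp ((1 : ℝ) * Complex.I)).norm.bddAbove_range
  have hB' : ∀ N, ∑' j, x N j ≤ B := fun N => by
    have h1 := hB ⟨N, rfl⟩
    have h2 := (hx N).one_add_sum_le (y := 1)
    beta_reduce at h1
    rw [(hx N).evenProd_mul_I, Complex.norm_real, Real.norm_eq_abs] at h1
    have h3 := le_abs_self (∏' j, (1 + 1 ^ 2 * x N j))
    linarith
  obtain ⟨φ, y, γ, hφ, hy, hγ, hlim'⟩ := exists_subseq_evenProd hx hB'
  have hform : ∀ z, f z = r * (Complex.exp (-(γ * z ^ 2)) * evenProd y z) := fun z => by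
    rw [← tendsto_nhds_unique ((hlimp z).comp hφ.tendsto_atTop) (hlim' z)]
    field_simp
  -- a Gaussian factor would outgrow `C exp (l y)` on the imaginary axis
  have hγ0 : γ = 0 := by
    by_contra hne
    have hγpos : 0 < γ := lt_of_le_of_ne hγ (Ne.symm hne)
    have hle : ∀ t : ℝ, 0 ≤ t → r * Real.exp (γ * t ^ 2) ≤ C * Real.exp (l * t) := fun t ht => by
      refine le_trans ?_ (hgrowth t ht)
      have h1 : 1 ≤ ∏' j, (1 + t ^ 2 * y j) :=
        le_trans (le_add_of_nonneg_right (mul_nonneg (sq_nonneg t)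
          (tsum_nonneg hy.nonneg))) hy.one_add_sum_le
      rw [hform, hy.evenProd_mul_I, norm_mul, norm_mul, Complex.norm_real, Complex.norm_real,
        Complex.norm_exp, Real.norm_of_nonneg hr.le, Real.norm_of_nonneg (by linarith)]
      have : (-((γ : ℂ) * (t * Complex.I) ^ 2)).re = γ * t ^ 2 := by
        rw [mul_pow, Complex.I_sq, mul_neg_one, mul_neg, neg_neg]; norm_cast
      rw [this]
      exact mul_le_mul_of_nonneg_left (le_mul_of_one_le_right (Real.exp_pos _).le h1) hr.le
    have hT : Tendsto (fun t : ℝ => Real.exp (t * (γ * t - l))) atTop atTop :=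
      Real.tendsto_exp_atTop.comp (tendsto_id.atTop_mul_atTop₀
        (tendsto_atTop_add_const_right _ _ (tendsto_id.const_mul_atTop hγpos)))
    obtain ⟨t, ht0, ht⟩ := ((eventually_ge_atTop 0).and (hT.eventually_gt_atTop (C / r))).exists
    have h := hle t ht0
    rw [div_lt_iff₀ hr] at ht
    have e : Real.exp (γ * t ^ 2) = Real.exp (t * (γ * t - l)) * Real.exp (l * t) := by
      rw [← Real.exp_add]; ring_nf
    rw [e] at h
    nlinarith [Real.exp_pos (l * t)]
  exact ⟨r, y, hr, hy, fun z => by rw [hform, hγ0]; simp⟩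

/-! ### Polynomials with real zeros -/

open Polynomial in
/-- If `P` has only real zeros, so has `P' + γ P` for real `γ`: off the real axis the imaginary
part of `P'/P = ∑ 1/(z - r)` has constant sign. -/
lemma realRooted_derivative_add {P : ℂ[X]} (hP : ∀ z, P.eval z = 0 → z.im = 0) (γ : ℝ)
    (hne : derivative P + C (γ : ℂ) * P ≠ 0) {z : ℂ}
    (hz : (derivative P + C (γ : ℂ) * P).eval z = 0) : z.im = 0 := by
  by_contra him
  have hPz : P.eval z ≠ 0 := fun h => him (hP z h)
  have hP0 : P ≠ 0 := fun h => hPz (by simp [h])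
  have hlog := (IsAlgClosed.splits P).eval_derivative_div_eval_of_ne_zero hPz
  have hsum : (P.roots.map fun r => 1 / (z - r)).sum = -(γ : ℂ) := by
    rw [← hlog, div_eq_iff hPz]
    simp only [eval_add, eval_mul, eval_C] at hz
    linear_combination hz
  have hterm : ∀ r ∈ P.roots, (1 / (z - r)).im = -z.im * (1 / Complex.normSq (z - r)) := by
    intro r hr
    have hr' : r.im = 0 := hP r (by simpa [hP0] using hr)
    rw [one_div, Complex.inv_im]; simp [hr']; ring
  have him0 : (P.roots.map fun r => (1 / Complex.normSq (z - r))).sum = 0 := by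
    have h1 : ((P.roots.map fun r => 1 / (z - r)).sum).im = 0 := by rw [hsum]; simp
    have h2 : ((P.roots.map fun r => 1 / (z - r)).sum).im =
        (P.roots.map fun r => (1 / (z - r)).im).sum := by
      simpa [Multiset.map_map, Function.comp_def] using
        map_multiset_sum Complex.imAddGroupHom (P.roots.map fun r => 1 / (z - r))
    rw [h2, Multiset.map_congr rfl hterm, Multiset.sum_map_mul_left] at h1
    simpa [him] using h1
  have hroots : P.roots = 0 := by
    by_contra hne0
    obtain ⟨r, hr⟩ := Multiset.exists_mem_of_ne_zero hne0
    have hr' : r.im = 0 := hP r (by simpa [hP0] using hr)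
    have hpos : 0 < 1 / Complex.normSq (z - r) := by
      refine one_div_pos.2 (Complex.normSq_pos.2 (sub_ne_zero.2 ?_))
      rintro rfl; exact him hr'
    have := Multiset.single_le_sum (s := P.roots.map fun r => (1 / Complex.normSq (z - r)))
      (fun y hy => by
        obtain ⟨a, -, rfl⟩ := Multiset.mem_map.1 hy
        exact one_div_nonneg.2 (Complex.normSq_nonneg _)) _ (Multiset.mem_map_of_mem _ hr)
    linarith
  have hconst := (IsAlgClosed.splits P).natDegree_eq_card_roots
  rw [hroots, Multiset.card_zero] at hconst
  rw [eq_C_of_natDegree_eq_zero hconst] at hne hz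
  simp only [derivative_C, zero_add, eval_C, ← C_mul, ne_eq, C_eq_zero] at hne hz
  exact hne hz

lemma exists_rootSeq_of_list (l : List ℝ) (hl : l.Pairwise (· ≥ ·)) (h0 : ∀ a ∈ l, 0 ≤ a) :
    ∃ x, IsRootSeq x ∧ ∀ z, evenProd x z = (l.map fun a : ℝ => (1 - z ^ 2 * (a : ℂ))).prod := by
  have hget : ∀ j, 0 ≤ l.getD j 0 := fun j => by
    rcases lt_or_ge j l.length with h | h
    · rw [List.getD_eq_getElem _ _ h]; exact h0 _ (List.getElem_mem h)
    · rw [List.getD_eq_default _ _ h]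
  refine ⟨fun j => l.getD j 0, ⟨fun i j hij => ?_, hget, ?_⟩, fun z => ?_⟩
  · rcases lt_or_ge j l.length with h | h
    · rcases hij.eq_or_lt with rfl | hlt
      · exact le_rfl
      · simp only [List.getD_eq_getElem _ _ h, List.getD_eq_getElem _ _ (hlt.trans h)]
        exact List.pairwise_iff_getElem.1 hl _ _ _ _ hlt
    · simp only [List.getD_eq_default _ _ h]; exact hget i
  · refine summable_of_ne_finset_zero (s := Finset.range l.length) fun j hj => ?_
    exact List.getD_eq_default _ _ (by simpa using hj)
  · rw [evenProd, tprod_eq_prod (s := Finset.range l.length) fun j hj => by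
      rw [List.getD_eq_default _ _ (by simpa using hj)]; simp]
    rw [Finset.prod_range, ← List.prod_ofFn]
    congr 1
    apply List.ext_getElem <;> simp

open Polynomial in
/-- A polynomial `S` for which `S(z²)` has only real nonzero zeros is, as a function of `z²`, a
finite product of factors `1 - z² xⱼ`. -/
lemma exists_rootSeq_of_poly {S : ℂ[X]} (h0 : S.eval 0 ≠ 0)
    (hS : ∀ z : ℂ, S.eval (z ^ 2) = 0 → z.im = 0) :
    ∃ x, IsRootSeq x ∧ ∀ z : ℂ, S.eval (z ^ 2) = S.eval 0 * evenProd x z := by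
  have hS0 : S ≠ 0 := fun h => h0 (by simp [h])
  have hroot : ∀ w ∈ S.roots, ∃ a : ℝ, 0 < a ∧ w = a := by
    intro w hw
    have hw' : S.eval w = 0 := by simpa [hS0] using hw
    obtain ⟨z, hz⟩ := IsAlgClosed.exists_pow_nat_eq w (n := 2) two_pos
    have him := hS z (by rw [hz, hw'])
    have hz' : z = (z.re : ℂ) := Complex.ext (by simp) (by simp [him])
    refine ⟨z.re ^ 2, ?_, by rw [← hz, hz']; simp⟩
    refine lt_of_le_of_ne (sq_nonneg _) fun h => ?_
    have : w = 0 := by rw [← hz, hz']; exact_mod_cast h.symm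
    exact h0 (this ▸ hw')
  set l := (S.roots.map fun w => w.re⁻¹).sort (· ≥ ·) with hl
  obtain ⟨x, hx, hprod⟩ := exists_rootSeq_of_list l (Multiset.pairwise_sort _ _) fun a ha => by
    rw [hl, Multiset.mem_sort] at ha
    obtain ⟨w, hw, rfl⟩ := Multiset.mem_map.1 ha
    obtain ⟨b, hb, rfl⟩ := hroot w hw
    exact inv_nonneg.2 (by simpa using hb.le)
  refine ⟨x, hx, fun z => ?_⟩
  have hev : ∀ w : ℂ, S.eval w = S.leadingCoeff * (S.roots.map fun r => w - r).prod := fun w => by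
    conv_lhs => rw [(IsAlgClosed.splits S).eq_prod_roots]
    simp [eval_multiset_prod, Multiset.map_map]
  rw [hprod, ← Multiset.prod_coe, ← Multiset.map_coe, hl, Multiset.sort_eq, Multiset.map_map,
    hev, hev 0, mul_assoc, ← Multiset.prod_map_mul]
  congr 2
  refine Multiset.map_congr rfl fun w hw => ?_
  obtain ⟨a, ha, rfl⟩ := hroot w hw
  have : (a : ℂ) ≠ 0 := by exact_mod_cast ha.ne'
  simp; field_simp; ring

/-! ### Closure under differential operators -/

open Polynomial in
/-- The partial products of `c ∏ (1 - w xⱼ)`, as polynomials in `w = z²`. -/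
noncomputable def partialPoly (c : ℝ) (x : ℕ → ℝ) (N : ℕ) : ℂ[X] :=
  C (c : ℂ) * ∏ j ∈ Finset.range N, (1 - C (x j : ℂ) * X)

open Polynomial in
lemma partialPoly_realRooted {c : ℝ} (hc : 0 < c) {x : ℕ → ℝ} (hx : IsRootSeq x) (N : ℕ) {z : ℂ}
    (hz : ((partialPoly c x N).comp (X ^ 2)).eval z = 0) : z.im = 0 := by
  have hc' : (c : ℂ) ≠ 0 := by exact_mod_cast hc.ne'
  simp only [partialPoly, eval_comp, eval_mul, eval_C, eval_prod, eval_sub, eval_one, eval_X,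
    eval_pow, mul_eq_zero, hc', false_or, Finset.prod_eq_zero_iff] at hz
  obtain ⟨j, -, hj⟩ := hz
  have h1 := congrArg Complex.re hj
  have h2 := congrArg Complex.im hj
  simp [pow_two] at h1 h2
  by_contra him
  have hxj := hx.nonneg j
  rcases h2 with h2 | h2
  · simp [h2] at h1
  · have : z.re = 0 := by
      have : z.im * z.re = 0 := by nlinarith
      simpa [him] using this
    rw [this] at h1
    nlinarith [mul_nonneg hxj (mul_self_nonneg z.im)]

open Polynomial in
/-- The partial products converge, together with two derivatives. -/
lemma tendsto_partialPoly {f : ℂ → ℂ} {c : ℝ} {x : ℕ → ℝ} (hx : IsRootSeq x)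
    (hf : ∀ z, f z = c * evenProd x z) (z : ℂ) :
    Tendsto (fun N => ((partialPoly c x N).comp (X ^ 2)).eval z) atTop (𝓝 (f z)) ∧
    Tendsto (fun N => (derivative ((partialPoly c x N).comp (X ^ 2))).eval z) atTop
      (𝓝 (deriv f z)) ∧
    Tendsto (fun N => (derivative (derivative ((partialPoly c x N).comp (X ^ 2)))).eval z) atTop
      (𝓝 (deriv (deriv f) z)) := by
  set U := Metric.ball (0 : ℂ) (‖z‖ + 1)
  have hzU : z ∈ U := by simp [U]
  have hprod : TendstoLocallyUniformlyOn
      (fun N w => ∏ j ∈ Finset.range N, (1 + -(w ^ 2 * (x j : ℂ))))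
      (fun w => ∏' j, (1 + -(w ^ 2 * (x j : ℂ)))) atTop U := by
    refine HasProdLocallyUniformlyOn.tendstoLocallyUniformlyOn_finsetRange
      (Summable.hasProdLocallyUniformlyOn_nat_one_add Metric.isOpen_ball
        (hx.summable.mul_left ((‖z‖ + 1) ^ 2)) (Eventually.of_forall fun j w hw => ?_)
        fun j => by fun_prop)
    have hw' : ‖w‖ ≤ ‖z‖ + 1 := by simpa [U] using (Metric.mem_ball.1 hw).le
    rw [norm_neg, norm_mul, norm_pow, Complex.norm_real, Real.norm_of_nonneg (hx.nonneg j)]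
    exact mul_le_mul_of_nonneg_right (by gcongr) (hx.nonneg j)
  have h0 : TendstoLocallyUniformlyOn
      (fun N w => ((partialPoly c x N).comp (X ^ 2)).eval w) f atTop U := by
    have hm := (uniformContinuous_const_smul (c : ℂ)).comp_tendstoLocallyUniformlyOn hprod
    have ef : f = ((c : ℂ) • ·) ∘ fun w => ∏' j, (1 + -(w ^ 2 * (x j : ℂ))) := by
      ext w; simp [hf, evenProd, sub_eq_add_neg]
    rw [ef]
    refine hm.congr fun N w _ => ?_
    simp only [partialPoly, eval_comp, eval_mul, eval_C, eval_prod, eval_sub, eval_one, eval_X,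
      eval_pow, Function.comp_apply, smul_eq_mul]
    congr 1
    exact Finset.prod_congr rfl fun j _ => by ring
  have h1 := h0.deriv (Eventually.of_forall fun N => (Polynomial.differentiable _).differentiableOn)
    Metric.isOpen_ball
  have e1 : (deriv ∘ fun N w => ((partialPoly c x N).comp (X ^ 2)).eval w) =
      fun N w => (derivative ((partialPoly c x N).comp (X ^ 2))).eval w := by
    ext N w; simp only [Function.comp_apply, Polynomial.deriv]
  rw [e1] at h1
  have h2 := h1.deriv (Eventually.of_forall fun N => (Polynomial.differentiable _).differentiableOn)
    Metric.isOpen_ball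
  refine ⟨h0.tendsto_at hzU, h1.tendsto_at hzU, (h2.tendsto_at hzU).congr fun N => ?_⟩
  simp only [Function.comp_apply, Polynomial.deriv]

open Polynomial in
/-- Closure of even Laguerre–Pólya functions under `g - D²` with `g ≥ 0`. -/
lemma IsEvenLP.sub_deriv_deriv {f h : ℂ → ℂ} (hf : IsEvenLP f) {g : ℝ} (hg : 0 ≤ g)
    (hh : ∀ z, h z = g * f z - deriv (deriv f) z) {r : ℝ} (hr : 0 < r) (hf0 : h 0 = r) {C l : ℝ}
    (hgrowth : ∀ y : ℝ, 0 ≤ y → ‖h (y * Complex.I)‖ ≤ C * Real.exp (l * y)) : IsEvenLP h := by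
  obtain ⟨c, x, hc, hx, hfx⟩ := hf
  set S : ℕ → ℂ[X] := fun N => Polynomial.C (g : ℂ) * partialPoly c x N -
    2 * derivative (partialPoly c x N) -
    4 * X * derivative (derivative (partialPoly c x N)) with hS
  have hcomp : ∀ N, (S N).comp (X ^ 2) = Polynomial.C (g : ℂ) * (partialPoly c x N).comp (X ^ 2) -
      derivative (derivative ((partialPoly c x N).comp (X ^ 2))) := fun N => by
    simp only [hS, derivative_comp, derivative_mul, derivative_X_pow]
    simp [map_ofNat Polynomial.C 2]
    ring
  have hev : ∀ N z, (S N).eval (z ^ 2) = ((S N).comp (X ^ 2)).eval z := fun N z => by simp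
  have hlim : ∀ z, Tendsto (fun N => (S N).eval (z ^ 2)) atTop (𝓝 (h z)) := fun z => by
    obtain ⟨h0, -, h2⟩ := tendsto_partialPoly hx hfx z
    rw [hh]
    refine ((h0.const_mul (g : ℂ)).sub h2).congr fun N => ?_
    rw [hev, hcomp]; simp
  refine isEvenLP_of_tendsto (F := fun N z => (S N).eval (z ^ 2)) ?_ hlim hr hf0 hgrowth
  have hne : ∀ᶠ N in atTop, (S N).eval 0 ≠ 0 := by
    have := (hlim 0).eventually_ne (b₂ := 0) (by rw [hf0]; exact_mod_cast hr.ne')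
    simpa using this
  filter_upwards [hne] with N hN
  refine ⟨_, exists_rootSeq_of_poly hN fun z hz => ?_⟩
  -- up to sign, `g - D²` factors as `(D - √g) (D + √g)`
  set P := (partialPoly c x N).comp (X ^ 2) with hP
  set s := Real.sqrt g
  have hfac : derivative (derivative P + Polynomial.C (s : ℂ) * P) +
      Polynomial.C ((-s : ℝ) : ℂ) * (derivative P + Polynomial.C (s : ℂ) * P) =
      -((S N).comp (X ^ 2)) := by
    have hs : Polynomial.C (s : ℂ) * Polynomial.C (s : ℂ) = Polynomial.C (g : ℂ) := by
      rw [← Polynomial.C_mul]; norm_cast; rw [Real.mul_self_sqrt hg]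
    rw [hcomp, ← hs]
    simp
    ring
  have hne2 : (S N).comp (X ^ 2) ≠ 0 := fun h0 => hN (by
    have := hev N 0; rw [h0] at this; simpa using this)
  have hne1 : derivative P + Polynomial.C (s : ℂ) * P ≠ 0 := fun h0 => by
    rw [h0] at hfac; simp at hfac; exact hne2 hfac
  refine realRooted_derivative_add (fun w hw => realRooted_derivative_add
    (fun v hv => partialPoly_realRooted hc hx N hv) s hne1 hw) (-s) ?_ ?_ (z := z)
  · rw [hfac]; simpa using hne2
  · rw [hfac, eval_neg, ← hev, hz, neg_zero]

open Polynomial in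
/-- Closure of even Laguerre–Pólya functions under `f ↦ -f'(z)/z`. -/
lemma IsEvenLP.deriv_div {f h : ℂ → ℂ} (hf : IsEvenLP f)
    (hh : ∀ z, z * h z = -deriv f z) (hd : DifferentiableAt ℂ h 0)
    {r : ℝ} (hr : 0 < r) (hf0 : h 0 = r) {C l : ℝ}
    (hgrowth : ∀ y : ℝ, 0 ≤ y → ‖h (y * Complex.I)‖ ≤ C * Real.exp (l * y)) : IsEvenLP h := by
  obtain ⟨c, x, hc, hx, hfx⟩ := hf
  set S : ℕ → ℂ[X] := fun N => -2 * derivative (partialPoly c x N) with hS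
  have hcomp : ∀ N, X * (S N).comp (X ^ 2) =
      -derivative ((partialPoly c x N).comp (X ^ 2)) := fun N => by
    simp only [hS, derivative_comp, derivative_X_pow]
    simp [map_ofNat Polynomial.C 2]
    ring
  have hlim : ∀ z, Tendsto (fun N => (S N).eval (z ^ 2)) atTop (𝓝 (h z)) := fun z => by
    obtain ⟨-, h1, h2⟩ := tendsto_partialPoly hx hfx z
    rcases eq_or_ne z 0 with rfl | hz
    · have e : h 0 = - deriv (deriv f) 0 := by
        have hfun : deriv f = fun z => -(z * h z) := by ext z; rw [hh, neg_neg]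
        have := ((hasDerivAt_id (0 : ℂ)).fun_mul hd.hasDerivAt).fun_neg.deriv
        simp only [id] at this
        rw [hfun, this]
        simp
      rw [e]
      refine h2.neg.congr fun N => ?_
      rw [← eval_neg, ← derivative_neg, ← hcomp]
      simp
    · have e : h z = -deriv f z / z := by rw [← hh]; field_simp
      rw [e]
      refine (h1.neg.div_const z).congr fun N => ?_
      rw [← eval_neg, ← hcomp]
      simp [hz]
  refine isEvenLP_of_tendsto (F := fun N z => (S N).eval (z ^ 2)) ?_ hlim hr hf0 hgrowth
  have hne : ∀ᶠ N in atTop, (S N).eval 0 ≠ 0 := by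
    have := (hlim 0).eventually_ne (b₂ := 0) (by rw [hf0]; exact_mod_cast hr.ne')
    simpa using this
  filter_upwards [hne] with N hN
  refine ⟨_, exists_rootSeq_of_poly hN fun z hz => ?_⟩
  have hne2 : derivative ((partialPoly c x N).comp (X ^ 2)) ≠ 0 := fun h0 => by
    have := hcomp N
    rw [h0, neg_zero, mul_eq_zero] at this
    refine hN ?_
    have h3 := congrArg (eval 0) (this.resolve_left X_ne_zero)
    simpa using h3
  refine realRooted_derivative_add (fun v hv => partialPoly_realRooted hc hx N hv) 0
    (by simpa using hne2) (z := z) ?_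
  have := congrArg (eval z) (hcomp N)
  simp only [eval_mul, eval_X, eval_comp, eval_pow, hz, mul_zero, eval_neg] at this
  simp only [Complex.ofReal_zero, map_zero, zero_mul, add_zero]
  exact neg_eq_zero.1 this.symm

/-! ### Fourier transforms on an interval -/

/-- The Fourier transform `∫ ψ(t) e^{izt} dt` over `[-l, l]`. -/
noncomputable def ft (l : ℝ) (ψ : ℝ → ℂ) (z : ℂ) : ℂ :=
  ∫ t in (-l)..l, ψ t * Complex.exp (Complex.I * z * t)

lemma ft_hasDerivAt (l : ℝ) {ψ : ℝ → ℂ} (hψ : Continuous ψ) (z : ℂ) :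
    HasDerivAt (ft l ψ) (ft l (fun t => Complex.I * t * ψ t) z) z := by
  have hcont : Continuous fun p : ℂ × ℝ =>
      Complex.I * p.2 * ψ p.2 * Complex.exp (Complex.I * p.1 * p.2) := by fun_prop
  obtain ⟨M, hM⟩ := ((isCompact_closedBall z 1).prod
    (isCompact_uIcc (a := -l) (b := l))).exists_bound_of_continuousOn hcont.continuousOn
  refine (intervalIntegral.hasDerivAt_integral_of_dominated_loc_of_deriv_le
    (F := fun z t => ψ t * Complex.exp (Complex.I * z * t))
    (F' := fun z t => Complex.I * t * ψ t * Complex.exp (Complex.I * z * t))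
    (bound := fun _ => M) (Metric.closedBall_mem_nhds z one_pos)
    (Filter.Eventually.of_forall fun w => Continuous.aestronglyMeasurable (by fun_prop))
    (Continuous.intervalIntegrable (by fun_prop) _ _)
    (Continuous.aestronglyMeasurable (by fun_prop)) ?_ intervalIntegrable_const ?_).2
  · exact Filter.Eventually.of_forall fun t ht w hw =>
      hM (w, t) ⟨hw, Set.uIoc_subset_uIcc ht⟩
  · refine Filter.Eventually.of_forall fun t _ w _ => ?_
    have h1 : HasDerivAt (fun w : ℂ => Complex.I * w * t) (Complex.I * t) w := by
      simpa using ((hasDerivAt_id w).const_mul Complex.I).mul_const (t : ℂ)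
    convert! (h1.cexp.const_mul (ψ t)) using 1
    ring

lemma ft_growth {l : ℝ} (hl : 0 < l) {ψ : ℝ → ℂ} {M : ℝ}
    (hM : ∀ t ∈ Set.Icc (-l) l, ‖ψ t‖ ≤ M) (y : ℝ) (hy : 0 ≤ y) :
    ‖ft l ψ (y * Complex.I)‖ ≤ (M * (2 * l)) * Real.exp (l * y) := by
  have hM0 : 0 ≤ M := (norm_nonneg _).trans (hM 0 ⟨by linarith, hl.le⟩)
  have := intervalIntegral.norm_integral_le_of_norm_le_const (a := -l) (b := l)
    (C := M * Real.exp (l * y))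
    (f := fun t : ℝ => ψ t * Complex.exp (Complex.I * (y * Complex.I) * t)) fun t ht => by
      rw [Set.uIoc_of_le (by linarith)] at ht
      rw [norm_mul, Complex.norm_exp]
      refine mul_le_mul (hM t ⟨ht.1.le, ht.2⟩) (Real.exp_le_exp.2 ?_) (Real.exp_pos _).le hM0
      simp
      nlinarith [ht.1]
  refine this.trans (le_of_eq ?_)
  rw [abs_of_nonneg (by linarith)]; ring

lemma ft_ofReal_zero (l : ℝ) (φ : ℝ → ℝ) :
    ft l (fun t => (φ t : ℂ)) 0 = ((∫ t in (-l)..l, φ t : ℝ) : ℂ) := by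
  simp [ft, intervalIntegral.integral_ofReal]

/-- A continuous weight on `[-l, l]` that is nonnegative and not identically zero there;
positivity is recorded at the sample point `l / 2`. -/
structure IsWeight (l : ℝ) (φ : ℝ → ℝ) : Prop where
  cont : Continuous φ
  nonneg : ∀ t ∈ Set.Icc (-l) l, 0 ≤ φ t
  pos : 0 < φ (l / 2)

lemma IsWeight.integral_pos {l : ℝ} (hl : 0 < l) {φ : ℝ → ℝ} (hφ : IsWeight l φ) :
    0 < ∫ t in (-l)..l, φ t :=
  intervalIntegral.integral_pos (by linarith) hφ.cont.continuousOn
    (fun t ht => hφ.nonneg t ⟨ht.1.le, ht.2⟩)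
    ⟨l / 2, ⟨by linarith, by linarith⟩, hφ.pos⟩

lemma IsWeight.growth {l : ℝ} (hl : 0 < l) {φ : ℝ → ℝ} (hφ : IsWeight l φ) :
    ∃ M, ∀ y : ℝ, 0 ≤ y →
      ‖ft l (fun t => (φ t : ℂ)) (y * Complex.I)‖ ≤ M * Real.exp (l * y) := by
  obtain ⟨M, hM⟩ := isCompact_Icc.exists_bound_of_continuousOn
    (hφ.cont.continuousOn (s := Set.Icc (-l) l))
  exact ⟨_, ft_growth hl fun t ht => by simpa using hM t ht⟩

lemma IsEvenLP.const_mul {f h : ℂ → ℂ} (hf : IsEvenLP f) {a : ℝ} (ha : 0 < a)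
    (hh : ∀ z, h z = a * f z) : IsEvenLP h := by
  obtain ⟨c, x, hc, hx, hfx⟩ := hf
  exact ⟨a * c, x, mul_pos ha hc, hx, fun z => by rw [hh, hfx]; push_cast; ring⟩

lemma IsWeight.const_mul {l : ℝ} {φ : ℝ → ℝ} (hφ : IsWeight l φ) {a : ℝ} (ha : 0 < a) :
    IsWeight l fun t => a * φ t :=
  ⟨hφ.cont.const_mul a, fun t ht => mul_nonneg ha.le (hφ.nonneg t ht), mul_pos ha hφ.pos⟩

/-- Multiplying the weight by `t² + g` applies `g - D²` to the transform. -/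
lemma isEvenLP_ft_mul {l : ℝ} (hl : 0 < l) {φ : ℝ → ℝ} (hφ : IsWeight l φ)
    (hf : IsEvenLP (ft l fun t => (φ t : ℂ))) {g : ℝ} (hg : 0 ≤ g) :
    IsWeight l (fun t => (t ^ 2 + g) * φ t) ∧
      IsEvenLP (ft l fun t => (((t ^ 2 + g) * φ t : ℝ) : ℂ)) := by
  have hw : IsWeight l (fun t => (t ^ 2 + g) * φ t) :=
    ⟨by have := hφ.cont; fun_prop, fun t ht => mul_nonneg (by positivity) (hφ.nonneg t ht),
      mul_pos (by positivity) hφ.pos⟩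
  refine ⟨hw, ?_⟩
  have hc : Continuous fun t => (φ t : ℂ) := Complex.continuous_ofReal.comp hφ.cont
  obtain ⟨M, hM⟩ := hw.growth hl
  refine hf.sub_deriv_deriv hg (fun z => ?_) (hw.integral_pos hl) (ft_ofReal_zero _ _) hM
  have hd1 : deriv (ft l fun t => (φ t : ℂ)) = ft l fun t => Complex.I * t * (φ t : ℂ) :=
    funext fun z => (ft_hasDerivAt l hc z).deriv
  rw [hd1, (ft_hasDerivAt l (by fun_prop) z).deriv]
  simp only [ft]
  rw [← intervalIntegral.integral_const_mul, ← intervalIntegral.integral_sub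
    (Continuous.intervalIntegrable (by fun_prop) _ _)
    (Continuous.intervalIntegrable (by fun_prop) _ _)]
  refine intervalIntegral.integral_congr fun t _ => ?_
  push_cast
  linear_combination ((t : ℂ) ^ 2 * φ t * Complex.exp (Complex.I * z * t)) * Complex.I_sq

lemma isEvenLP_ft_prod {l : ℝ} (hl : 0 < l) {φ : ℝ → ℝ} (hφ : IsWeight l φ)
    (hf : IsEvenLP (ft l fun t => (φ t : ℂ))) (s : Multiset ℝ) (hs : ∀ g ∈ s, 0 ≤ g) :
    IsWeight l (fun t => (s.map fun g => t ^ 2 + g).prod * φ t) ∧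
      IsEvenLP (ft l fun t => (((s.map fun g => t ^ 2 + g).prod * φ t : ℝ) : ℂ)) := by
  induction s using Multiset.induction_on with
  | empty => simpa using ⟨hφ, hf⟩
  | cons g s ih =>
    obtain ⟨h1, h2⟩ := ih fun a ha => hs a (Multiset.mem_cons_of_mem ha)
    have := isEvenLP_ft_mul hl h1 h2 (hs g (Multiset.mem_cons_self g s))
    simpa only [Multiset.map_cons, Multiset.prod_cons, mul_assoc] using this

/-- Integration by parts for a function vanishing at the end points. -/
lemma mul_ft_eq {l : ℝ} {φ φ' : ℝ → ℝ} (hd : ∀ t, HasDerivAt φ (φ' t) t) (hc : Continuous φ')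
    (h1 : φ l = 0) (h2 : φ (-l) = 0) (z : ℂ) :
    z * ft l (fun t => (φ t : ℂ)) z = Complex.I * ft l (fun t => (φ' t : ℂ)) z := by
  have hv : ∀ t : ℝ, HasDerivAt (fun t : ℝ => Complex.exp (Complex.I * z * t))
      (Complex.I * z * Complex.exp (Complex.I * z * t)) t := fun t => by
    have h1 : HasDerivAt (fun t : ℝ => Complex.I * z * t) (Complex.I * z) t := by
      simpa using (Complex.ofRealCLM.hasDerivAt (x := t)).const_mul (Complex.I * z)
    convert! h1.cexp using 1
    ring
  have := intervalIntegral.integral_mul_deriv_eq_deriv_mul (a := -l) (b := l)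
    (u := fun t => (φ t : ℂ)) (u' := fun t => (φ' t : ℂ))
    (fun t _ => (hd t).ofReal_comp) (fun t _ => hv t)
    (Continuous.intervalIntegrable (by fun_prop) _ _)
    (Continuous.intervalIntegrable (by fun_prop) _ _)
  simp only [h1, h2, Complex.ofReal_zero, zero_mul, sub_zero, zero_sub] at this
  have e : ∫ t in (-l)..l, (φ t : ℂ) * (Complex.I * z * Complex.exp (Complex.I * z * t)) =
      Complex.I * z * ft l (fun t => (φ t : ℂ)) z := by
    rw [ft, ← intervalIntegral.integral_const_mul]
    exact intervalIntegral.integral_congr fun t _ => by ring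
  rw [e] at this
  change _ = -ft l (fun t => (φ' t : ℂ)) z at this
  linear_combination (-Complex.I) * this + z * ft l (fun t => (φ t : ℂ)) z * Complex.I_sq

/-- The base case `∫ e^{izt} dt = 2 sin(lz)/z`, by Euler's product for the sine. -/
lemma isEvenLP_ft_one {l : ℝ} (hl : 0 < l) : IsEvenLP (ft l fun _ => 1) := by
  set x : ℕ → ℝ := fun j => (l / Real.pi) ^ 2 * (1 / ((j : ℝ) + 1) ^ 2) with hxdef
  have hx : IsRootSeq x := by
    refine ⟨fun i j hij => ?_, fun j => by positivity, Summable.mul_left _ ?_⟩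
    · simp only [hxdef]; gcongr
    · exact_mod_cast (summable_nat_add_iff 1).2 (Real.summable_one_div_nat_pow.2 one_lt_two)
  refine ⟨2 * l, x, by positivity, hx, fun z => ?_⟩
  rcases eq_or_ne z 0 with rfl | hz
  · rw [evenProd_zero]; simp [ft]; ring
  have hpi : (Real.pi : ℂ) ≠ 0 := by exact_mod_cast Real.pi_ne_zero
  have hlz : (l : ℂ) * z ≠ 0 := mul_ne_zero (by exact_mod_cast hl.ne') hz
  have hsin : (l : ℂ) * z * evenProd x z = Complex.sin (l * z) := by
    have h1 := ((hx.multipliable z).hasProd.tendsto_prod_nat).const_mul ((l : ℂ) * z)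
    have h2 := Complex.tendsto_euler_sin_prod (l * z / Real.pi)
    rw [show (Real.pi : ℂ) * (l * z / Real.pi) = l * z by field_simp] at h2
    refine tendsto_nhds_unique h1 (h2.congr fun N => ?_)
    congr 1
    refine Finset.prod_congr rfl fun j _ => ?_
    simp only [hxdef]; push_cast
    have : (j : ℂ) + 1 ≠ 0 := by exact_mod_cast j.succ_ne_zero
    field_simp
  have hIz : Complex.I * z ≠ 0 := mul_ne_zero Complex.I_ne_zero hz
  have hintegral : ft l (fun _ => 1) z = 2 * Complex.sin (l * z) / z := by
    simp only [ft, one_mul]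
    rw [integral_exp_mul_complex hIz, Complex.sin]
    push_cast
    rw [show Complex.I * z * -l = -(l * z) * Complex.I by ring,
      show Complex.I * z * l = (l * z) * Complex.I by ring]
    field_simp
    linear_combination (Complex.exp (l * z * Complex.I) - Complex.exp (-(l * z * Complex.I))) *
      Complex.I_sq
  rw [hintegral, ← hsin]
  push_cast
  field_simp

open Polynomial in
/-- The case of a polynomial `q/n = v(t²)`: all powers of `1 - v(t²)` have even Laguerre–Pólya
transforms, by induction on the exponent. Integrating by parts, `z` times the transform of
`(1 - v(t²))^{k+1}` is minus the derivative of the transform of a multiple of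
`v'(t²) (1 - v(t²))^k`, and `v'(t²)` is `a` times a product of factors `t² + g`. -/
lemma isEvenLP_ft_pow {l : ℝ} (hl : 0 < l) {v : ℝ[X]} {a : ℝ} (ha : 0 < a) {s : Multiset ℝ}
    (hs : ∀ g ∈ s, 0 ≤ g) (hv' : ∀ t, (derivative v).eval t = a * (s.map fun g => t + g).prod)
    (hvl : v.eval (l ^ 2) = 1) (hle : ∀ t, 0 ≤ t → t ≤ l ^ 2 → v.eval t ≤ t / l ^ 2) (k : ℕ) :
    IsEvenLP (ft l fun t => (((1 - v.eval (t ^ 2)) ^ k : ℝ) : ℂ)) := by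
  have hweight : ∀ k, IsWeight l fun t => (1 - v.eval (t ^ 2)) ^ k := fun k => by
    refine ⟨by have := v.continuous; fun_prop, fun t ht => pow_nonneg ?_ _, pow_pos ?_ _⟩
    · have ht' : t ^ 2 ≤ l ^ 2 := sq_le_sq' ht.1 ht.2
      have := (hle _ (sq_nonneg t) ht').trans ((div_le_one (by positivity)).2 ht')
      linarith
    · have h := hle ((l / 2) ^ 2) (by positivity) (by nlinarith)
      have : (l / 2) ^ 2 / l ^ 2 = 1 / 4 := by field_simp; norm_num
      linarith
  induction k with
  | zero => simpa using isEvenLP_ft_one hl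
  | succ k ih =>
    obtain ⟨hw, hLP⟩ := isEvenLP_ft_prod hl (hweight k) ih s hs
    have hc : 0 < 2 * ((k : ℝ) + 1) * a := by positivity
    set w : ℝ → ℝ := fun t => 2 * ((k : ℝ) + 1) * a *
      ((s.map fun g => t ^ 2 + g).prod * (1 - v.eval (t ^ 2)) ^ k) with hwdef
    have hwc : Continuous w := (hw.const_mul hc).cont
    have hLPw : IsEvenLP (ft l fun t => (w t : ℂ)) := hLP.const_mul hc fun z => by
      rw [ft, ft, ← intervalIntegral.integral_const_mul]
      refine intervalIntegral.integral_congr fun t _ => ?_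
      simp only [hwdef]; push_cast; ring
    have hder : ∀ t, HasDerivAt (fun t => (1 - v.eval (t ^ 2)) ^ (k + 1)) (-(t * w t)) t :=
      fun t => by
        have h1 : HasDerivAt (fun t => v.eval (t ^ 2)) ((derivative v).eval (t ^ 2) * (2 * t)) t := by
          have := (v.hasDerivAt (t ^ 2)).comp t (hasDerivAt_pow 2 t)
          simp only [Nat.cast_ofNat, Nat.add_one_sub_one, pow_one] at this
          exact this
        convert! (h1.const_sub 1).fun_pow (k + 1) using 1
        simp only [hwdef, hv']; push_cast; simp; ring
    have hparts := mul_ft_eq (l := l) hder (by fun_prop) (by simp [hvl]) (by simp [hvl])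
    obtain ⟨M, hM⟩ := (hweight (k + 1)).growth hl
    refine hLPw.deriv_div (fun z => ?_)
      (ft_hasDerivAt l (Complex.continuous_ofReal.comp (hweight (k + 1)).cont) 0).differentiableAt
      ((hweight (k + 1)).integral_pos hl) (ft_ofReal_zero _ _) hM
    rw [hparts, (ft_hasDerivAt l (by fun_prop) z).deriv, ft, ft,
      ← intervalIntegral.integral_const_mul, ← intervalIntegral.integral_neg]
    refine intervalIntegral.integral_congr fun t _ => ?_
    push_cast; ring

/-! ### Polynomials with nonpositive zeros -/

open Polynomial in
/-- Real polynomials that split and have nonnegative coefficients. When nonzero, these are the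
polynomials with positive leading coefficient and only real, nonpositive zeros; unlike a condition
on the zeros, nonnegativity of the coefficients passes to the derivative at sight. -/
structure IsNegRooted (u : ℝ[X]) : Prop where
  splits : u.Splits
  coeff_nonneg : ∀ i, 0 ≤ u.coeff i

namespace IsNegRooted
open Polynomial
variable {u w : ℝ[X]}

lemma mul (hu : IsNegRooted u) (hw : IsNegRooted w) : IsNegRooted (u * w) :=
  ⟨hu.splits.mul hw.splits, fun i => by
    rw [coeff_mul]
    exact Finset.sum_nonneg fun p _ => mul_nonneg (hu.coeff_nonneg _) (hw.coeff_nonneg _)⟩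

lemma one : IsNegRooted 1 := ⟨Splits.one, fun i => by rw [coeff_one]; split_ifs <;> norm_num⟩

lemma X : IsNegRooted (X : ℝ[X]) := ⟨Splits.X, fun i => by rw [coeff_X]; split_ifs <;> norm_num⟩

lemma linear {γ : ℝ} (hγ : 0 ≤ γ) : IsNegRooted (1 + C γ * Polynomial.X) := by
  refine ⟨Splits.of_natDegree_le_one (by compute_degree), fun i => ?_⟩
  rw [coeff_add, coeff_C_mul, coeff_one, coeff_X]
  split_ifs <;> first | (exfalso; omega) | simp [hγ]

lemma pow (hu : IsNegRooted u) (k : ℕ) : IsNegRooted (u ^ k) := by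
  induction k with
  | zero => simpa using one
  | succ k ih => rw [pow_succ]; exact ih.mul hu

lemma prod {ι : Type*} (s : Finset ι) {f : ι → ℝ[X]} (hf : ∀ i ∈ s, IsNegRooted (f i)) :
    IsNegRooted (∏ i ∈ s, f i) :=
  Finset.prod_induction f IsNegRooted (fun _ _ => mul) one hf

lemma eval_nonneg (hu : IsNegRooted u) {t : ℝ} (ht : 0 ≤ t) : 0 ≤ u.eval t := by
  rw [eval_eq_sum_range]
  exact Finset.sum_nonneg fun i _ => mul_nonneg (hu.coeff_nonneg i) (pow_nonneg ht i)

lemma eval_mono (hu : IsNegRooted u) {s t : ℝ} (hs : 0 ≤ s) (hst : s ≤ t) :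
    u.eval s ≤ u.eval t := by
  rw [eval_eq_sum_range, eval_eq_sum_range]
  exact Finset.sum_le_sum fun i _ =>
    mul_le_mul_of_nonneg_left (pow_le_pow_left₀ hs hst i) (hu.coeff_nonneg i)

/-- By Rolle's theorem the derivative of a split real polynomial splits. -/
lemma derivative (hu : IsNegRooted u) : IsNegRooted (derivative u) := by
  refine ⟨?_, fun i => ?_⟩
  · rw [splits_iff_card_roots]
    refine le_antisymm (card_roots' _) ?_
    have h1 := card_roots_le_derivative u
    rw [splits_iff_card_roots.1 hu.splits] at h1
    have h2 := natDegree_derivative_le u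
    omega
  · rw [coeff_derivative]
    exact mul_nonneg (hu.coeff_nonneg _) (by positivity)

lemma exists_factor (hu : IsNegRooted u) (h0 : u ≠ 0) :
    ∃ (a : ℝ) (s : Multiset ℝ), 0 < a ∧ (∀ g ∈ s, 0 ≤ g) ∧
      ∀ t, u.eval t = a * (s.map fun g => t + g).prod := by
  refine ⟨u.leadingCoeff, u.roots.map fun r => -r,
    lt_of_le_of_ne (hu.coeff_nonneg _) (leadingCoeff_ne_zero.2 h0).symm, fun g hg => ?_,
    fun t => ?_⟩
  · obtain ⟨r, hr, rfl⟩ := Multiset.mem_map.1 hg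
    have hr' : u.eval r = 0 := by simpa [h0] using hr
    by_contra hneg
    have hrpos : 0 < r := by linarith
    -- a positive zero would force all coefficients to vanish
    rw [eval_eq_sum_range, Finset.sum_eq_zero_iff_of_nonneg fun i _ =>
      mul_nonneg (hu.coeff_nonneg i) (pow_nonneg hrpos.le i)] at hr'
    have := hr' u.natDegree (by simp)
    simp [h0, hrpos.ne'] at this
  · conv_lhs => rw [hu.splits.eq_prod_roots]
    simp [eval_multiset_prod, Multiset.map_map, sub_eq_add_neg]

end IsNegRooted

open Polynomial in
/-- The polynomial case: `q/n = u(t²)/u(l²)` with `u(s) = s u₁(s)`. The first conclusion bounds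
`q/n` by `t²/l²` on `[-l, l]`, uniformly in `u₁`. -/
lemma isEvenLP_ft_of_negRooted {l : ℝ} (hl : 0 < l) {u₁ : ℝ[X]} (hu : IsNegRooted u₁)
    (hpos : 0 < u₁.eval (l ^ 2)) (k : ℕ) :
    (∀ t, 0 ≤ t → t ≤ l ^ 2 → (X * u₁).eval t / (X * u₁).eval (l ^ 2) ≤ t / l ^ 2) ∧
    IsEvenLP (ft l fun t =>
      (((1 - (X * u₁).eval (t ^ 2) / (X * u₁).eval (l ^ 2)) ^ k : ℝ) : ℂ)) := by
  set u := X * u₁ with hudef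
  have hl2 : 0 < l ^ 2 := by positivity
  have huev : ∀ t, u.eval t = t * u₁.eval t := fun t => by simp [hudef]
  have hL : 0 < u.eval (l ^ 2) := by rw [huev]; positivity
  have hle : ∀ t, 0 ≤ t → t ≤ l ^ 2 → u.eval t / u.eval (l ^ 2) ≤ t / l ^ 2 := fun t ht htl => by
    rw [huev, huev, div_le_div_iff₀ (by positivity) hl2]
    have := mul_le_mul_of_nonneg_left (hu.eval_mono ht htl) (mul_nonneg ht hl2.le)
    linarith
  refine ⟨hle, ?_⟩
  have hne : derivative u ≠ 0 := fun h0 => by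
    have hc := eq_C_of_natDegree_eq_zero (derivative_eq_zero.1 h0)
    have h1 : u.eval 0 = u.eval (l ^ 2) := by rw [hc]; simp
    rw [huev 0] at h1
    linarith
  obtain ⟨a, s, ha, hs, hfac⟩ := (IsNegRooted.X.mul hu).derivative.exists_factor hne
  have hv : ∀ t, (C (u.eval (l ^ 2))⁻¹ * u).eval t = u.eval t / u.eval (l ^ 2) := fun t => by
    rw [eval_mul, eval_C]; field_simp
  have := isEvenLP_ft_pow hl (v := C (u.eval (l ^ 2))⁻¹ * u)
    (a := (u.eval (l ^ 2))⁻¹ * a) (by positivity) hs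
    (fun t => by rw [derivative_C_mul, eval_mul, eval_C, hfac, mul_assoc])
    (by rw [hv]; exact div_self hL.ne') (fun t h1 h2 => by rw [hv]; exact hle t h1 h2) k
  simpa only [hv] using this

/-! ### Functions of class Q -/

open Polynomial in
/-- Polynomial approximations, in the variable `s = t²`, of
`s^m e^{μ s} ∏ (1 + bⱼ s)`: the exponential is replaced by `(1 + μ s / N)^N` and the product is
truncated. -/
noncomputable def approxPoly (m : ℕ) (μ : ℝ) (b : ℕ → ℝ) (N : ℕ) : ℝ[X] :=
  X ^ m * (1 + C (μ / N) * X) ^ N * ∏ j ∈ Finset.range N, (1 + C (b j) * X)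

lemma approxPoly_isNegRooted (m : ℕ) {μ : ℝ} (hμ : 0 ≤ μ) {b : ℕ → ℝ} (hb : ∀ j, 0 ≤ b j)
    (N : ℕ) : IsNegRooted (approxPoly m μ b N) :=
  ((IsNegRooted.X.pow m).mul ((IsNegRooted.linear (by positivity)).pow N)).mul
    (IsNegRooted.prod _ fun j _ => IsNegRooted.linear (hb j))

lemma approxPoly_eval (m : ℕ) (μ : ℝ) (b : ℕ → ℝ) (N : ℕ) (t : ℝ) :
    (approxPoly m μ b N).eval t =
      t ^ m * (1 + μ * t / N) ^ N * ∏ j ∈ Finset.range N, (1 + t * b j) := by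
  simp only [approxPoly, Polynomial.eval_mul, Polynomial.eval_pow, Polynomial.eval_X,
    Polynomial.eval_add, Polynomial.eval_one, Polynomial.eval_C, Polynomial.eval_prod]
  congr 1
  · congr 3; ring
  · exact Finset.prod_congr rfl fun j _ => by ring

lemma approxPoly_tendsto (m : ℕ) (μ : ℝ) {b : ℕ → ℝ} (hs : Summable b) (t : ℝ) :
    Tendsto (fun N => (approxPoly m μ b N).eval t) atTop
      (𝓝 (t ^ m * Real.exp (μ * t) * ∏' j, (1 + t * b j))) := by
  simp only [approxPoly_eval]
  exact ((Real.tendsto_one_add_div_pow_exp (μ * t)).const_mul _).mul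
    (Real.multipliable_one_add_of_summable (hs.mul_left t)).hasProd.tendsto_prod_nat

/-- The normal form of a class Q function, with the infinite product running over all of `ℕ` and
one factor `t²` split off. -/
lemma IsClassQ.exists_form {q : ℝ → ℝ} (hq : IsClassQ q) :
    ∃ (k : ℝ) (m : ℕ) (μ : ℝ) (b : ℕ → ℝ), 0 < k ∧ 0 ≤ μ ∧ (∀ j, 0 ≤ b j) ∧ Summable b ∧
      ∀ t, q t = k * (t ^ 2 * ((t ^ 2) ^ m * Real.exp (μ * t ^ 2) *
        ∏' j, (1 + t ^ 2 * b j))) := by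
  obtain ⟨k, m, μ, S, β, hk, hm, hμ, -, hsum, hform, -⟩ := hq
  refine ⟨k, m - 1, μ, S.indicator fun j => 1 / β j ^ 2, hk, hμ,
    Set.indicator_nonneg fun j _ => by positivity, summable_subtype_iff_indicator.1 hsum,
    fun t => ?_⟩
  have hprod : ∏' j : S, (1 + t ^ 2 / β j ^ 2) =
      ∏' j, (1 + t ^ 2 * S.indicator (fun j => 1 / β j ^ 2) j) := by
    rw [tprod_subtype S fun j => 1 + t ^ 2 / β j ^ 2]
    refine tprod_congr fun j => ?_
    by_cases hj : j ∈ S <;> simp [hj, div_eq_mul_inv]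
  obtain ⟨m, rfl⟩ := Nat.exists_eq_succ_of_ne_zero hm.ne'
  rw [hform, hprod, pow_mul]
  simp only [Nat.succ_eq_add_one, Nat.add_sub_cancel]
  ring

/-- The weight `(1 - q/n)^p` has an even Laguerre–Pólya transform, by polynomial approximation of
`q/n`; the approximants are normalized to equal `1` at `l`, so that the interval stays fixed. -/
lemma isEvenLP_ft_classQ {q : ℝ → ℝ} (hq : IsClassQ q) {l : ℝ} (hl : 0 < l) {n : ℝ} (hn : 0 < n)
    (hql : q l = n) (p : ℕ) : IsEvenLP (ft l fun t => (((1 - q t / n) ^ p : ℝ) : ℂ)) := by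
  obtain ⟨k, m, μ, b, hk, hμ, hb, hsb, hform⟩ := hq.exists_form
  set u : ℕ → Polynomial ℝ := fun N => Polynomial.X * approxPoly m μ b N with hu
  have hl2 : 0 < l ^ 2 := by positivity
  have hneg := approxPoly_isNegRooted m hμ hb
  have hpos : ∀ N, 0 < (approxPoly m μ b N).eval (l ^ 2) := fun N => by
    rw [approxPoly_eval]
    have : ∀ j, 0 < 1 + l ^ 2 * b j := fun j => by have := hb j; positivity
    have := Finset.prod_pos fun j (_ : j ∈ Finset.range N) => this j
    positivity
  have hulim : ∀ t, Tendsto (fun N => (u N).eval (t ^ 2)) atTop (𝓝 (q t / k)) := fun t => by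
    rw [hform, mul_div_cancel_left₀ _ hk.ne']
    simpa [hu] using (approxPoly_tendsto m μ hsb (t ^ 2)).const_mul (t ^ 2)
  set v : ℕ → ℝ → ℝ := fun N t => (u N).eval (t ^ 2) / (u N).eval (l ^ 2) with hv
  have hvlim : ∀ t, Tendsto (fun N => v N t) atTop (𝓝 (q t / n)) := fun t => by
    have := (hulim t).div (hulim l) (by rw [hql]; positivity)
    rwa [hql, div_div_div_cancel_right₀ hk.ne'] at this
  have hv0 : ∀ N t, 0 ≤ v N t := fun N t =>
    div_nonneg ((IsNegRooted.X.mul (hneg N)).eval_nonneg (sq_nonneg t))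
      ((IsNegRooted.X.mul (hneg N)).eval_nonneg hl2.le)
  have hvle : ∀ N, ∀ t ∈ Set.Icc (-l) l, v N t ≤ t ^ 2 / l ^ 2 := fun N t ht =>
    (isEvenLP_ft_of_negRooted hl (hneg N) (hpos N) p).1 _ (sq_nonneg t) (sq_le_sq' ht.1 ht.2)
  have hsq : ∀ t ∈ Set.Icc (-l) l, t ^ 2 / l ^ 2 ≤ 1 := fun t ht =>
    (div_le_one hl2).2 (sq_le_sq' ht.1 ht.2)
  have hvc : ∀ N, Continuous (v N) := fun N =>
    ((u N).continuous.comp (continuous_pow 2)).div_const _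
  -- both the approximating weights and their limit lie between `0` and `1`
  have hbd : ∀ {a : ℝ}, 0 ≤ a → a ≤ 1 → ‖(((1 - a) ^ p : ℝ) : ℂ)‖ ≤ 1 := fun {a} h0 h1 => by
    rw [Complex.norm_real, Real.norm_of_nonneg (pow_nonneg (by linarith) _)]
    exact pow_le_one₀ (by linarith) (by linarith)
  have hlim : ∀ z, Tendsto (fun N => ft l (fun t => (((1 - v N t) ^ p : ℝ) : ℂ)) z) atTop
      (𝓝 (ft l (fun t => (((1 - q t / n) ^ p : ℝ) : ℂ)) z)) := fun z => by
    refine intervalIntegral.tendsto_integral_filter_of_dominated_convergence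
      (fun t : ℝ => ‖Complex.exp (Complex.I * z * t)‖) ?_ ?_ ?_ ?_
    · exact Eventually.of_forall fun N => Continuous.aestronglyMeasurable (by
        have := hvc N; fun_prop)
    · refine Eventually.of_forall fun N => Eventually.of_forall fun t ht => ?_
      rw [Set.uIoc_of_le (by linarith)] at ht
      have ht' : t ∈ Set.Icc (-l) l := ⟨ht.1.le, ht.2⟩
      rw [norm_mul]
      exact mul_le_of_le_one_left (norm_nonneg _)
        (hbd (hv0 N t) ((hvle N t ht').trans (hsq t ht')))
    · exact Continuous.intervalIntegrable (by fun_prop) _ _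
    · refine Eventually.of_forall fun t _ => Tendsto.mul_const _ ?_
      exact (Complex.continuous_ofReal.tendsto _).comp (((hvlim t).const_sub 1).pow p)
  have hw : IsWeight l fun t => (1 - t ^ 2 / l ^ 2) ^ p := by
    refine ⟨by fun_prop, fun t ht => pow_nonneg (by linarith [hsq t ht]) _, pow_pos ?_ _⟩
    have : (l / 2) ^ 2 / l ^ 2 = 1 / 4 := by field_simp; norm_num
    linarith
  -- the approximating weights are all bounded below by `(1 - t²/l²)^p`
  have hintegral : 0 < ∫ t in (-l)..l, (1 - q t / n) ^ p := by
    refine (hw.integral_pos hl).trans_le ?_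
    have h0 := hlim 0
    simp only [ft_ofReal_zero] at h0
    have h1 := (Complex.continuous_re.tendsto _).comp h0
    simp only [Function.comp_def, Complex.ofReal_re] at h1
    refine ge_of_tendsto' h1 fun N => ?_
    refine intervalIntegral.integral_mono_on (by linarith)
      (hw.cont.intervalIntegrable _ _)
      (Continuous.intervalIntegrable (by have := hvc N; fun_prop) _ _) fun t ht => ?_
    exact pow_le_pow_left₀ (by linarith [hsq t ht]) (by linarith [hvle N t ht]) p
  refine isEvenLP_of_tendsto (F := fun N => ft l fun t => (((1 - v N t) ^ p : ℝ) : ℂ))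
    (Eventually.of_forall fun N => ?_) hlim hintegral (ft_ofReal_zero _ _)
    (ft_growth hl (M := 1) fun t ht => hbd
      (ge_of_tendsto' (hvlim t) fun N => hv0 N t)
      (le_of_tendsto' (hvlim t) fun N => (hvle N t ht).trans (hsq t ht)))
  obtain ⟨c, x, -, hx, hf⟩ := (isEvenLP_ft_of_negRooted hl (hneg N) (hpos N) p).2
  exact ⟨c, x, hx, hf⟩

/-- For `q` of class Q and `n ≥ 1`, the complex Fourier transform
`Gₙ(z) = ∫ gₙ(t) e^{izt} dt` has the product representation
`Gₙ(z) = c'·∏_j (1 - z²/(α*ⱼ)²)` with `c' > 0` and positive reals `α*ⱼ` satisfying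
`∑ 1/(α*ⱼ)² < ∞`; in particular `Gₙ` is a Laguerre–Pólya function. -/
theorem Gn_is_LP (q : ℝ → ℝ) (hq : IsClassQ q) (n : ℕ) (hn : 0 < n)
    (lam : ℝ) (hlam : 0 < lam) (hqlam : q lam = n)
    (Gn : ℂ → ℂ)
    (hGn : ∀ z : ℂ, Gn z = ∫ t : ℝ,
      ((Set.indicator (Set.Icc (-lam) lam)
        (fun s : ℝ => ((n : ℝ) / (n + 1)) * (1 - q s / n) ^ (n + 1)) t : ℝ) : ℂ) *
        Complex.exp (Complex.I * z * t)) :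
    ∃ (c' : ℝ) (S' : Set ℕ) (a : ℕ → ℝ), 0 < c' ∧ (∀ j ∈ S', 0 < a j) ∧
      Summable (fun j : S' => 1 / (a j : ℝ) ^ 2) ∧
      ∀ z : ℂ, Gn z = (c' : ℂ) * ∏' j : S', (1 - z ^ 2 / (a j : ℂ) ^ 2) := by
  have hn' : (0 : ℝ) < n := by exact_mod_cast hn
  have hG : ∀ z, Gn z = (((n : ℝ) / (n + 1) : ℝ) : ℂ) *
      ft lam (fun t => (((1 - q t / n) ^ (n + 1) : ℝ) : ℂ)) z := fun z => by
    rw [hGn, ft, ← intervalIntegral.integral_const_mul,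
      intervalIntegral.integral_of_le (by linarith), ← MeasureTheory.integral_Icc_eq_integral_Ioc,
      ← MeasureTheory.integral_indicator measurableSet_Icc]
    congr 1
    ext t
    by_cases ht : t ∈ Set.Icc (-lam) lam
    · simp only [Set.indicator_of_mem ht]; push_cast; ring
    · simp only [Set.indicator_of_notMem ht]; simp
  -- the padding zeros of the root sequence `x` are discarded, and `α*ⱼ = 1 / √xⱼ`
  obtain ⟨c, x, hc, hx, hf⟩ :=
    (isEvenLP_ft_classQ hq hlam hn' hqlam (n + 1)).const_mul (by positivity) hG
  have hsq : ∀ j, (1 / Real.sqrt (x j)) ^ 2 = (x j)⁻¹ := fun j => by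
    rw [div_pow, Real.sq_sqrt (hx.nonneg j), one_pow, one_div]
  refine ⟨c, {j | 0 < x j}, fun j => 1 / Real.sqrt (x j), hc,
    fun j hj => one_div_pos.2 (Real.sqrt_pos.2 hj), ?_, fun z => ?_⟩
  · refine (hx.summable.subtype {j | 0 < x j}).congr fun j => ?_
    simp only [Function.comp_apply]
    rw [hsq, one_div, inv_inv]
  · rw [hf, evenProd, ← tprod_subtype_eq_of_mulSupport_subset (s := {j | 0 < x j})]
    · congr 1
      refine tprod_congr fun j => ?_
      rw [← Complex.ofReal_pow, hsq, Complex.ofReal_inv, div_inv_eq_mul]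
    · intro j hj
      refine lt_of_le_of_ne (hx.nonneg j) fun h0 => hj ?_
      simp [← h0]
end

section
/- Let N be a positive integer, c a real number, and α_1, …, α_N nonzero real numbers, and define the polynomial P(z) = c·∏_{r=1}^N (1 - z²/α_r²). Then for every nonnegative integer m and every real number w, one has (-1)^m · (d^{2m}/du^{2m})[P(u+w)·P(u-w)] evaluated at u = 0 is ≥ 0. -/
/-!
Each factor of `P(u+w)·P(u-w)` regroups as
`(1 - (u+w)²/α²)(1 - (u-w)²/α²) = ((α-w)² - u²)((α+w)² - u²)/α⁴`.
Hence `P(u+w)·P(u-w) = G(u²)`, where `G` is a product of nonnegative constants and linear factors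
`a - X` with `a ≥ 0`, so the coefficients of `G` alternate in sign. The `2m`-th derivative at `0`
is `(2m)!` times the `m`-th coefficient of `G`, which has sign `(-1)^m`.
-/

open Polynomial

/-- The coefficients of `G` alternate in sign, starting with a nonnegative constant term;
equivalently, `G(-X)` has nonnegative coefficients. -/
def AlternatingCoeffs (G : ℝ[X]) : Prop := ∀ n, 0 ≤ (-1 : ℝ) ^ n * G.coeff n

lemma AlternatingCoeffs.mul {F G : ℝ[X]} (hF : AlternatingCoeffs F) (hG : AlternatingCoeffs G) :
    AlternatingCoeffs (F * G) := by
  intro n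
  rw [coeff_mul, Finset.mul_sum]
  refine Finset.sum_nonneg fun x hx => ?_
  rw [← Finset.HasAntidiagonal.mem_antidiagonal.mp hx, pow_add]
  have h := mul_nonneg (hF x.1) (hG x.2)
  linarith

lemma alternatingCoeffs_C {a : ℝ} (ha : 0 ≤ a) : AlternatingCoeffs (C a) := by
  intro n
  rcases n with _ | n
  · simpa using ha
  · simp

lemma alternatingCoeffs_C_sub_X {a : ℝ} (ha : 0 ≤ a) : AlternatingCoeffs (C a - X) := by
  intro n
  rcases n with _ | _ | n
  · simpa using ha
  · simp
  · simp [coeff_X]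

lemma alternatingCoeffs_prod {ι : Type*} (s : Finset ι) (F : ι → ℝ[X])
    (h : ∀ i, AlternatingCoeffs (F i)) : AlternatingCoeffs (∏ i ∈ s, F i) :=
  Finset.prod_induction F AlternatingCoeffs (fun _ _ => AlternatingCoeffs.mul)
    (by simpa using alternatingCoeffs_C zero_le_one) fun i _ => h i

lemma iteratedDeriv_polynomial (F : ℝ[X]) (n : ℕ) :
    iteratedDeriv n (fun u => F.eval u) = fun u => (derivative^[n] F).eval u := by
  induction n with
  | zero => simp
  | succ n ih =>
    rw [iteratedDeriv_succ, ih, Function.iterate_succ_apply']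
    funext u
    exact Polynomial.deriv _

/-- For `P(z) = c·∏_{r=1}^N (1 - z²/αᵣ²)` with `c` real and the `αᵣ` nonzero reals,
and every nonnegative integer `m` and real `w`, one has
`(-1)^m · d^{2m}/du^{2m} [P(u+w)·P(u-w)] |_{u=0} ≥ 0`. -/
theorem polynomial_pair_deriv_nonneg (N : ℕ) (hN : 0 < N) (c : ℝ)
    (α : Fin N → ℝ) (hα : ∀ r, α r ≠ 0)
    (P : ℝ → ℝ) (hP : ∀ z : ℝ, P z = c * ∏ r, (1 - z ^ 2 / (α r) ^ 2))
    (m : ℕ) (w : ℝ) :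
    0 ≤ (-1 : ℝ) ^ m * iteratedDeriv (2 * m) (fun u : ℝ => P (u + w) * P (u - w)) 0 := by
  obtain ⟨G, hG, hfun⟩ : ∃ G : ℝ[X], AlternatingCoeffs G ∧
      (fun u : ℝ => P (u + w) * P (u - w)) = fun u => (expand ℝ 2 G).eval u := by
    refine ⟨C (c ^ 2) * ∏ r, (C (1 / (α r) ^ 4) * ((C ((α r - w) ^ 2) - X) *
      (C ((α r + w) ^ 2) - X))), ?_, ?_⟩
    · exact (alternatingCoeffs_C (sq_nonneg c)).mul (alternatingCoeffs_prod _ _ fun r =>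
        (alternatingCoeffs_C (by positivity)).mul
          ((alternatingCoeffs_C_sub_X (sq_nonneg _)).mul (alternatingCoeffs_C_sub_X (sq_nonneg _))))
    · funext u
      rw [expand_eval, hP, hP, mul_mul_mul_comm, ← Finset.prod_mul_distrib]
      simp only [eval_mul, eval_prod, eval_sub, eval_C, eval_X]
      rw [← sq]
      congr 1
      refine Finset.prod_congr rfl fun r _ => ?_
      have := hα r
      field_simp
      ring
  rw [hfun, iteratedDeriv_polynomial]
  simp only
  rw [← coeff_zero_eq_eval_zero, coeff_iterate_derivative, zero_add, mul_comm 2 m,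
    coeff_expand_mul two_pos, nsmul_eq_mul, mul_left_comm]
  exact mul_nonneg (Nat.cast_nonneg _) (hG m)
end

section
/- For every real number a > 0, every zero of the entire function z ↦ ∫_{-∞}^{∞} e^{-a·cosh(t)} e^{izt} dt is real. -/
/-!
For fixed `z`, the integral is, as a function of `a`, twice the Macdonald function `K_{iz}(a)`, and
reality of the zeros in `z` follows from self-adjointness of the modified Bessel equation in `a`.

Write `y(x) = ∫ e^{-x cosh t} e^{izt} dt` for `x > 0`. Differentiation under the integral sign
(`hasDerivAt_G`) and one integration of a total `t`-derivative (`bessel`) give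
`x² y'' + x y' = (x² - z²) y`. Consequently the Wronskian-type function `W(x) = x · Im(ȳ y')` has
derivative `-Im(z²) |y|² / x` (`hasDerivAt_W`), so it is monotone, and it tends to `0` at infinity
because `y` and `y'` decay exponentially (`tendsto_W`). If `y(a) = 0`, then `W(a) = 0` too, whence
`W = 0` on `[a, ∞)`; were `Im(z²) ≠ 0`, this would force `y = 0` on `(a, ∞)`. Laplace's method
rules that out (`exists_G_ne_zero`): `√x eˣ y(x) → √(2π)` as `x → ∞`.

Hence `Im(z²) = 2 Re z Im z = 0`. Finally `Re z = 0` is impossible, since then the integrand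
is a positive function (`G_ne_zero_of_re_eq_zero`).
-/

open MeasureTheory Filter Topology

namespace CoshKernel

/-- The integrand `e^{-x cosh t} e^{izt}`. -/
noncomputable def ker (z : ℂ) (x t : ℝ) : ℂ :=
  (Real.exp (-(x * Real.cosh t)) : ℂ) * Complex.exp (Complex.I * z * t)

/-- The moments `∫ cosh(t)ⁿ e^{-x cosh t} e^{izt} dt`. As a function of `x`, the moment of order `n`
is `(-1)ⁿ` times the `n`-th derivative of the moment of order `0`. -/
noncomputable def G (z : ℂ) (n : ℕ) (x : ℝ) : ℂ :=
  ∫ t : ℝ, (Real.cosh t : ℂ) ^ n * ker z x t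

lemma cosh_eq (t : ℝ) : Real.cosh t = 1 + 2 * Real.sinh (t / 2) ^ 2 := by
  have h := Real.cosh_two_mul (t / 2)
  rw [mul_div_cancel₀ t two_ne_zero, Real.cosh_sq] at h
  linarith

lemma sq_le_sinh_sq (u : ℝ) : u ^ 2 ≤ Real.sinh u ^ 2 := by
  rcases le_total 0 u with h | h
  · have := Real.self_le_sinh_iff.2 h
    nlinarith
  · have := Real.sinh_le_self_iff.2 h
    nlinarith

lemma cosh_ge (t : ℝ) : 1 + t ^ 2 / 2 ≤ Real.cosh t := by
  rw [cosh_eq]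
  have := sq_le_sinh_sq (t / 2)
  nlinarith

lemma cosh_le_exp_abs (t : ℝ) : Real.cosh t ≤ Real.exp |t| := by
  rw [← Real.cosh_abs, ← Real.cosh_add_sinh]
  have := Real.sinh_nonneg_iff.2 (abs_nonneg t)
  linarith

lemma norm_cexp_le (z : ℂ) (t : ℝ) :
    ‖Complex.exp (Complex.I * z * t)‖ ≤ Real.exp (‖z‖ * |t|) := by
  refine (Complex.norm_exp_le_exp_norm _).trans (Real.exp_le_exp.2 ?_)
  simp

lemma integrable_exp_abs (k : ℝ) {c : ℝ} (hc : 0 < c) :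
    Integrable fun t : ℝ => Real.exp (k * |t| - c * t ^ 2) := by
  refine ((integrable_exp_neg_mul_sq (half_pos hc)).const_mul
    (Real.exp (k ^ 2 / (2 * c)))).mono' (by fun_prop) (ae_of_all _ fun t => ?_)
  rw [Real.norm_eq_abs, Real.abs_exp, ← Real.exp_add, Real.exp_le_exp]
  -- Completing the square shows that the linear term costs at most half of the Gaussian exponent.
  have h : k ^ 2 / (2 * c) + -(c / 2) * t ^ 2 - (k * |t| - c * t ^ 2)
      = (k - c * |t|) ^ 2 / (2 * c) := by
    field_simp
    rw [← sq_abs t]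
    ring
  have : 0 ≤ (k - c * |t|) ^ 2 / (2 * c) := by positivity
  linarith

lemma continuous_term (z : ℂ) (n : ℕ) (x : ℝ) :
    Continuous fun t : ℝ => (Real.cosh t : ℂ) ^ n * ker z x t := by
  unfold ker
  have := Real.continuous_cosh
  fun_prop

/-- A bound with a Gaussian in `t` that is uniform in `x ≥ b` and keeps the decay `e^{-(x - b)}`. It
serves both as the dominating function for differentiation in `x` and for the decay at infinity. -/
lemma norm_term_le (z : ℂ) (n : ℕ) {b x : ℝ} (hb : 0 ≤ b) (hx : b ≤ x) (t : ℝ) :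
    ‖(Real.cosh t : ℂ) ^ n * ker z x t‖
      ≤ Real.exp (-(x - b)) * Real.exp ((n + ‖z‖) * |t| - b / 2 * t ^ 2) := by
  have h1 : ‖(Real.cosh t : ℂ) ^ n‖ ≤ Real.exp (n * |t|) := by
    rw [norm_pow, Complex.norm_real, Real.norm_of_nonneg (Real.cosh_pos t).le,
      Real.exp_nat_mul]
    exact pow_le_pow_left₀ (Real.cosh_pos t).le (cosh_le_exp_abs t) n
  have h2 : ‖(Real.exp (-(x * Real.cosh t)) : ℂ)‖
      ≤ Real.exp (-(x - b) + -(b / 2 * t ^ 2)) := by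
    rw [Complex.norm_real, Real.norm_eq_abs, Real.abs_exp, Real.exp_le_exp]
    have := cosh_ge t
    have := Real.one_le_cosh t
    nlinarith
  have h3 := norm_cexp_le z t
  unfold ker
  rw [norm_mul, norm_mul]
  calc _ ≤ Real.exp (n * |t|) *
        (Real.exp (-(x - b) + -(b / 2 * t ^ 2)) * Real.exp (‖z‖ * |t|)) := by gcongr
    _ = _ := by
      rw [← Real.exp_add, ← Real.exp_add, ← Real.exp_add]
      congr 1
      ring

lemma integrable_term (z : ℂ) (n : ℕ) {x : ℝ} (hx : 0 < x) :
    Integrable fun t : ℝ => (Real.cosh t : ℂ) ^ n * ker z x t :=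
  ((integrable_exp_abs (n + ‖z‖) (half_pos hx)).const_mul _).mono'
    (continuous_term z n x).aestronglyMeasurable
    (ae_of_all _ fun t => norm_term_le z n hx.le le_rfl t)

lemma exists_norm_G_le (z : ℂ) (n : ℕ) :
    ∃ C : ℝ, 0 ≤ C ∧ ∀ x, 1 ≤ x → ‖G z n x‖ ≤ C * Real.exp (-(x - 1)) := by
  refine ⟨∫ t : ℝ, Real.exp ((n + ‖z‖) * |t| - 1 / 2 * t ^ 2),
    integral_nonneg fun t => (Real.exp_pos _).le, fun x hx => ?_⟩
  rw [mul_comm, ← integral_const_mul]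
  exact norm_integral_le_of_norm_le
    ((integrable_exp_abs _ (by norm_num)).const_mul _)
    (ae_of_all _ fun t => norm_term_le z n zero_le_one hx t)

lemma hasDerivAt_G (z : ℂ) (n : ℕ) {x : ℝ} (hx : 0 < x) :
    HasDerivAt (G z n) (-G z (n + 1) x) x := by
  have key := hasDerivAt_integral_of_dominated_loc_of_deriv_le
    (μ := volume) (F := fun (y t : ℝ) => (Real.cosh t : ℂ) ^ n * ker z y t)
    (F' := fun (y t : ℝ) => -((Real.cosh t : ℂ) ^ (n + 1) * ker z y t))
    (bound := fun t => Real.exp (((n + 1 : ℕ) + ‖z‖) * |t| - (x / 2) / 2 * t ^ 2))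
    (Ioi_mem_nhds (half_lt_self hx))
    (Eventually.of_forall fun y => (continuous_term z n y).aestronglyMeasurable)
    (integrable_term z n hx)
    (continuous_term z (n + 1) x).neg.aestronglyMeasurable
    (ae_of_all _ fun t y hy => ?_)
    (integrable_exp_abs _ (by positivity))
    (ae_of_all _ fun t y hy => ?_)
  · have h := key.2
    rw [integral_neg] at h
    exact h
  · rw [norm_neg]
    refine (norm_term_le z (n + 1) (half_pos hx).le (le_of_lt hy) t).trans ?_
    refine mul_le_of_le_one_left (Real.exp_pos _).le (Real.exp_le_one_iff.2 ?_)
    have : x / 2 < y := hy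
    linarith
  · unfold ker
    have h : HasDerivAt (fun y : ℝ => Real.exp (-(y * Real.cosh t)))
        (Real.exp (-(y * Real.cosh t)) * -(1 * Real.cosh t)) y :=
      (((hasDerivAt_id y).mul_const _).neg).exp
    refine ((h.ofReal_comp.mul_const (Complex.exp (Complex.I * z * t))).const_mul
      ((Real.cosh t : ℂ) ^ n)).congr_deriv ?_
    push_cast
    ring

/-- The modified Bessel equation `x² y'' + x y' = (x² - z²) y` for `y = G z 0`, with
`y' = -G z 1` and `y'' = G z 2`: the difference of the two sides is the integral over `ℝ` of the
`t`-derivative of `(-iz - x sinh t) e^{-x cosh t} e^{izt}`. -/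
lemma bessel (z : ℂ) {x : ℝ} (hx : 0 < x) :
    (x : ℂ) ^ 2 * G z 2 x - x * G z 1 x = (x ^ 2 - z ^ 2) * G z 0 x := by
  have i0 := integrable_term z 0 hx
  have i1 := integrable_term z 1 hx
  have i2 := integrable_term z 2 hx
  have hs : Integrable fun t : ℝ => (Real.sinh t : ℂ) * ker z x t := by
    have hcont : Continuous fun t : ℝ => (Real.sinh t : ℂ) * ker z x t := by
      unfold ker
      have := Real.continuous_sinh
      have := Real.continuous_cosh
      fun_prop
    refine i1.mono hcont.aestronglyMeasurable (ae_of_all _ fun t => ?_)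
    rw [norm_mul, norm_mul, pow_one]
    gcongr
    rw [Complex.norm_real, Complex.norm_real, Real.norm_of_nonneg (Real.cosh_pos t).le,
      Real.norm_eq_abs, abs_le]
    have h1 := Real.cosh_add_sinh t
    have h2 := Real.cosh_sub_sinh t
    have h3 := Real.exp_pos t
    have h4 := Real.exp_pos (-t)
    constructor <;> linarith
  have hd : ∀ t : ℝ, HasDerivAt
      (fun t : ℝ => -(Complex.I * z) * ((Real.cosh t : ℂ) ^ 0 * ker z x t)
        - x * ((Real.sinh t : ℂ) * ker z x t))
      (x ^ 2 * ((Real.cosh t : ℂ) ^ 2 * ker z x t) - x * ((Real.cosh t : ℂ) ^ 1 * ker z x t)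
        - (x ^ 2 - z ^ 2) * ((Real.cosh t : ℂ) ^ 0 * ker z x t)) t := by
    intro t
    have hk : HasDerivAt (ker z x) ((-(x * Real.sinh t) + Complex.I * z) * ker z x t) t := by
      unfold ker
      have h1 : HasDerivAt (fun t : ℝ => Real.exp (-(x * Real.cosh t)))
          (Real.exp (-(x * Real.cosh t)) * -(x * Real.sinh t)) t :=
        (((Real.hasDerivAt_cosh t).const_mul x).neg).exp
      have h2 : HasDerivAt (fun t : ℝ => Complex.exp (Complex.I * z * t))
          (Complex.exp (Complex.I * z * t) * (Complex.I * z * (1 : ℝ))) t :=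
        (((hasDerivAt_id t).ofReal_comp).const_mul (Complex.I * z)).cexp
      refine (h1.ofReal_comp.mul h2).congr_deriv ?_
      push_cast
      ring
    simp only [pow_zero, one_mul]
    refine ((hk.const_mul (-(Complex.I * z))).sub
      (((Real.hasDerivAt_sinh t).ofReal_comp.mul hk).const_mul (x : ℂ))).congr_deriv ?_
    have hc : (Real.cosh t : ℂ) ^ 2 = (Real.sinh t : ℂ) ^ 2 + 1 := by
      exact_mod_cast Real.cosh_sq t
    rw [hc]
    linear_combination -(z ^ 2 * ker z x t) * Complex.I_sq
  have := integral_eq_zero_of_hasDerivAt_of_integrable hd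
    (((i2.const_mul _).sub (i1.const_mul _)).sub (i0.const_mul _))
    ((i0.const_mul _).sub (hs.const_mul _))
  rw [integral_sub (by exact (i2.const_mul _).sub (i1.const_mul _)) (i0.const_mul _),
    integral_sub (i2.const_mul _) (i1.const_mul _), integral_const_mul, integral_const_mul,
    integral_const_mul] at this
  exact sub_eq_zero.1 this

/-- By Laplace's method `G z 0` does not vanish identically near infinity. With `x = r⁻²` and
`t = r s`, one has `r⁻¹ eˣ G z 0 x = ∫ e^{-2 (sinh(rs/2)/r)²} e^{izrs} ds`, which tends to
`∫ e^{-s²/2} ds` as `r → 0⁺`. -/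
lemma exists_G_ne_zero (z : ℂ) (a : ℝ) : ∃ x, a < x ∧ G z 0 x ≠ 0 := by
  by_contra! hG
  have hlim : Tendsto (fun r : ℝ => ∫ s : ℝ,
      (Real.exp (-(2 * (r⁻¹ * Real.sinh (r * (s / 2))) ^ 2)) : ℂ)
        * Complex.exp (Complex.I * z * (r * s : ℝ)))
      (𝓝[>] 0) (𝓝 (∫ s : ℝ, (Real.exp (-(1 / 2) * s ^ 2) : ℂ))) := by
    refine tendsto_integral_filter_of_dominated_convergence
      (fun s => Real.exp (‖z‖ * |s| - 1 / 2 * s ^ 2)) ?_ ?_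
      (integrable_exp_abs _ (by norm_num)) ?_
    · refine Eventually.of_forall fun r => Continuous.aestronglyMeasurable ?_
      have := Real.continuous_sinh
      fun_prop
    · filter_upwards [Ioo_mem_nhdsGT (zero_lt_one' ℝ)] with r hr
      refine ae_of_all _ fun s => ?_
      have h1 : ‖(Real.exp (-(2 * (r⁻¹ * Real.sinh (r * (s / 2))) ^ 2)) : ℂ)‖
          ≤ Real.exp (-(1 / 2 * s ^ 2)) := by
        rw [Complex.norm_real, Real.norm_eq_abs, Real.abs_exp, Real.exp_le_exp]
        have h := mul_le_mul_of_nonneg_left (sq_le_sinh_sq (r * (s / 2))) (sq_nonneg r⁻¹)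
        have e : r⁻¹ ^ 2 * (r * (s / 2)) ^ 2 = s ^ 2 / 4 := by
          have := hr.1.ne'
          field_simp
          norm_num
        rw [e] at h
        rw [mul_pow]
        linarith
      have h2 : ‖Complex.exp (Complex.I * z * (r * s : ℝ))‖ ≤ Real.exp (‖z‖ * |s|) := by
        refine (norm_cexp_le z (r * s)).trans (Real.exp_le_exp.2 ?_)
        rw [abs_mul, abs_of_pos hr.1]
        gcongr
        exact mul_le_of_le_one_left (abs_nonneg s) hr.2.le
      rw [norm_mul, sub_eq_neg_add, Real.exp_add]
      gcongr
    · refine ae_of_all _ fun s => ?_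
      have hd : HasDerivAt (fun r : ℝ => Real.sinh (r * (s / 2)))
          (Real.cosh (0 * (s / 2)) * (1 * (s / 2))) 0 :=
        ((hasDerivAt_id (0 : ℝ)).mul_const (s / 2)).sinh
      have h1 : Tendsto (fun r : ℝ => r⁻¹ * Real.sinh (r * (s / 2))) (𝓝[>] 0) (𝓝 (s / 2)) := by
        have := (hasDerivAt_iff_tendsto_slope.1 hd).mono_left (nhdsGT_le_nhdsNE (0 : ℝ))
        simpa [slope_fun_def] using this
      have h2 : Tendsto (fun r : ℝ => Real.exp (-(2 * (r⁻¹ * Real.sinh (r * (s / 2))) ^ 2)))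
          (𝓝[>] 0) (𝓝 (Real.exp (-(1 / 2) * s ^ 2))) := by
        have := (Real.continuous_exp.tendsto _).comp (((h1.pow 2).const_mul 2).neg)
        rwa [show -(2 * (s / 2) ^ 2) = -(1 / 2) * s ^ 2 by ring] at this
      have h3 : Tendsto (fun r : ℝ => Complex.exp (Complex.I * z * (r * s : ℝ)))
          (𝓝[>] 0) (𝓝 1) := by
        have hc : Continuous fun r : ℝ => Complex.exp (Complex.I * z * (r * s : ℝ)) := by
          fun_prop
        simpa using (hc.tendsto 0).mono_left nhdsWithin_le_nhds
      simpa using ((Complex.continuous_ofReal.tendsto _).comp h2).mul h3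
  have hzero : (fun r : ℝ => ∫ s : ℝ,
      (Real.exp (-(2 * (r⁻¹ * Real.sinh (r * (s / 2))) ^ 2)) : ℂ)
        * Complex.exp (Complex.I * z * (r * s : ℝ))) =ᶠ[𝓝[>] 0] fun _ => 0 := by
    have hx : Tendsto (fun r : ℝ => r⁻¹ ^ 2) (𝓝[>] 0) atTop :=
      (tendsto_pow_atTop two_ne_zero).comp tendsto_inv_nhdsGT_zero
    filter_upwards [hx.eventually_gt_atTop a] with r hr
    have h := hG _ hr
    have e : ∀ s : ℝ, (Real.exp (-(2 * (r⁻¹ * Real.sinh (r * (s / 2))) ^ 2)) : ℂ)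
        * Complex.exp (Complex.I * z * (r * s : ℝ))
        = (Real.exp (r⁻¹ ^ 2) : ℂ) *
          (fun t : ℝ => (Real.cosh t : ℂ) ^ 0 * ker z (r⁻¹ ^ 2) t) (r * s) := by
      intro s
      simp only [ker, pow_zero, one_mul]
      rw [← mul_assoc, ← Complex.ofReal_mul, ← Real.exp_add, cosh_eq (r * s), mul_div_assoc]
      congr 3
      ring
    rw [integral_congr_ae (ae_of_all _ e), integral_const_mul,
      Measure.integral_comp_mul_left (fun t : ℝ => (Real.cosh t : ℂ) ^ 0 * ker z (r⁻¹ ^ 2) t) r]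
    unfold G at h
    rw [h]
    simp
  have h0 := tendsto_nhds_unique hlim (tendsto_const_nhds.congr' hzero.symm)
  rw [integral_complex_ofReal, integral_gaussian, Complex.ofReal_eq_zero] at h0
  have : 0 < √(Real.pi / (1 / 2)) := by positivity
  exact this.ne' h0

/-- `x · Im(ȳ y')` for `y = G z 0`: up to the factor `2i`, this is `x` times the Wronskian of `ȳ`
and `y`. -/
noncomputable def W (z : ℂ) (x : ℝ) : ℝ :=
  x * ((starRingEnd ℂ) (G z 0 x) * -G z 1 x).im

lemma hasDerivAt_W (z : ℂ) {x : ℝ} (hx : 0 < x) :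
    HasDerivAt (W z) (-((z ^ 2).im * (Complex.normSq (G z 0 x) / x))) x := by
  have h0 := hasDerivAt_G z 0 hx
  have h1 := (hasDerivAt_G z 1 hx).neg
  have hc : HasDerivAt (fun x => (starRingEnd ℂ) (G z 0 x)) ((starRingEnd ℂ) (-G z 1 x)) x :=
    h0.star
  have hp := Complex.imCLM.hasFDerivAt.comp_hasDerivAt x (hc.mul h1)
  refine ((hasDerivAt_id x).mul hp).congr_deriv ?_
  have hb := bessel z hx
  have hb' : (x : ℂ) * (-G z 1 x + x * G z 2 x) = (x ^ 2 - z ^ 2) * G z 0 x := by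
    rw [← hb]; ring
  have key : (x : ℂ) * ((starRingEnd ℂ) (G z 0 x) * (-G z 1 x + x * G z 2 x))
      = (x ^ 2 - z ^ 2) * (Complex.normSq (G z 0 x) : ℂ) := by
    rw [Complex.normSq_eq_conj_mul_self]
    linear_combination (starRingEnd ℂ) (G z 0 x) * hb'
  have him := congrArg Complex.im key
  rw [Complex.im_ofReal_mul, Complex.im_mul_ofReal] at him
  have e : ((x : ℂ) ^ 2 - z ^ 2).im = -(z ^ 2).im := by
    rw [Complex.sub_im, ← Complex.ofReal_pow, Complex.ofReal_im, zero_sub]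
  rw [e] at him
  have : -((z ^ 2).im * (Complex.normSq (G z 0 x) / x))
      = ((starRingEnd ℂ) (G z 0 x) * (-G z 1 x + x * G z 2 x)).im := by
    field_simp
    linarith
  rw [this]
  simp
  ring

lemma tendsto_W (z : ℂ) : Tendsto (W z) atTop (𝓝 0) := by
  obtain ⟨C, hC, h0⟩ := exists_norm_G_le z 0
  obtain ⟨D, hD, h1⟩ := exists_norm_G_le z 1
  have hlim : Tendsto (fun x : ℝ => C * D * Real.exp 1 * (x ^ 1 * Real.exp (-x)))
      atTop (𝓝 0) := by
    simpa using (Real.tendsto_pow_mul_exp_neg_atTop_nhds_zero 1).const_mul (C * D * Real.exp 1)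
  refine squeeze_zero_norm' ?_ hlim
  filter_upwards [eventually_ge_atTop 1] with x hx
  have hx0 : 0 ≤ x := by linarith
  have h0' : ‖G z 0 x‖ ≤ C := (h0 x hx).trans
    (mul_le_of_le_one_right hC (Real.exp_le_one_iff.2 (by linarith)))
  have e : Real.exp (-(x - 1)) = Real.exp 1 * Real.exp (-x) := by
    rw [← Real.exp_add]; congr 1; ring
  calc ‖W z x‖ = x * |((starRingEnd ℂ) (G z 0 x) * -G z 1 x).im| := by
        rw [W, norm_mul, Real.norm_of_nonneg hx0, Real.norm_eq_abs]
    _ ≤ x * (C * (D * Real.exp (-(x - 1)))) := by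
        gcongr
        refine (Complex.abs_im_le_norm _).trans ?_
        rw [norm_mul, norm_neg, RCLike.norm_conj]
        gcongr
        exact h1 x hx
    _ = _ := by rw [e]; ring

/-- A zero at `x = a` forces `z²` to be real: otherwise `W` is strictly monotone wherever `y ≠ 0`,
although it vanishes both at `a` and at infinity. -/
lemma im_sq_eq_zero (z : ℂ) {a : ℝ} (ha : 0 < a) (hz : G z 0 a = 0) : (z ^ 2).im = 0 := by
  by_contra hs
  set s := (z ^ 2).im with hs_def
  -- Multiplying `W` by `s` makes it antitone whatever the sign of `s`.
  have hd : ∀ x, 0 < x → HasDerivAt (fun x => s * W z x)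
      (s * -(s * (Complex.normSq (G z 0 x) / x))) x :=
    fun x hx => (hasDerivAt_W z hx).const_mul s
  have hanti : AntitoneOn (fun x => s * W z x) (Set.Ici a) := by
    refine antitoneOn_of_deriv_nonpos (convex_Ici a)
      (fun x hx => (hd x (ha.trans_le hx)).continuousAt.continuousWithinAt)
      (fun x hx => ?_) (fun x hx => ?_)
    · rw [interior_Ici] at hx
      exact (hd x (ha.trans hx)).differentiableAt.differentiableWithinAt
    · rw [interior_Ici] at hx
      have hx0 : 0 < x := ha.trans hx
      rw [(hd x hx0).deriv]
      have := div_nonneg (Complex.normSq_nonneg (G z 0 x)) hx0.le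
      nlinarith [mul_nonneg (sq_nonneg s) this]
  have hlim : Tendsto (fun x => s * W z x) atTop (𝓝 0) := by
    simpa using (tendsto_W z).const_mul s
  have hWa : W z a = 0 := by simp [W, hz]
  have hzero : ∀ x, a ≤ x → s * W z x = 0 := by
    intro x hx
    apply le_antisymm
    · simpa [hWa] using hanti Set.self_mem_Ici hx hx
    · refine le_of_tendsto hlim ?_
      filter_upwards [eventually_ge_atTop x] with y hy
      exact hanti hx (hx.trans hy) hy
  obtain ⟨x, hx, hne⟩ := exists_G_ne_zero z a
  have hx0 : 0 < x := ha.trans hx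
  have hconst : (fun x => s * W z x) =ᶠ[𝓝 x] fun _ => 0 := by
    filter_upwards [Ioi_mem_nhds hx] with y hy using hzero y (le_of_lt hy)
  have h := (hd x hx0).unique ((hasDerivAt_const x (0 : ℝ)).congr_of_eventuallyEq hconst)
  have := Complex.normSq_pos.2 hne
  have : s * -(s * (Complex.normSq (G z 0 x) / x)) < 0 := by
    have h1 : 0 < Complex.normSq (G z 0 x) / x := by positivity
    have h2 : 0 < s ^ 2 := by positivity
    nlinarith [mul_pos h2 h1]
  linarith

lemma G_ne_zero_of_re_eq_zero (z : ℂ) {a : ℝ} (ha : 0 < a) (hz : z.re = 0) : G z 0 a ≠ 0 := by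
  have e : ∀ t : ℝ, (Real.cosh t : ℂ) ^ 0 * ker z a t
      = (Real.exp (-(a * Real.cosh t) - z.im * t) : ℂ) := by
    intro t
    have hz' : z = z.im * Complex.I := by
      apply Complex.ext <;> simp [hz]
    have h : Complex.I * z * t = ((-(z.im * t) : ℝ) : ℂ) := by
      conv_lhs => rw [hz']
      push_cast
      linear_combination (z.im * t : ℂ) * Complex.I_sq
    rw [pow_zero, one_mul, ker, h, ← Complex.ofReal_exp, ← Complex.ofReal_mul, ← Real.exp_add,
      sub_eq_add_neg]
  have hint := integrable_term z 0 ha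
  simp_rw [e] at hint
  have hpos : 0 < ∫ t : ℝ, Real.exp (-(a * Real.cosh t) - z.im * t) := by
    refine integral_exp_pos ?_
    exact hint.re
  unfold G
  simp_rw [e]
  rw [integral_complex_ofReal]
  exact_mod_cast hpos.ne'

end CoshKernel

/-- For every `a > 0`, every zero of `z ↦ ∫ e^{-a·cosh t} e^{izt} dt` is real. -/
theorem zeros_real_cosh_kernel (a : ℝ) (ha : 0 < a) (z : ℂ)
    (hz : (∫ t : ℝ, (Real.exp (-(a * Real.cosh t)) : ℂ) *
      Complex.exp (Complex.I * z * t)) = 0) :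
    z.im = 0 := by
  have hG : CoshKernel.G z 0 a = 0 := by
    simpa [CoshKernel.G, CoshKernel.ker] using hz
  have him := CoshKernel.im_sq_eq_zero z ha hG
  have hmul : z.re * z.im = 0 := by
    rw [pow_two, Complex.mul_im] at him
    linarith
  exact (mul_eq_zero.1 hmul).resolve_left
    fun hre => CoshKernel.G_ne_zero_of_re_eq_zero z ha hre hG
end

section
/- Let q₁ and q₂ be functions of class Q and let c_{[q₁,q₂]}(t) = ∫_{-∞}^{∞} e^{-q₁(v)}·e^{-q₂(t-v)} dv. Then c_{[q₁,q₂]} is strictly decreasing on (0, ∞): for all real t with t > 0 the derivative of c_{[q₁,q₂]} at t exists and is strictly negative, and hence 0 < t₁ < t₂ implies c_{[q₁,q₂]}(t₂) < c_{[q₁,q₂]}(t₁). -/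
open MeasureTheory

/-- Termwise differentiation of the logarithm of `∏ (1 + t² bₙ)`. -/
lemma hasDerivAt_tsum_log {ι : Type*} {b : ι → ℝ} (hb : ∀ i, 0 ≤ b i) (hs : Summable b) (t : ℝ) :
    HasDerivAt (fun t : ℝ => ∑' i, Real.log (1 + t ^ 2 * b i))
      (∑' i, 2 * t * b i / (1 + t ^ 2 * b i)) t := by
  have hpos : ∀ (y : ℝ) i, 0 < 1 + y ^ 2 * b i := fun y i => by
    have := mul_nonneg (sq_nonneg y) (hb i); linarith
  refine hasDerivAt_tsum_of_isPreconnected (t := Metric.ball (0 : ℝ) (|t| + 1)) (y₀ := 0)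
    (u := fun i => 2 * (|t| + 1) * b i) (g := fun i y => Real.log (1 + y ^ 2 * b i))
    (g' := fun i y => 2 * y * b i / (1 + y ^ 2 * b i)) (hs.mul_left _) Metric.isOpen_ball
    (convex_ball (0 : ℝ) _).isPreconnected ?_ ?_ ?_ ?_ ?_
  · intro i y _
    have h := (((hasDerivAt_id y).pow 2).mul_const (b i)).const_add 1
    have h2 := h.log (hpos y i).ne'
    exact h2.congr_deriv (by simp)
  · intro i y hy
    have hy' : |y| < |t| + 1 := by simpa using hy
    rw [Real.norm_eq_abs, abs_div, abs_mul, abs_mul, abs_of_pos (hpos y i), abs_of_nonneg (hb i)]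
    rw [abs_two]
    refine (div_le_self (by have := hb i; positivity) ?_).trans ?_
    · have := mul_nonneg (sq_nonneg y) (hb i); linarith
    · have := hb i
      gcongr
  · simp; positivity
  · simp
  · simp

/-- Differentiability of a class Q function, with the linear bound `|r| ≤ A |t|` on the
logarithmic derivative of its factor `exp (μ t²) ∏ (1 + t² bₙ)`. -/
lemma IsClassQ.exists_log_form {q : ℝ → ℝ} (h : IsClassQ q) :
    ∃ (k : ℝ) (m : ℕ) (l r : ℝ → ℝ) (A : ℝ), 0 < k ∧ 0 < m ∧ 0 ≤ A ∧
      (∀ t, q t = k * t ^ (2 * m) * Real.exp (l t)) ∧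
      (∀ t, HasDerivAt l (r t) t) ∧ (∀ t, 0 ≤ t → 0 ≤ r t) ∧ (∀ t, |r t| ≤ A * |t|) ∧
      (∀ t, l (-t) = l t) := by
  obtain ⟨k, m, μ, S, β, hk, hm, hμ, hβ, hs, hq, -⟩ := h
  set b : S → ℝ := fun n => 1 / (β n) ^ 2 with hbdef
  have hb : ∀ i, 0 ≤ b i := fun i => by simp only [hbdef]; positivity
  have hpos : ∀ (y : ℝ) i, 0 < 1 + y ^ 2 * b i := fun y i => by
    have := mul_nonneg (sq_nonneg y) (hb i); linarith
  refine ⟨k, m, fun t => μ * t ^ 2 + ∑' i, Real.log (1 + t ^ 2 * b i),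
    fun t => μ * (2 * t) + ∑' i, 2 * t * b i / (1 + t ^ 2 * b i), 2 * μ + 2 * ∑' i, b i,
    hk, hm, ?_, ?_, ?_, ?_, ?_, ?_⟩
  · have : 0 ≤ ∑' i, b i := tsum_nonneg hb
    positivity
  · intro t
    have hlog : Summable fun i => Real.log (1 + t ^ 2 * b i) :=
      Real.summable_log_one_add_of_summable (hs.mul_left _)
    rw [hq, Real.exp_add, Real.rexp_tsum_eq_tprod (fun i => hpos t i) hlog]
    simp only [hbdef, mul_one_div]
    ring
  · intro t
    have h1 := ((hasDerivAt_id t).pow 2).const_mul μ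
    exact (h1.add (hasDerivAt_tsum_log hb hs t)).congr_deriv (by simp)
  · intro t ht
    have : 0 ≤ ∑' i, 2 * t * b i / (1 + t ^ 2 * b i) :=
      tsum_nonneg fun i => div_nonneg (by have := hb i; positivity) (hpos t i).le
    positivity
  · intro t
    have hle : ∀ i, ‖2 * t * b i / (1 + t ^ 2 * b i)‖ ≤ 2 * |t| * b i := fun i => by
      rw [Real.norm_eq_abs, abs_div, abs_mul, abs_mul, abs_of_pos (hpos t i),
        abs_of_nonneg (hb i), abs_two]
      refine div_le_self (by have := hb i; positivity) ?_
      have := mul_nonneg (sq_nonneg t) (hb i); linarith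
    have h2 := tsum_of_norm_bounded ((hs.mul_left (2 * |t|)).hasSum) hle
    rw [tsum_mul_left, Real.norm_eq_abs] at h2
    refine (abs_add_le _ _).trans ?_
    rw [abs_mul, abs_mul, abs_of_nonneg hμ, abs_two]
    linarith
  · intro t; simp

lemma IsClassQ.even {q : ℝ → ℝ} (h : IsClassQ q) (t : ℝ) : q (-t) = q t := by
  obtain ⟨k, m, l, r, A, hk, hm, hA, hq, hl, hr, hrA, he⟩ := h.exists_log_form
  rw [hq, hq, he, (even_two_mul m).neg_pow]

lemma IsClassQ.nonneg {q : ℝ → ℝ} (h : IsClassQ q) (t : ℝ) : 0 ≤ q t := by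
  obtain ⟨k, m, l, r, A, hk, hm, hA, hq, hl, hr, hrA, he⟩ := h.exists_log_form
  rw [hq, pow_mul]; positivity

lemma IsClassQ.differentiable {q : ℝ → ℝ} (h : IsClassQ q) : Differentiable ℝ q := by
  obtain ⟨k, m, l, r, A, hk, hm, hA, hq, hl, hr, hrA, he⟩ := h.exists_log_form
  have hd : Differentiable ℝ l := fun t => (hl t).differentiableAt
  rw [funext hq]
  fun_prop

lemma IsClassQ.deriv_pos {q : ℝ → ℝ} (h : IsClassQ q) {t : ℝ} (ht : 0 < t) : 0 < deriv q t := by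
  obtain ⟨k, m, l, r, A, hk, hm, hA, hq, hl, hr, hrA, he⟩ := h.exists_log_form
  have hd := (((hasDerivAt_id t).pow (2 * m)).const_mul k).mul (hl t).exp
  have h2 : HasDerivAt q _ t := (hd.congr_of_eventuallyEq (.of_forall hq))
  rw [h2.deriv]
  have := hr t ht.le
  simp only [id, Pi.pow_apply]
  positivity

lemma IsClassQ.deriv_neg_arg {q : ℝ → ℝ} (h : IsClassQ q) (t : ℝ) :
    deriv q (-t) = -deriv q t := by
  have h1 := deriv_comp_neg q t
  rw [funext h.even] at h1
  rw [h1, neg_neg]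

lemma IsClassQ.lt_of_abs_lt {q : ℝ → ℝ} (h : IsClassQ q) {s t : ℝ} (hst : |s| < |t|) :
    q s < q t := by
  have habs : ∀ x, q |x| = q x := fun x => by
    rcases abs_choice x with hx | hx <;> rw [hx]
    exact h.even x
  have hmono : StrictMonoOn q (Set.Ici 0) :=
    strictMonoOn_of_deriv_pos (convex_Ici 0) h.differentiable.continuous.continuousOn
      fun x hx => h.deriv_pos (by simpa using hx)
  rw [← habs s, ← habs t]
  exact hmono (abs_nonneg s) (abs_nonneg t) hst

lemma IsClassQ.exists_sq_le {q : ℝ → ℝ} (h : IsClassQ q) :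
    ∃ T : ℝ, 1 ≤ T ∧ ∀ t, T ≤ |t| → t ^ 2 ≤ q t := by
  have h' := h
  obtain ⟨k, m, μ, S, β, -, -, -, -, -, -, T, α, hT, hα, hg⟩ := h'
  refine ⟨max T 1, le_max_right _ _, fun t ht => ?_⟩
  have habs : q |t| = q t := by
    rcases abs_choice t with hx | hx <;> rw [hx]
    exact h.even t
  rw [← habs, ← sq_abs]
  refine le_trans ?_ (hg |t| ((le_max_left _ _).trans ht)).le
  rw [← Real.rpow_natCast]
  exact Real.rpow_le_rpow_of_exponent_le ((le_max_right _ _).trans ht) (by push_cast; linarith)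

/-- The derivative of `exp (-q)` is bounded: for `|t| ≥ 1` one has `|q' t| ≤ (2m + A) |t| q t`, and
`|t| ≤ T + q t`, so the decay of `exp (-q)` absorbs it. -/
lemma IsClassQ.exists_bound_deriv {q : ℝ → ℝ} (h : IsClassQ q) :
    ∃ M : ℝ, ∀ t, |deriv q t| * Real.exp (-(q t)) ≤ M := by
  obtain ⟨T, hT1, hT⟩ := h.exists_sq_le
  obtain ⟨k, m, l, r, A, hk, hm, hA, hq, hl, hr, hrA, he⟩ := h.exists_log_form
  have hder : ∀ t, deriv q t = k * (2 * m * t ^ (2 * m - 1)) * Real.exp (l t)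
      + k * t ^ (2 * m) * (Real.exp (l t) * r t) := fun t => by
    have hd := (((hasDerivAt_id t).pow (2 * m)).const_mul k).mul (hl t).exp
    have h2 : HasDerivAt q _ t := (hd.congr_of_eventuallyEq (.of_forall hq))
    rw [h2.deriv]
    simp
  have hlc : Continuous l := continuous_iff_continuousAt.2 fun t => (hl t).continuousAt
  obtain ⟨K, hK⟩ := (isCompact_Icc (a := (-1 : ℝ)) (b := 1)).exists_bound_of_continuousOn
    (f := fun t => Real.exp (l t)) (by fun_prop)
  -- On `[-1, 1]` the powers of `|t|` are at most `1`.
  have hsmall : ∀ t : ℝ, |t| ≤ 1 → |deriv q t| * Real.exp (-(q t)) ≤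
      k * (2 * m) * K + k * (K * A) := fun t ht => by
    have hE : Real.exp (l t) ≤ K := by
      have := hK t (abs_le.1 ht)
      rwa [Real.norm_eq_abs, abs_of_pos (Real.exp_pos _)] at this
    have hK0 : 0 ≤ K := (Real.exp_pos _).le.trans hE
    have h1 : |deriv q t| ≤ k * (2 * m) * K + k * (K * A) := by
      rw [hder]
      refine (abs_add_le _ _).trans ?_
      simp only [abs_mul, abs_pow, abs_of_pos hk, Real.abs_exp, abs_two, Nat.abs_cast]
      have p1 : |t| ^ (2 * m - 1) ≤ 1 := pow_le_one₀ (abs_nonneg _) ht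
      have p2 : |t| ^ (2 * m) ≤ 1 := pow_le_one₀ (abs_nonneg _) ht
      have p3 : |r t| ≤ A := (hrA t).trans (mul_le_of_le_one_right hA ht)
      have e1 : k * (2 * m * |t| ^ (2 * m - 1)) * Real.exp (l t) ≤ k * (2 * m * 1) * K := by
        gcongr
      have e2 : k * |t| ^ (2 * m) * (Real.exp (l t) * |r t|) ≤ k * 1 * (K * A) := by
        gcongr
      linarith
    have h2 : Real.exp (-(q t)) ≤ 1 := Real.exp_le_one_iff.2 (by linarith [h.nonneg t])
    calc _ ≤ |deriv q t| * 1 := by gcongr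
      _ ≤ _ := by linarith
  have hlarge : ∀ t : ℝ, 1 ≤ |t| → |deriv q t| * Real.exp (-(q t)) ≤
      (2 * m + A) * (T + 2) := fun t ht => by
    have hq0 := h.nonneg t
    have h1 : |deriv q t| ≤ (2 * m + A) * (|t| * q t) := by
      rw [hder]
      refine (abs_add_le _ _).trans ?_
      have hqa : q t = k * |t| ^ (2 * m) * Real.exp (l t) := by
        rw [hq, ← abs_pow, abs_of_nonneg ((even_two_mul m).pow_nonneg t)]
      rw [hqa]
      simp only [abs_mul, abs_pow, abs_of_pos hk, Real.abs_exp, abs_two, Nat.abs_cast]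
      have p1 : |t| ^ (2 * m - 1) ≤ |t| * |t| ^ (2 * m) := by
        rw [← pow_succ']
        exact pow_le_pow_right₀ ht (by omega)
      have e1 : k * (2 * m * |t| ^ (2 * m - 1)) * Real.exp (l t) ≤
          k * (2 * m * (|t| * |t| ^ (2 * m))) * Real.exp (l t) := by
        gcongr
      have e2 : k * |t| ^ (2 * m) * (Real.exp (l t) * |r t|) ≤
          k * |t| ^ (2 * m) * (Real.exp (l t) * (A * |t|)) := by
        gcongr
        exact hrA t
      linarith
    have h3 : |t| ≤ T + q t := by
      rcases le_total T |t| with h4 | h4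
      · have := hT t h4
        rw [← sq_abs] at this
        nlinarith
      · linarith
    have h5 : |t| * q t ≤ (T + 2) * Real.exp (q t) := by
      have := Real.quadratic_le_exp_of_nonneg hq0
      nlinarith
    rw [Real.exp_neg, ← div_eq_mul_inv, div_le_iff₀ (Real.exp_pos _)]
    calc _ ≤ _ := h1
      _ ≤ (2 * m + A) * ((T + 2) * Real.exp (q t)) := by gcongr
      _ = _ := by ring
  refine ⟨max (k * (2 * m) * K + k * (K * A)) ((2 * m + A) * (T + 2)), fun t => ?_⟩
  rcases le_total |t| 1 with h1 | h1
  · exact (hsmall t h1).trans (le_max_left _ _)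
  · exact (hlarge t h1).trans (le_max_right _ _)

lemma IsClassQ.integrable_exp_neg {q : ℝ → ℝ} (h : IsClassQ q) :
    Integrable fun t => Real.exp (-(q t)) := by
  obtain ⟨T, hT1, hT⟩ := h.exists_sq_le
  have hc := h.differentiable.continuous
  have hg : Integrable fun t : ℝ => Real.exp (T ^ 2) * Real.exp (-1 * t ^ 2) :=
    (integrable_exp_neg_mul_sq one_pos).const_mul _
  refine hg.mono' (by fun_prop) (.of_forall fun t => ?_)
  rw [Real.norm_eq_abs, Real.abs_exp, ← Real.exp_add, Real.exp_le_exp]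
  rcases le_total T |t| with h1 | h1
  · have := hT t h1
    nlinarith
  · have := h.nonneg t
    have : t ^ 2 ≤ T ^ 2 := sq_le_sq' (abs_le.1 h1).1 (abs_le.1 h1).2
    linarith

/-- For `q₁, q₂` of class Q, the convolution `c(t) = ∫ e^{-q₁(v)}·e^{-q₂(t-v)} dv` is
strictly decreasing on `(0, ∞)`: its derivative exists and is strictly negative at every
`t > 0`, whence `0 < t₁ < t₂` implies `c(t₂) < c(t₁)`. -/
theorem convolution_strict_anti (q₁ q₂ : ℝ → ℝ) (h₁ : IsClassQ q₁) (h₂ : IsClassQ q₂)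
    (C : ℝ → ℝ)
    (hC : ∀ t : ℝ, C t = ∫ v : ℝ, Real.exp (-(q₁ v)) * Real.exp (-(q₂ (t - v)))) :
    (∀ t : ℝ, 0 < t → ∃ d : ℝ, HasDerivAt C d t ∧ d < 0) ∧
    ∀ t₁ t₂ : ℝ, 0 < t₁ → t₁ < t₂ → C t₂ < C t₁ := by
  have main : ∀ t : ℝ, 0 < t → ∃ d : ℝ, HasDerivAt C d t ∧ d < 0 := by
    intro t ht
    obtain ⟨M, hM⟩ := h₂.exists_bound_deriv
    have hc1 := h₁.differentiable.continuous
    have hc2 := h₂.differentiable.continuous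
    have hi1 := h₁.integrable_exp_neg
    have hmd := measurable_deriv q₂
    set f : ℝ → ℝ := fun v => Real.exp (-(q₁ v)) with hf
    set g' : ℝ → ℝ := fun v => Real.exp (-(q₂ v)) * -deriv q₂ v with hg'
    have hg'm : Measurable g' := by fun_prop
    have hg'b : ∀ v, ‖g' v‖ ≤ M := fun v => by
      rw [hg', Real.norm_eq_abs, abs_mul, Real.abs_exp, abs_neg, mul_comm]
      exact hM v
    have hfm : Measurable f := by fun_prop
    have hder := hasDerivAt_integral_of_dominated_loc_of_deriv_le (μ := volume)
      (F := fun x v => Real.exp (-(q₁ v)) * Real.exp (-(q₂ (x - v))))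
      (F' := fun x v => f v * g' (x - v)) (x₀ := t) (s := Set.univ) (bound := fun v => f v * M)
      Filter.univ_mem (.of_forall fun x => by fun_prop)
      (hi1.mono' (by fun_prop) (.of_forall fun v => by
        rw [Real.norm_eq_abs, abs_mul, Real.abs_exp, Real.abs_exp]
        exact mul_le_of_le_one_right (Real.exp_pos _).le
          (Real.exp_le_one_iff.2 (by linarith [h₂.nonneg (t - v)]))))
      (by fun_prop)
      (.of_forall fun v x _ => by
        rw [norm_mul, Real.norm_eq_abs, Real.abs_exp]
        exact mul_le_mul_of_nonneg_left (hg'b _) (Real.exp_pos _).le)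
      (hi1.mul_const M)
      (.of_forall fun v x _ => by
        have h := ((h₂.differentiable (x - v)).hasDerivAt.comp_sub_const x v).neg.exp
        exact h.const_mul _)
    refine ⟨∫ v, f v * g' (t - v), ?_, ?_⟩
    · rw [funext hC]; exact hder.2
    have hfe : ∀ v, f (-v) = f v := fun v => by simp only [hf, h₁.even]
    have hgo : ∀ v, g' (-v) = -g' v := fun v => by
      simp only [hg', h₂.even, h₂.deriv_neg_arg]; ring
    have hI1 : ∫ v, f v * g' (t - v) = ∫ u, f (t - u) * g' u := by
      rw [← integral_sub_left_eq_self (fun v => f v * g' (t - v)) volume t]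
      simp
    have hI2 : ∫ u, f (t - u) * g' u = ∫ u, -(f (t + u) * g' u) := by
      rw [← integral_neg_eq_self]
      simp [hgo]
    have hn1 : Integrable fun u => f (t - u) * g' u :=
      (hi1.comp_sub_left t).mul_bdd hg'm.aestronglyMeasurable (.of_forall hg'b)
    have hn2 : Integrable fun u => -(f (t + u) * g' u) :=
      ((hi1.comp_add_left t).mul_bdd hg'm.aestronglyMeasurable (.of_forall hg'b)).neg
    have hsign : ∀ u, 0 < u → 0 < -((f (t - u) - f (t + u)) * g' u) := fun u hu => by
      have hlt : q₁ (t - u) < q₁ (t + u) := h₁.lt_of_abs_lt <| by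
        rw [abs_of_pos (add_pos ht hu), abs_lt]; constructor <;> linarith
      have a1 : 0 < f (t - u) - f (t + u) := sub_pos.2 (Real.exp_lt_exp.2 (neg_lt_neg hlt))
      have a2 : 0 < -g' u := by
        simp only [hg', mul_neg, neg_neg]
        exact mul_pos (Real.exp_pos _) (h₂.deriv_pos hu)
      have := mul_pos a1 a2
      linarith
    have hsign' : ∀ u, u ≠ 0 → 0 < -((f (t - u) - f (t + u)) * g' u) := fun u hu => by
      rcases lt_or_gt_of_ne hu with h | h
      · have := hsign (-u) (by linarith)
        rw [hgo, sub_neg_eq_add, ← sub_eq_add_neg] at this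
        linarith
      · exact hsign u h
    have hpos : 0 < ∫ u, -((f (t - u) - f (t + u)) * g' u) := by
      rw [integral_pos_iff_support_of_nonneg]
      · refine lt_of_lt_of_le ?_ (measure_mono (s := Set.Ioi (0 : ℝ))
          fun u hu => (hsign u hu).ne')
        simp
      · intro u
        by_cases hu : u = 0
        · subst hu; simp
        · exact (hsign' u hu).le
      · convert (hn1.add hn2).neg using 1
        ext u; simp; ring
    have hsum : ∫ u, -((f (t - u) - f (t + u)) * g' u) =
        -((∫ u, f (t - u) * g' u) + ∫ u, -(f (t + u) * g' u)) := by
      rw [← integral_add hn1 hn2, ← integral_neg]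
      congr 1; ext u; ring
    rw [hI1]
    rw [hsum, ← hI2] at hpos
    linarith
  refine ⟨main, fun t₁ t₂ ht₁ hlt => ?_⟩
  have hanti : StrictAntiOn C (Set.Ioi 0) := by
    refine strictAntiOn_of_deriv_neg (convex_Ioi 0) (fun x hx => ?_) (fun x hx => ?_)
    · obtain ⟨d, hd, -⟩ := main x hx
      exact hd.continuousAt.continuousWithinAt
    · obtain ⟨d, hd, hneg⟩ := main x (by simpa using hx)
      rwa [hd.deriv]
  exact hanti ht₁ (ht₁.trans hlt) hlt
end

section
/- Let q₁ and q₂ be functions of class Q and let c_{[q₁,q₂]}(t) = ∫_{-∞}^{∞} e^{-q₁(v)}·e^{-q₂(t-v)} dv. Then every zero of the complex Fourier transform z ↦ ∫_{-∞}^{∞} c_{[q₁,q₂]}(t)·e^{izt} dt is real. -/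
open Polynomial

/-! ### Roots of balanced polynomials and Euler operators -/

namespace DeBruijn

/-- The polynomials to which the circle argument applies: degree `2 * N`, extreme coefficients
of equal nonzero modulus (so that the roots have product of modulus `1`), and all roots in the
closed disc of radius `R`. -/
structure Balanced (N : ℕ) (R : ℝ) (p : ℂ[X]) : Prop where
  natDegree_eq : p.natDegree = 2 * N
  norm_coeff : ‖p.coeff 0‖ = ‖p.coeff (2 * N)‖
  coeff_ne : p.coeff (2 * N) ≠ 0
  root_le : ∀ ρ : ℂ, p.eval ρ = 0 → ‖ρ‖ ≤ R

/-- The centred Euler operator `x d/dx - N`, shifted by `a`. -/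
noncomputable def euler (N : ℕ) (a : ℂ) (p : ℂ[X]) : ℂ[X] :=
  X * derivative p - C ((N : ℂ) + a) * p

theorem euler_coeff (N : ℕ) (a : ℂ) (p : ℂ[X]) (j : ℕ) :
    (euler N a p).coeff j = ((j : ℂ) - N - a) * p.coeff j := by
  unfold euler
  rw [coeff_sub, coeff_C_mul]
  cases j with
  | zero => simp; ring
  | succ j =>
    rw [coeff_X_mul, coeff_derivative]
    push_cast
    ring

theorem Balanced.ne_zero {N : ℕ} {R : ℝ} {p : ℂ[X]} (h : Balanced N R p) : p ≠ 0 := by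
  rintro rfl
  exact h.coeff_ne (by simp)

theorem Balanced.prod_norm_roots {N : ℕ} {R : ℝ} {p : ℂ[X]} (h : Balanced N R p) :
    (p.roots.map (fun ρ => ‖ρ‖)).prod = 1 := by
  have h0 := (IsAlgClosed.splits p).coeff_zero_eq_leadingCoeff_mul_prod_roots
  have h1 := congrArg norm h0
  rw [norm_mul, norm_mul, norm_pow, norm_neg, norm_one, one_pow, one_mul, h.norm_coeff,
    leadingCoeff, h.natDegree_eq] at h1
  have h2 : ‖p.roots.prod‖ = 1 := by
    have : ‖p.coeff (2 * N)‖ ≠ 0 := by simpa using h.coeff_ne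
    field_simp at h1
    exact h1.symm
  rw [← h2]
  exact (Multiset.prod_hom p.roots (normHom : ℂ →*₀ ℝ))

theorem Balanced.card_roots {N : ℕ} {R : ℝ} {p : ℂ[X]} (h : Balanced N R p) :
    Multiset.card p.roots = 2 * N := by
  rw [← h.natDegree_eq, (IsAlgClosed.splits p).natDegree_eq_card_roots]

theorem Balanced.exists_root_lt {N : ℕ} {R : ℝ} {p : ℂ[X]} (h : Balanced N R p)
    (hN : 0 < N) (hR : 1 < R) : ∃ ρ ∈ p.roots, ‖ρ‖ < R := by
  by_contra! hcon
  have h1 : p.roots.map (fun ρ => ‖ρ‖) = p.roots.map (fun _ => R) := by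
    refine Multiset.map_congr rfl fun ρ hρ => le_antisymm (h.root_le ρ ?_) (hcon ρ hρ)
    exact (mem_roots'.1 hρ).2
  have h2 := h.prod_norm_roots
  rw [h1, Multiset.map_const', Multiset.prod_replicate, h.card_roots] at h2
  exact (one_lt_pow₀ hR (by omega : 2 * N ≠ 0)).ne.symm h2

/-- `Re (w / (w - ρ)) - 1/2` has the sign of `‖w‖ - ‖ρ‖`. -/
theorem re_div_sub {w ρ : ℂ} (h : w ≠ ρ) :
    (w * (1 / (w - ρ))).re = 1 / 2 + (‖w‖ ^ 2 - ‖ρ‖ ^ 2) / (2 * ‖w - ρ‖ ^ 2) := by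
  have h0 : Complex.normSq (w - ρ) ≠ 0 := by simpa [sub_eq_zero] using h
  rw [← Complex.normSq_eq_norm_sq, ← Complex.normSq_eq_norm_sq, ← Complex.normSq_eq_norm_sq]
  rw [mul_one_div, Complex.div_re]
  field_simp
  simp only [Complex.normSq_apply, Complex.sub_re, Complex.sub_im]
  ring

/-- On and outside the circle of radius `R`, the centred logarithmic derivative of a balanced
polynomial has strictly positive real part. -/
theorem Balanced.re_log_deriv {N : ℕ} {R : ℝ} {p : ℂ[X]} (h : Balanced N R p)
    (hN : 0 < N) (hR : 1 < R) {w : ℂ} (hw : R ≤ ‖w‖) (hpw : p.eval w ≠ 0) :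
    (N : ℝ) < (w * (p.derivative.eval w / p.eval w)).re := by
  rw [(IsAlgClosed.splits p).eval_derivative_div_eval_of_ne_zero hpw,
    ← Multiset.sum_map_mul_left]
  have e : (p.roots.map fun ρ => w * (1 / (w - ρ))).sum.re
      = (p.roots.map fun ρ => (w * (1 / (w - ρ))).re).sum := by
    rw [← Complex.coe_reAddGroupHom, map_multiset_sum, Multiset.map_map]
    rfl
  rw [e]
  have e2 : (N : ℝ) = (p.roots.map fun _ => (1 / 2 : ℝ)).sum := by
    rw [Multiset.map_const', Multiset.sum_replicate, h.card_roots]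
    simp
    ring
  rw [e2]
  have hne : ∀ ρ ∈ p.roots, w ≠ ρ := by
    rintro ρ hρ rfl
    exact hpw (mem_roots'.1 hρ).2
  have hpos : ∀ ρ ∈ p.roots, 0 < ‖w - ρ‖ := fun ρ hρ =>
    norm_pos_iff.2 (sub_ne_zero.2 (hne ρ hρ))
  refine Multiset.sum_lt_sum (fun ρ hρ => ?_) ?_
  · rw [re_div_sub (hne ρ hρ)]
    have h1 : ‖ρ‖ ≤ R := h.root_le ρ (mem_roots'.1 hρ).2
    have h2 : 0 ≤ ‖w‖ ^ 2 - ‖ρ‖ ^ 2 := by nlinarith [norm_nonneg ρ]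
    have h3 := hpos ρ hρ
    have : 0 ≤ (‖w‖ ^ 2 - ‖ρ‖ ^ 2) / (2 * ‖w - ρ‖ ^ 2) := by positivity
    linarith
  · obtain ⟨ρ, hρ, hlt⟩ := h.exists_root_lt hN hR
    refine ⟨ρ, hρ, ?_⟩
    rw [re_div_sub (hne ρ hρ)]
    have h2 : 0 < ‖w‖ ^ 2 - ‖ρ‖ ^ 2 := by nlinarith [norm_nonneg ρ]
    have h3 := hpos ρ hρ
    have : 0 < (‖w‖ ^ 2 - ‖ρ‖ ^ 2) / (2 * ‖w - ρ‖ ^ 2) := by positivity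
    linarith

theorem Balanced.euler_eval_ne {N : ℕ} {R : ℝ} {p : ℂ[X]} (h : Balanced N R p)
    (hN : 0 < N) (hR : 1 < R) {a : ℂ} (ha : a.re = 0) {w : ℂ} (hw : R ≤ ‖w‖)
    (hpw : p.eval w ≠ 0) : (euler N a p).eval w ≠ 0 := by
  intro h0
  have h1 := h.re_log_deriv hN hR hw hpw
  have h2 : w * (p.derivative.eval w / p.eval w) = N + a := by
    simp only [euler, eval_sub, eval_mul, eval_X, eval_C] at h0
    field_simp
    linear_combination h0
  rw [h2] at h1
  simp [ha] at h1

theorem Balanced.balanced_euler {N : ℕ} {R : ℝ} {p : ℂ[X]} (h : Balanced N R p)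
    (hN : 0 < N) (hR : 1 < R) {a : ℂ} (ha : a.re = 0) : Balanced N R (euler N a p) := by
  have hN' : (0 : ℝ) < N := by exact_mod_cast hN
  have hc : (euler N a p).coeff (2 * N) ≠ 0 := by
    rw [euler_coeff]
    refine mul_ne_zero (fun h0 => ?_) h.coeff_ne
    have := congrArg Complex.re h0
    simp [ha] at this
    linarith
  refine ⟨le_antisymm ?_ (le_natDegree_of_ne_zero hc), ?_, hc, fun ρ hρ => ?_⟩
  · refine natDegree_le_iff_coeff_eq_zero.2 fun j hj => ?_
    rw [euler_coeff, coeff_eq_zero_of_natDegree_lt (by rw [h.natDegree_eq]; exact hj), mul_zero]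
  · rw [euler_coeff, euler_coeff, norm_mul, norm_mul, h.norm_coeff]
    congr 1
    rw [← sq_eq_sq₀ (norm_nonneg _) (norm_nonneg _), ← Complex.normSq_eq_norm_sq,
      ← Complex.normSq_eq_norm_sq, Complex.normSq_apply, Complex.normSq_apply]
    simp [ha]
    ring
  · by_contra! hlt
    exact h.euler_eval_ne hN hR ha hlt.le
      (fun h0 => absurd (h.root_le ρ h0) (not_le.2 hlt)) hρ

/-- At a boundary point of the disc, a zero of `euler N a p` can only come from a zero of `p`, and
the multiplicity drops by one. -/
theorem Balanced.dvd_of_dvd_euler {N : ℕ} {R : ℝ} {p : ℂ[X]} (h : Balanced N R p)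
    (hN : 0 < N) (hR : 1 < R) {a : ℂ} (ha : a.re = 0) {w : ℂ} (hw : ‖w‖ = R) {j : ℕ}
    (hj : 0 < j) (hd : (X - C w) ^ j ∣ euler N a p) : (X - C w) ^ (j + 1) ∣ p := by
  have hp := h.ne_zero
  have hroot : p.eval w = 0 := by
    by_contra hne
    refine h.euler_eval_ne hN hR ha hw.ge hne ?_
    exact dvd_iff_isRoot.1 ((dvd_pow_self _ hj.ne').trans hd)
  obtain ⟨g, hg, hg0⟩ := exists_eq_pow_rootMultiplicity_mul_and_not_dvd p hp w
  set k := p.rootMultiplicity w with hk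
  have hkpos : 0 < k := (rootMultiplicity_pos hp).2 hroot
  by_contra hnd
  have hkj : k ≤ j := by
    by_contra! hlt
    exact hnd ((pow_dvd_pow _ hlt).trans (Dvd.intro g hg.symm))
  have hd' : (X - C w) ^ k ∣ euler N a p := (pow_dvd_pow _ hkj).trans hd
  have hd2 : (X - C w) ^ k ∣ X * derivative p := by
    have : X * derivative p = euler N a p + C ((N : ℂ) + a) * p := by
      simp [euler]
    rw [this]
    exact dvd_add hd' (Dvd.dvd.mul_left (Dvd.intro g hg.symm) _)
  have hw0 : w ≠ 0 := by
    rintro rfl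
    simp at hw
    linarith
  have hcop : IsCoprime ((X - C w) ^ k) (X : ℂ[X]) := by
    refine IsCoprime.pow_left ?_
    have := pairwise_coprime_X_sub_C (K := ℂ) Function.injective_id hw0
    simpa [Function.onFun] using this
  have hd3 : (X - C w) ^ k ∣ derivative p := hcop.dvd_of_dvd_mul_left hd2
  have hder0 : derivative p ≠ 0 := by
    intro h0
    have := derivative_eq_zero.1 h0
    rw [h.natDegree_eq] at this
    omega
  have h4 := (le_rootMultiplicity_iff hder0).2 hd3
  rw [derivative_rootMultiplicity_of_root hroot, ← hk] at h4
  omega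

/-- The operator `∏ (x d/dx - N - a)`, over a multiset of purely imaginary `a`, lowers the
multiplicity of a boundary zero by the number of factors. -/
theorem exists_iterate_euler {N : ℕ} {R : ℝ} (hN : 0 < N) (hR : 1 < R) {w : ℂ} (hw : ‖w‖ = R)
    (s : Multiset ℂ) : ∀ p : ℂ[X], Balanced N R p → (∀ a ∈ s, a.re = 0) →
    ∃ g : ℂ[X], (∀ j : ℕ, g.coeff j = (s.map fun a => (j : ℂ) - N - a).prod * p.coeff j) ∧
      ∀ j : ℕ, 0 < j → (X - C w) ^ j ∣ g → (X - C w) ^ (j + Multiset.card s) ∣ p := by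
  induction s using Multiset.induction_on with
  | empty => exact fun p _ _ => ⟨p, by simp, by simp⟩
  | cons a s ih =>
    intro p hp hs
    have ha : a.re = 0 := hs a (by simp)
    obtain ⟨g, hg, hgd⟩ := ih (euler N a p) (hp.balanced_euler hN hR ha)
      (fun b hb => hs b (by simp [hb]))
    refine ⟨g, fun j => ?_, fun j hj hd => ?_⟩
    · rw [hg, euler_coeff, Multiset.map_cons, Multiset.prod_cons]
      ring
    · rw [Multiset.card_cons, ← add_assoc]
      exact hp.dvd_of_dvd_euler hN hR ha hw (by omega) (hgd j hj hd)

/-- A balanced polynomial `p` with `(x - 1) p = (x + 1) A(x d/dx - N) p`, where `A` is a nonconstant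
polynomial with purely imaginary roots, has all its roots on the unit circle. -/
theorem roots_on_circle {N : ℕ} (hN : 0 < N) {p : ℂ[X]} (hdeg : p.natDegree = 2 * N)
    (hnorm : ‖p.coeff 0‖ = ‖p.coeff (2 * N)‖) (hc : p.coeff (2 * N) ≠ 0) (A : ℂ[X])
    (hA : 0 < A.natDegree) (hAr : ∀ a, A.eval a = 0 → a.re = 0)
    (h0 : -p.coeff 0 = A.eval (-(N : ℂ)) * p.coeff 0)
    (hrec : ∀ j : ℕ, p.coeff j - p.coeff (j + 1)
      = A.eval ((j : ℂ) - N) * p.coeff j + A.eval ((j : ℂ) + 1 - N) * p.coeff (j + 1)) :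
    ∀ ρ ∈ p.roots, ‖ρ‖ = 1 := by
  have hp0 : p ≠ 0 := by
    rintro rfl
    simp at hc
  have hle : ∀ ρ ∈ p.roots, ‖ρ‖ ≤ 1 := by
    by_contra! hcon
    obtain ⟨ρ₀, hρ₀, hgt₀⟩ := hcon
    obtain ⟨w, hwmem, hwmax⟩ := p.roots.toFinset.exists_max_image (fun ρ => ‖ρ‖)
      ⟨ρ₀, Multiset.mem_toFinset.2 hρ₀⟩
    have hR : 1 < ‖w‖ := hgt₀.trans_le (hwmax ρ₀ (Multiset.mem_toFinset.2 hρ₀))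
    have hbal : Balanced N ‖w‖ p := ⟨hdeg, hnorm, hc, fun ρ hρ =>
      hwmax ρ (Multiset.mem_toFinset.2 (mem_roots'.2 ⟨hp0, hρ⟩))⟩
    have hwroot : p.eval w = 0 := (mem_roots'.1 (Multiset.mem_toFinset.1 hwmem)).2
    have hA0 : A ≠ 0 := by
      rintro rfl
      simp at hA
    obtain ⟨g, hg, hgd⟩ := exists_iterate_euler hN hR rfl A.roots p hbal
      (fun a ha => hAr a (mem_roots'.1 ha).2)
    have hcard : 0 < Multiset.card A.roots := by
      rwa [← (IsAlgClosed.splits A).natDegree_eq_card_roots]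
    have hAg : ∀ j : ℕ, (C A.leadingCoeff * g).coeff j = A.eval ((j : ℂ) - N) * p.coeff j := by
      intro j
      rw [coeff_C_mul, hg, (IsAlgClosed.splits A).eval_eq_prod_roots, mul_assoc]
    have hid : (X - 1) * p = (X + 1) * (C A.leadingCoeff * g) := by
      ext j
      rw [sub_mul, add_mul, one_mul, one_mul, coeff_sub, coeff_add]
      cases j with
      | zero =>
        rw [hAg]
        simpa using h0
      | succ j =>
        rw [coeff_X_mul, coeff_X_mul, hAg, hAg]
        push_cast
        exact hrec j
    set k := p.rootMultiplicity w with hk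
    have hkpos : 0 < k := (rootMultiplicity_pos hp0).2 hwroot
    have hkd : (X - C w) ^ k ∣ (X + 1) * (C A.leadingCoeff * g) := by
      rw [← hid]
      exact Dvd.dvd.mul_left (pow_rootMultiplicity_dvd p w) _
    have hcop : IsCoprime ((X - C w) ^ k) (X + 1 : ℂ[X]) := by
      refine IsCoprime.pow_left ?_
      have hw1 : w ≠ -1 := by
        rintro rfl
        simp at hR
      have := pairwise_coprime_X_sub_C (K := ℂ) Function.injective_id hw1
      simpa [Function.onFun] using this
    have hd1 := hcop.dvd_of_dvd_mul_left hkd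
    have hd2 : (X - C w) ^ k ∣ g := by
      have hu : IsUnit (C A.leadingCoeff) :=
        isUnit_C.2 (isUnit_iff_ne_zero.2 (leadingCoeff_ne_zero.2 hA0))
      exact hu.dvd_mul_left.1 hd1
    have hd3 := (le_rootMultiplicity_iff hp0).2 (hgd k hkpos hd2)
    omega
  intro ρ hρ
  refine le_antisymm (hle ρ hρ) ?_
  have hbal : Balanced N 1 p := ⟨hdeg, hnorm, hc, fun ρ hρ => hle ρ (mem_roots'.2 ⟨hp0, hρ⟩)⟩
  have hprod := hbal.prod_norm_roots
  obtain ⟨s, hs⟩ := Multiset.exists_cons_of_mem hρ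
  rw [hs, Multiset.map_cons, Multiset.prod_cons] at hprod
  have hs1 : (s.map fun ρ => ‖ρ‖).prod ≤ (s.map fun _ => (1 : ℝ)).prod :=
    Multiset.prod_map_le_prod_map₀ _ _ (fun _ _ => norm_nonneg _)
      (fun b hb => hle b (by rw [hs]; simp [hb]))
  rw [Multiset.map_const', Multiset.prod_replicate, one_pow] at hs1
  rw [← hprod]
  exact mul_le_of_le_one_right (norm_nonneg _) hs1

end DeBruijn

/-! ### Trigonometric polynomials and discrete weights -/

namespace DeBruijn

theorem exp_mul_norm_sub_sq {ρ : ℂ} (hρ : ‖ρ‖ = 1) (x y : ℝ) :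
    (Real.exp (y / 2) * ‖Complex.exp (Complex.I * (x + y * Complex.I)) - ρ‖) ^ 2
      = 2 * Real.cosh y - 2 * (Real.cos x * ρ.re + Real.sin x * ρ.im) := by
  have h1 : ρ.re * ρ.re + ρ.im * ρ.im = 1 := by
    have := Complex.normSq_eq_norm_sq ρ
    rw [hρ, Complex.normSq_apply] at this
    linarith
  have h2 : Complex.I * (x + y * Complex.I) = ((-y : ℝ) : ℂ) + x * Complex.I := by
    push_cast
    linear_combination (y : ℂ) * Complex.I_mul_I
  have e1 : Real.exp (y / 2) ^ 2 = Real.exp y := by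
    rw [← Real.exp_nat_mul]
    congr 1
    push_cast
    ring
  have e2 : Real.exp y * Real.exp (-y) = 1 := by
    rw [← Real.exp_add]
    simp
  rw [h2, mul_pow, e1, ← Complex.normSq_eq_norm_sq, Complex.normSq_apply, Complex.sub_re,
    Complex.sub_im, Complex.exp_re, Complex.exp_im, Real.cosh_eq]
  have r1 : (((-y : ℝ) : ℂ) + x * Complex.I).re = -y := by simp
  have r2 : (((-y : ℝ) : ℂ) + x * Complex.I).im = x := by simp
  rw [r1, r2]
  linear_combination (Real.exp (-y) * (Real.cos x ^ 2 + Real.sin x ^ 2)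
    - 2 * (Real.cos x * ρ.re + Real.sin x * ρ.im)) * e2 + Real.exp y * h1
    + Real.exp (-y) * Real.cos_sq_add_sin_sq x

/-- The modulus of a trigonometric polynomial all of whose zeros are real is nondecreasing along
vertical lines away from the real axis. -/
theorem norm_trig_mono {N : ℕ} {p : ℂ[X]} (hdeg : p.natDegree = 2 * N)
    (hroots : ∀ ρ ∈ p.roots, ‖ρ‖ = 1) (x : ℝ) {y y' : ℝ} (hy : |y| ≤ |y'|) :
    ‖Complex.exp (-(N * (Complex.I * (x + y * Complex.I))))
        * p.eval (Complex.exp (Complex.I * (x + y * Complex.I)))‖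
      ≤ ‖Complex.exp (-(N * (Complex.I * (x + y' * Complex.I))))
        * p.eval (Complex.exp (Complex.I * (x + y' * Complex.I)))‖ := by
  have key : ∀ y : ℝ, ‖Complex.exp (-(N * (Complex.I * (x + y * Complex.I))))
        * p.eval (Complex.exp (Complex.I * (x + y * Complex.I)))‖
      = ‖p.leadingCoeff‖ * (p.roots.map fun ρ => Real.exp (y / 2) *
          ‖Complex.exp (Complex.I * (x + y * Complex.I)) - ρ‖).prod := by
    intro y
    rw [(IsAlgClosed.splits p).eval_eq_prod_roots, norm_mul, norm_mul, Complex.norm_exp,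
      Multiset.prod_map_mul, Multiset.map_const', Multiset.prod_replicate,
      ← (IsAlgClosed.splits p).natDegree_eq_card_roots, hdeg]
    have e1 : ‖(p.roots.map fun ρ => Complex.exp (Complex.I * (x + y * Complex.I)) - ρ).prod‖
        = (p.roots.map fun ρ => ‖Complex.exp (Complex.I * (x + y * Complex.I)) - ρ‖).prod := by
      have := Multiset.prod_hom
        (p.roots.map fun ρ => Complex.exp (Complex.I * (x + y * Complex.I)) - ρ)
        (normHom : ℂ →*₀ ℝ)
      rw [Multiset.map_map] at this
      exact this.symm
    have e2 : (-((N : ℂ) * (Complex.I * (x + y * Complex.I)))).re = ((2 * N : ℕ) : ℝ) * (y / 2) := by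
      simp
      ring
    rw [e1, e2, Real.exp_nat_mul]
    ring
  rw [key, key]
  refine mul_le_mul_of_nonneg_left ?_ (norm_nonneg _)
  refine Multiset.prod_map_le_prod_map₀ _ _ (fun _ _ => by positivity) (fun ρ hρ => ?_)
  refine le_of_sq_le_sq ?_ (by positivity)
  rw [exp_mul_norm_sub_sq (hroots ρ hρ), exp_mul_norm_sub_sq (hroots ρ hρ)]
  have := Real.cosh_le_cosh.2 hy
  linarith

/-- The discrete analogue of `exp (-q)`: the solution of
`w (n + 1) (1 + x (n + 1)) = w n (1 - x n)`, `w 0 = 1`, when no `1 + x (n + 1)` vanishes. -/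
noncomputable def weight (x : ℤ → ℝ) (n : ℕ) : ℝ :=
  ∏ i ∈ Finset.range n, (1 - x i) / (1 + x (i + 1))

theorem weight_succ (x : ℤ → ℝ) (n : ℕ) :
    weight x (n + 1) = weight x n * ((1 - x n) / (1 + x (n + 1))) := by
  rw [weight, Finset.prod_range_succ]
  rfl

/-- The generating polynomial `∑ weight x |j - N| X^j`, `0 ≤ j ≤ 2N`, of the weights extended evenly
to `-N, …, N`. -/
noncomputable def genPoly (x : ℤ → ℝ) (N : ℕ) : ℂ[X] :=
  ∑ j ∈ Finset.range (2 * N + 1), C ((weight x ((j : ℤ) - N).natAbs : ℝ) : ℂ) * X ^ j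

theorem weight_eq_zero {x : ℤ → ℝ} {N : ℕ} (hN : x N = 1) {n : ℕ} (hn : N < n) :
    weight x n = 0 :=
  Finset.prod_eq_zero (Finset.mem_range.2 hn) (by simp [hN])

theorem genPoly_coeff {x : ℤ → ℝ} {N : ℕ} (hN : x N = 1) (j : ℕ) :
    (genPoly x N).coeff j = ((weight x ((j : ℤ) - N).natAbs : ℝ) : ℂ) := by
  rw [genPoly, finsetSum_coeff]
  simp only [coeff_C_mul_X_pow]
  rw [Finset.sum_ite_eq]
  split_ifs with h
  · rfl
  · rw [Finset.mem_range] at h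
    rw [weight_eq_zero hN (by omega)]
    simp

/-- Since `x` is odd, the even extension of the weights satisfies the same recursion on all of `ℤ`. -/
theorem weight_rec {x : ℤ → ℝ} (hodd : ∀ n, x (-n) = -x n) (hx : ∀ n : ℕ, 0 ≤ x n) (n : ℤ) :
    weight x n.natAbs * (1 - x n) = weight x (n + 1).natAbs * (1 + x (n + 1)) := by
  have key : ∀ m : ℕ, weight x m * (1 - x m) = weight x (m + 1) * (1 + x (m + 1)) := by
    intro m
    have : 0 ≤ x ((m : ℤ) + 1) := by exact_mod_cast hx (m + 1)
    rw [weight_succ]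
    field_simp
  rcases le_or_gt 0 n with h | h
  · obtain ⟨m, rfl⟩ := Int.eq_ofNat_of_zero_le h
    exact key m
  · obtain ⟨m, hm⟩ := Int.eq_ofNat_of_zero_le (by omega : 0 ≤ -(n + 1))
    have hn : n = -((m : ℤ) + 1) := by omega
    have e1 : n.natAbs = m + 1 := by omega
    have e2 : (n + 1).natAbs = m := by omega
    have e3 : n + 1 = -(m : ℤ) := by omega
    rw [e1, e2, e3, hn, hodd, hodd]
    have := key m
    linarith

theorem weight_pos {x : ℤ → ℝ} {N : ℕ} (hx : ∀ n : ℕ, 0 ≤ x n) (hlt : ∀ n : ℕ, n < N → x n < 1)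
    {n : ℕ} (hn : n ≤ N) : 0 < weight x n := by
  refine Finset.prod_pos fun i hi => ?_
  have h1 := hlt i (by have := Finset.mem_range.1 hi; omega)
  have h2 : 0 ≤ x ((i : ℤ) + 1) := by exact_mod_cast hx (i + 1)
  have h3 : 0 < 1 - x i := by linarith
  positivity

theorem weight_nonneg {x : ℤ → ℝ} {N : ℕ} (hx : ∀ n : ℕ, 0 ≤ x n)
    (hlt : ∀ n : ℕ, n < N → x n < 1) (hN : x N = 1) (n : ℕ) : 0 ≤ weight x n := by
  rcases le_or_gt n N with h | h
  · exact (weight_pos hx hlt h).le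
  · rw [weight_eq_zero hN h]

theorem genPoly_natDegree {x : ℤ → ℝ} {N : ℕ} (hx : ∀ n : ℕ, 0 ≤ x n)
    (hlt : ∀ n : ℕ, n < N → x n < 1) (hN : x N = 1) : (genPoly x N).natDegree = 2 * N := by
  refine le_antisymm (natDegree_le_iff_coeff_eq_zero.2 fun j hj => ?_)
    (le_natDegree_of_ne_zero ?_)
  · rw [genPoly_coeff hN, weight_eq_zero hN (by omega)]
    simp
  · rw [genPoly_coeff hN, show (((2 * N : ℕ) : ℤ) - N).natAbs = N by omega]
    exact_mod_cast (weight_pos hx hlt le_rfl).ne.symm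

/-- The recursion for the weights is the coefficientwise form of
`(X - 1) p = (X + 1) A(x d/dx - N) p`, where `A` interpolates `x`. -/
theorem genPoly_roots {x : ℤ → ℝ} {N : ℕ} (hN0 : 0 < N) (hodd : ∀ n, x (-n) = -x n)
    (hx : ∀ n : ℕ, 0 ≤ x n) (hlt : ∀ n : ℕ, n < N → x n < 1) (hN : x N = 1)
    (A : ℂ[X]) (hA : 0 < A.natDegree) (hAr : ∀ a, A.eval a = 0 → a.re = 0)
    (hAx : ∀ n : ℤ, A.eval (n : ℂ) = (x n : ℂ)) :
    ∀ ρ ∈ (genPoly x N).roots, ‖ρ‖ = 1 := by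
  refine roots_on_circle hN0 (genPoly_natDegree hx hlt hN) ?_ ?_ A hA hAr ?_ fun j => ?_
  · rw [genPoly_coeff hN, genPoly_coeff hN, show (((0 : ℕ) : ℤ) - N).natAbs = N by omega,
      show (((2 * N : ℕ) : ℤ) - N).natAbs = N by omega]
  · rw [genPoly_coeff hN, show (((2 * N : ℕ) : ℤ) - N).natAbs = N by omega]
    exact_mod_cast (weight_pos hx hlt le_rfl).ne'
  · have := hAx (-(N : ℤ))
    rw [hodd, hN] at this
    push_cast at this
    rw [this]
    simp
  · have h1 := hAx ((j : ℤ) - N)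
    have h2 := hAx ((j : ℤ) + 1 - N)
    push_cast at h1 h2
    rw [h1, h2, genPoly_coeff hN, genPoly_coeff hN]
    have h3 := weight_rec hodd hx ((j : ℤ) - N)
    have e : (j : ℤ) - N + 1 = (j : ℤ) + 1 - N := by ring
    rw [e] at h3
    push_cast
    have h4 := congrArg (fun r : ℝ => (r : ℂ)) h3
    push_cast at h4
    linear_combination h4

end DeBruijn

/-! ### Comparison of the discrete weights with the exponential -/

namespace DeBruijn

/-- An even potential `Q` with derivative `P`, encoded by the slope inequalities that hold because
`P` is increasing on `[0, ∞)`. -/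
structure Potential (Q P : ℝ → ℝ) : Prop where
  contQ : Continuous Q
  contP : Continuous P
  zeroQ : Q 0 = 0
  evenQ : ∀ t, Q (-t) = Q t
  oddP : ∀ t, P (-t) = -P t
  strictP : ∀ a b, 0 ≤ a → a < b → P a < P b
  slope_ge : ∀ a b, 0 ≤ a → a ≤ b → (b - a) * P a ≤ Q b - Q a
  slope_le : ∀ a b, 0 ≤ a → a ≤ b → Q b - Q a ≤ (b - a) * P b

/-- The samples `(h / 2) P(nh)` from which the discrete weights are built. -/
noncomputable def sample (P : ℝ → ℝ) (h : ℝ) (n : ℤ) : ℝ := h / 2 * P (n * h)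

variable {Q P : ℝ → ℝ} {h : ℝ}

theorem Potential.zeroP (H : Potential Q P) : P 0 = 0 := by
  have := H.oddP 0
  simp at this
  linarith

theorem Potential.monoP (H : Potential Q P) (a b : ℝ) (ha : 0 ≤ a) (hab : a ≤ b) : P a ≤ P b := by
  rcases hab.eq_or_lt with rfl | hlt
  · exact le_rfl
  · exact (H.strictP a b ha hlt).le

theorem Potential.nonnegP (H : Potential Q P) {t : ℝ} (ht : 0 ≤ t) : 0 ≤ P t := by
  have := H.monoP 0 t le_rfl ht
  rwa [H.zeroP] at this

theorem Potential.sample_nonneg (H : Potential Q P) (hh : 0 < h) (n : ℕ) :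
    0 ≤ sample P h n := by
  have := H.nonnegP (t := ((n : ℤ) : ℝ) * h) (by positivity)
  unfold sample
  positivity

theorem Potential.sample_mono (H : Potential Q P) (hh : 0 < h) {m n : ℕ} (hmn : m ≤ n) :
    sample P h m ≤ sample P h n := by
  unfold sample
  refine mul_le_mul_of_nonneg_left (H.monoP _ _ (by positivity) ?_) (by positivity)
  have : (m : ℝ) ≤ n := by exact_mod_cast hmn
  push_cast
  nlinarith

theorem Potential.sample_odd (H : Potential Q P) (n : ℤ) : sample P h (-n) = -sample P h n := by
  unfold sample
  push_cast
  rw [neg_mul, H.oddP]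
  ring

theorem Potential.sample_slope (H : Potential Q P) (hh : 0 < h) (n : ℕ) :
    2 * sample P h n ≤ Q ((n + 1) * h) - Q (n * h) ∧
      Q ((n + 1) * h) - Q (n * h) ≤ 2 * sample P h (n + 1) := by
  have h1 := H.slope_ge (n * h) ((n + 1) * h) (by positivity) (by nlinarith)
  have h2 := H.slope_le (n * h) ((n + 1) * h) (by positivity) (by nlinarith)
  have e : ((n : ℝ) + 1) * h - n * h = h := by ring
  rw [e] at h1 h2
  unfold sample
  push_cast
  constructor <;> linarith

/-- A crude bound, uniform in the mesh, that serves for domination. -/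
theorem Potential.weight_le (H : Potential Q P) (hh : 0 < h) {N : ℕ}
    (hN : sample P h N = 1) (n : ℕ) (hn : n ≤ N) :
    weight (sample P h) n ≤ Real.exp (-(Q (n * h) / 4)) := by
  induction n with
  | zero => simp [weight, H.zeroQ]
  | succ n ih =>
    have hx0 := H.sample_nonneg hh n
    have hx1 : 0 ≤ sample P h ((n : ℤ) + 1) := by exact_mod_cast H.sample_nonneg hh (n + 1)
    have hx2 : sample P h ((n : ℤ) + 1) ≤ 1 := by
      rw [← hN]
      exact_mod_cast H.sample_mono hh hn
    have hs := (H.sample_slope hh n).2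
    set u := sample P h ((n : ℤ) + 1)
    have hstep : (1 - sample P h n) / (1 + u) ≤ Real.exp (-(u / 2)) := by
      rw [div_le_iff₀ (by positivity)]
      have := Real.add_one_le_exp (-(u / 2))
      nlinarith
    rw [weight_succ]
    calc weight (sample P h) n * ((1 - sample P h n) / (1 + u))
        ≤ weight (sample P h) n * Real.exp (-(u / 2)) := by
          refine mul_le_mul_of_nonneg_left hstep (Finset.prod_nonneg fun i hi => ?_)
          have h1 : 0 ≤ 1 - sample P h i := by
            rw [sub_nonneg, ← hN]
            exact H.sample_mono hh (by have := Finset.mem_range.1 hi; omega)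
          have h2 : 0 ≤ sample P h ((i : ℤ) + 1) := by exact_mod_cast H.sample_nonneg hh (i + 1)
          positivity
      _ ≤ Real.exp (-(Q (n * h) / 4)) * Real.exp (-(u / 2)) :=
          mul_le_mul_of_nonneg_right (ih (by omega)) (Real.exp_nonneg _)
      _ ≤ Real.exp (-(Q ((n + 1 : ℕ) * h) / 4)) := by
          rw [← Real.exp_add, Real.exp_le_exp]
          push_cast
          linarith

/-- The trapezoidal sums of `P` approximate `Q`. -/
theorem Potential.trapezoid (H : Potential Q P) (hh : 0 < h) (n : ℕ) :
    Q (n * h) - sample P h n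
        ≤ ∑ i ∈ Finset.range n, (sample P h i + sample P h ((i : ℤ) + 1)) ∧
      ∑ i ∈ Finset.range n, (sample P h i + sample P h ((i : ℤ) + 1))
        ≤ Q (n * h) + sample P h n := by
  induction n with
  | zero => simp [H.zeroQ, sample, H.zeroP]
  | succ n ih =>
    have hs := H.sample_slope hh n
    rw [Finset.sum_range_succ]
    push_cast
    constructor <;> linarith [ih.1, ih.2, hs.1, hs.2]

/-- Two-sided bounds that become sharp as the sample at `n` tends to zero. -/
theorem Potential.weight_bounds (H : Potential Q P) (hh : 0 < h) (n : ℕ)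
    (hn : sample P h n ≤ 1 / 2) :
    Real.exp (-((1 + 2 * sample P h n) * (Q (n * h) + sample P h n)))
        ≤ weight (sample P h) n ∧
      weight (sample P h) n
        ≤ Real.exp (-((1 - sample P h n) * (Q (n * h) - sample P h n))) := by
  have hδ := H.sample_nonneg hh n
  obtain ⟨t1, t2⟩ := H.trapezoid hh n
  have hb : ∀ i ∈ Finset.range n, 0 ≤ sample P h i ∧ sample P h i ≤ sample P h n ∧
      0 ≤ sample P h ((i : ℤ) + 1) ∧ sample P h ((i : ℤ) + 1) ≤ sample P h n := by
    intro i hi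
    have hi' := Finset.mem_range.1 hi
    exact ⟨H.sample_nonneg hh i, H.sample_mono hh hi'.le,
      by exact_mod_cast H.sample_nonneg hh (i + 1), by exact_mod_cast H.sample_mono hh hi'⟩
  set δ := sample P h n
  constructor
  · calc Real.exp (-((1 + 2 * δ) * (Q (n * h) + δ)))
        ≤ Real.exp (∑ i ∈ Finset.range n,
            -((1 + 2 * δ) * (sample P h i + sample P h ((i : ℤ) + 1)))) := by
          rw [Real.exp_le_exp, Finset.sum_neg_distrib, ← Finset.mul_sum]
          nlinarith
      _ ≤ weight (sample P h) n := by
          rw [Real.exp_sum]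
          refine Finset.prod_le_prod (fun _ _ => Real.exp_nonneg _) fun i hi => ?_
          obtain ⟨a1, a2, b1, b2⟩ := hb i hi
          set a := sample P h i
          set b := sample P h ((i : ℤ) + 1)
          have ha : Real.exp (-((1 + 2 * δ) * a)) ≤ 1 - a := by
            rw [Real.exp_neg, inv_le_iff_one_le_mul₀ (Real.exp_pos _)]
            have h1 := Real.add_one_le_exp ((1 + 2 * δ) * a)
            have h2 : 1 ≤ (1 - a) * ((1 + 2 * δ) * a + 1) := by
              have : (1 + 2 * δ) * a ≤ 2 * δ := by nlinarith
              nlinarith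
            exact h2.trans (mul_le_mul_of_nonneg_left h1 (by linarith))
          have hb' : Real.exp (-((1 + 2 * δ) * b)) ≤ (1 + b)⁻¹ := by
            rw [Real.exp_neg]
            refine inv_anti₀ (by positivity) ?_
            have h1 := Real.add_one_le_exp ((1 + 2 * δ) * b)
            nlinarith
          rw [mul_add, neg_add, Real.exp_add, div_eq_mul_inv]
          exact mul_le_mul ha hb' (Real.exp_nonneg _) (by linarith)
  · calc weight (sample P h) n
        ≤ Real.exp (∑ i ∈ Finset.range n,
            -((1 - δ) * (sample P h i + sample P h ((i : ℤ) + 1)))) := by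
          rw [Real.exp_sum]
          refine Finset.prod_le_prod (fun i hi => ?_) fun i hi => ?_
          · obtain ⟨a1, a2, b1, b2⟩ := hb i hi
            have : 0 ≤ 1 - sample P h i := by linarith
            positivity
          obtain ⟨a1, a2, b1, b2⟩ := hb i hi
          set a := sample P h i
          set b := sample P h ((i : ℤ) + 1)
          have ha : 1 - a ≤ Real.exp (-((1 - δ) * a)) := by
            have h1 := Real.add_one_le_exp (-((1 - δ) * a))
            nlinarith
          have hb' : (1 + b)⁻¹ ≤ Real.exp (-((1 - δ) * b)) := by
            rw [inv_le_iff_one_le_mul₀ (by positivity)]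
            have h1 := Real.add_one_le_exp (-((1 - δ) * b))
            have h2 : 1 ≤ (-((1 - δ) * b) + 1) * (1 + b) := by
              have : (1 - δ) * b ≤ δ := by nlinarith
              nlinarith
            exact h2.trans (mul_le_mul_of_nonneg_right h1 (by linarith))
          rw [mul_add, neg_add, Real.exp_add, div_eq_mul_inv]
          exact mul_le_mul ha hb' (by positivity) (Real.exp_nonneg _)
      _ ≤ Real.exp (-((1 - δ) * (Q (n * h) - δ))) := by
          rw [Real.exp_le_exp, Finset.sum_neg_distrib, ← Finset.mul_sum]
          nlinarith

end DeBruijn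

/-! ### Passage to the limit of vanishing mesh -/

namespace DeBruijn

open MeasureTheory Filter Topology

/-- The step function whose integral is `h ∑ₙ w(|n|) e^{iznh}`. -/
noncomputable def stepFn (P : ℝ → ℝ) (h : ℝ) (z : ℂ) (t : ℝ) : ℂ :=
  ((weight (sample P h) ⌊t / h⌋.natAbs : ℝ) : ℂ)
    * Complex.exp (Complex.I * z * ((⌊t / h⌋ * h : ℝ) : ℂ))

theorem integral_floor (G : ℤ → ℂ) (N : ℕ) (hG : ∀ n : ℤ, N < n.natAbs → G n = 0) :
    ∫ u : ℝ, G ⌊u⌋ = ∑ j ∈ Finset.range (2 * N + 1), G ((j : ℤ) - N) := by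
  have e : (fun u : ℝ => G ⌊u⌋) = fun u : ℝ => ∑ j ∈ Finset.range (2 * N + 1),
      (Set.Ico (((j : ℤ) - N : ℤ) : ℝ) (((j : ℤ) - N : ℤ) + 1)).indicator
        (fun _ => G ((j : ℤ) - N)) u := by
    funext u
    have hmem : ∀ n : ℤ, u ∈ Set.Ico (n : ℝ) (n + 1) ↔ ⌊u⌋ = n := fun n =>
      Int.floor_eq_iff.symm
    simp only [Set.indicator_apply, hmem]
    by_cases hu : ⌊u⌋.natAbs ≤ N
    · rw [Finset.sum_eq_single (⌊u⌋ + N).toNat]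
      · have : (((⌊u⌋ + N).toNat : ℕ) : ℤ) - N = ⌊u⌋ := by omega
        rw [this, if_pos rfl]
      · intro j _ hj
        rw [if_neg]
        omega
      · intro hj
        exact absurd (Finset.mem_range.2 (by omega)) hj
    · rw [hG _ (by omega), Finset.sum_eq_zero]
      intro j hj
      have := Finset.mem_range.1 hj
      rw [if_neg]
      omega
  rw [e, integral_finsetSum]
  · refine Finset.sum_congr rfl fun j _ => ?_
    rw [integral_indicator measurableSet_Ico, setIntegral_const]
    simp [Measure.real]
  · intro j _
    exact (integrable_indicator_iff measurableSet_Ico).2 (integrableOn_const (by simp))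

theorem integral_stepFn {P : ℝ → ℝ} {h : ℝ} (hh : 0 < h) {N : ℕ} (hN : sample P h N = 1)
    (z : ℂ) : ∫ t, stepFn P h z t = h * (Complex.exp (-(N * (Complex.I * (z * h))))
      * (genPoly (sample P h) N).eval (Complex.exp (Complex.I * (z * h)))) := by
  set G : ℤ → ℂ := fun n => ((weight (sample P h) n.natAbs : ℝ) : ℂ)
    * Complex.exp (Complex.I * z * ((n * h : ℝ) : ℂ)) with hGdef
  have e1 : ∫ t, stepFn P h z t = ∫ t : ℝ, (fun u : ℝ => G ⌊u⌋) (t / h) := rfl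
  rw [e1, Measure.integral_comp_div (fun u : ℝ => G ⌊u⌋) h, abs_of_pos hh,
    integral_floor G N, genPoly, eval_finsetSum, Finset.mul_sum, Complex.real_smul]
  · congr 1
    refine Finset.sum_congr rfl fun j _ => ?_
    simp only [hGdef, eval_mul, eval_C, eval_pow, eval_X]
    rw [← Complex.exp_nat_mul, mul_left_comm, ← Complex.exp_add]
    congr 2
    push_cast
    ring
  · intro n hn
    simp [hGdef, weight_eq_zero hN hn]

/-- Gaussian domination, uniform over points at distance at most one. -/
theorem dominate {k y τ t q : ℝ} (hk : 0 < k) (hq : k * τ ^ 2 - k ≤ q) (hτ : |τ - t| ≤ 1) :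
    Real.exp (-(q / 4)) * Real.exp (|y| * |τ|)
      ≤ Real.exp (k / 8 + k / 4 + 2 * y ^ 2 / k) * Real.exp (-(k / 16) * t ^ 2) := by
  rw [← Real.exp_add, ← Real.exp_add, Real.exp_le_exp]
  have h1 : |y| * |τ| ≤ k / 8 * τ ^ 2 + 2 * y ^ 2 / k := by
    have e : k / 8 * τ ^ 2 + 2 * y ^ 2 / k - |y| * |τ| = (k * |τ| - 4 * |y|) ^ 2 / (8 * k) := by
      rw [← sq_abs τ, ← sq_abs y]
      field_simp
      ring
    have : 0 ≤ (k * |τ| - 4 * |y|) ^ 2 / (8 * k) := by positivity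
    linarith
  have h2 : t ^ 2 ≤ 2 * τ ^ 2 + 2 := by
    have := abs_le.1 hτ
    nlinarith [sq_nonneg (2 * τ - t), sq_nonneg (τ - t)]
  nlinarith

theorem norm_exp_le (z : ℂ) (τ : ℝ) :
    ‖Complex.exp (Complex.I * z * (τ : ℂ))‖ ≤ Real.exp (|z.im| * |τ|) := by
  rw [Complex.norm_exp, Real.exp_le_exp, ← abs_mul]
  have : (Complex.I * z * (τ : ℂ)).re = -(z.im * τ) := by simp
  rw [this]
  exact neg_le_abs _

theorem floor_mul_sub {h : ℝ} (hh : 0 < h) (t : ℝ) : |⌊t / h⌋ * h - t| ≤ h := by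
  have h1 := Int.floor_le (t / h)
  have h2 := Int.lt_floor_add_one (t / h)
  rw [le_div_iff₀ hh] at h1
  rw [div_lt_iff₀ hh] at h2
  rw [abs_le]
  constructor <;> linarith

theorem Potential.abs_eq {Q P : ℝ → ℝ} (H : Potential Q P) (t : ℝ) : Q |t| = Q t := by
  rcases abs_choice t with h | h <;> rw [h]
  exact H.evenQ t

theorem natAbs_mul_eq {h : ℝ} (hh : 0 < h) (n : ℤ) : (n.natAbs : ℝ) * h = |n * h| := by
  rw [abs_mul, abs_of_pos hh, Nat.cast_natAbs, Int.cast_abs]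

theorem Potential.norm_stepFn_le {Q P : ℝ → ℝ} (H : Potential Q P) {k : ℝ} (hk : 0 < k)
    (hQ : ∀ t, k * t ^ 2 - k ≤ Q t) {h : ℝ} (hh : 0 < h) (hh1 : h ≤ 1) {N : ℕ}
    (hN : sample P h N = 1) (hlt : ∀ n : ℕ, n < N → sample P h n < 1) (z : ℂ) (t : ℝ) :
    ‖stepFn P h z t‖
      ≤ Real.exp (k / 8 + k / 4 + 2 * z.im ^ 2 / k) * Real.exp (-(k / 16) * t ^ 2) := by
  set n := ⌊t / h⌋ with hn
  rcases le_or_gt n.natAbs N with hle | hgt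
  · have h1 := H.weight_le hh hN _ hle
    rw [natAbs_mul_eq hh, H.abs_eq] at h1
    have h0 := weight_nonneg (H.sample_nonneg hh) hlt hN n.natAbs
    refine le_trans ?_ (dominate (y := z.im) hk (hQ (n * h)) ((floor_mul_sub hh t).trans hh1))
    rw [stepFn, norm_mul, Complex.norm_real, Real.norm_eq_abs, abs_of_nonneg h0]
    exact mul_le_mul h1 (norm_exp_le _ _) (norm_nonneg _) (Real.exp_nonneg _)
  · rw [stepFn, weight_eq_zero hN hgt]
    simp
    positivity

theorem Potential.tendsto_stepFn {Q P : ℝ → ℝ} (H : Potential Q P) {h : ℕ → ℝ}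
    (hh : ∀ i, 0 < h i) (hlim : Tendsto h atTop (𝓝 0)) (z : ℂ) (t : ℝ) :
    Tendsto (fun i => stepFn P (h i) z t) atTop
      (𝓝 (((Real.exp (-Q t) : ℝ) : ℂ) * Complex.exp (Complex.I * z * t))) := by
  have hτ : Tendsto (fun i => ⌊t / h i⌋ * h i) atTop (𝓝 t) := by
    rw [tendsto_iff_dist_tendsto_zero]
    refine squeeze_zero (fun _ => dist_nonneg) (fun i => ?_) hlim
    rw [Real.dist_eq]
    exact floor_mul_sub (hh i) t
  have hσ : Tendsto (fun i => sample P (h i) (⌊t / h i⌋.natAbs : ℕ)) atTop (𝓝 0) := by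
    have h1 : Tendsto (fun i => h i / 2 * P |⌊t / h i⌋ * h i|) atTop (𝓝 (0 / 2 * P |t|)) :=
      (hlim.div_const 2).mul ((H.contP.tendsto _).comp hτ.abs)
    rw [zero_div, zero_mul] at h1
    refine h1.congr fun i => ?_
    rw [sample, ← natAbs_mul_eq (hh i)]
    simp
  have hQl : Tendsto (fun i => Q ((⌊t / h i⌋.natAbs : ℕ) * h i)) atTop (𝓝 (Q t)) := by
    refine ((H.contQ.tendsto t).comp hτ).congr fun i => ?_
    rw [natAbs_mul_eq (hh i), H.abs_eq]
    rfl
  have hw : Tendsto (fun i => weight (sample P (h i)) ⌊t / h i⌋.natAbs) atTop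
      (𝓝 (Real.exp (-Q t))) := by
    have hsmall : ∀ᶠ i in atTop, sample P (h i) (⌊t / h i⌋.natAbs : ℕ) ≤ 1 / 2 :=
      hσ.eventually (eventually_le_nhds (by norm_num))
    refine tendsto_of_tendsto_of_tendsto_of_le_of_le'
      (g := fun i => Real.exp (-((1 + 2 * sample P (h i) (⌊t / h i⌋.natAbs : ℕ))
        * (Q ((⌊t / h i⌋.natAbs : ℕ) * h i) + sample P (h i) (⌊t / h i⌋.natAbs : ℕ)))))
      (h := fun i => Real.exp (-((1 - sample P (h i) (⌊t / h i⌋.natAbs : ℕ))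
        * (Q ((⌊t / h i⌋.natAbs : ℕ) * h i) - sample P (h i) (⌊t / h i⌋.natAbs : ℕ)))))
      ?_ ?_ ?_ ?_
    · have := (Real.continuous_exp.tendsto _).comp
        (((hσ.const_mul 2).const_add 1).mul (hQl.add hσ)).neg
      simpa [Function.comp_def] using this
    · have := (Real.continuous_exp.tendsto _).comp ((hσ.const_sub 1).mul (hQl.sub hσ)).neg
      simpa [Function.comp_def] using this
    · filter_upwards [hsmall] with i hi using (H.weight_bounds (hh i) _ hi).1
    · filter_upwards [hsmall] with i hi using (H.weight_bounds (hh i) _ hi).2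
  refine ((Complex.continuous_ofReal.tendsto _).comp hw).mul ?_
  refine (Complex.continuous_exp.tendsto _).comp (Tendsto.const_mul _ ?_)
  exact (Complex.continuous_ofReal.tendsto _).comp hτ

theorem measurable_stepFn (P : ℝ → ℝ) (h : ℝ) (z : ℂ) : Measurable (stepFn P h z) := by
  have hf : Measurable fun t : ℝ => ⌊t / h⌋ := Int.measurable_floor.comp (measurable_id.div_const h)
  have hG : Measurable fun n : ℤ => ((weight (sample P h) n.natAbs : ℝ) : ℂ)
    * Complex.exp (Complex.I * z * ((n * h : ℝ) : ℂ)) := measurable_from_top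
  exact hG.comp hf

theorem integrable_gauss {k : ℝ} (hk : 0 < k) (c : ℝ) :
    Integrable fun t : ℝ => c * Real.exp (-(k / 16) * t ^ 2) :=
  (integrable_exp_neg_mul_sq (by positivity)).const_mul c

/-- Mesh sizes with `(h / 2) P(Nh) = 1`, so that the weights vanish beyond `N`, and `h → 0`. -/
theorem Potential.exists_mesh {Q P : ℝ → ℝ} (H : Potential Q P) {k : ℝ} (hk : 0 < k)
    (hQ : ∀ t, k * t ^ 2 - k ≤ Q t) : ∃ h : ℕ → ℝ, (∀ i, 0 < h i) ∧
      Tendsto h atTop (𝓝 0) ∧ ∀ i : ℕ, sample P (h i) (i + 1 : ℕ) = 1 := by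
  have hex : ∀ i : ℕ, ∃ A : ℝ, 0 ≤ A ∧ A * P A = 2 * (i + 1) := by
    intro i
    have hP1 : 0 < P 1 := by
      have := H.strictP 0 1 le_rfl one_pos
      rwa [H.zeroP] at this
    set b : ℝ := 1 + 2 * (i + 1) / P 1 with hb
    have hb1 : 1 ≤ b := by
      rw [hb, le_add_iff_nonneg_right]
      positivity
    have hcont : ContinuousOn (fun a => a * P a) (Set.Icc 0 b) :=
      (continuous_id.mul H.contP).continuousOn
    have hmem : (2 * (i + 1) : ℝ) ∈ Set.Icc ((0 : ℝ) * P 0) (b * P b) := by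
      refine ⟨by simp; positivity, ?_⟩
      have h1 := H.monoP 1 b zero_le_one hb1
      have h2 : b * P 1 = P 1 + 2 * (i + 1) := by
        rw [hb]
        field_simp
      nlinarith
    obtain ⟨A, hA, hAe⟩ := intermediate_value_Icc (by linarith) hcont hmem
    exact ⟨A, hA.1, hAe⟩
  choose A hA0 hA using hex
  have hApos : ∀ i, 0 < A i := by
    intro i
    refine lt_of_le_of_ne (hA0 i) fun h0 => ?_
    have := hA i
    rw [← h0, zero_mul] at this
    have : (0 : ℝ) < 2 * (i + 1) := by positivity
    linarith
  refine ⟨fun i => A i / (i + 1), fun i => div_pos (hApos i) (by positivity), ?_, fun i => ?_⟩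
  · have hsq : Tendsto (fun i : ℕ => (A i / (i + 1)) ^ 2) atTop (𝓝 0) := by
      have hl : Tendsto (fun i : ℕ => (2 / k + 1) * (1 / ((i : ℝ) + 1))) atTop (𝓝 0) := by
        have := (tendsto_one_div_add_atTop_nhds_zero_nat (𝕜 := ℝ)).const_mul (2 / k + 1)
        simpa using this
      refine squeeze_zero (fun _ => sq_nonneg _) (fun i => ?_) hl
      have h1 := H.slope_le 0 (A i) le_rfl (hA0 i)
      rw [H.zeroQ, sub_zero, sub_zero, hA i] at h1
      have h2 := hQ (A i)
      have hi : (0 : ℝ) ≤ i := Nat.cast_nonneg i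
      have h3 : A i ^ 2 ≤ (2 / k + 1) * (i + 1) := by
        have : k * A i ^ 2 ≤ k * ((2 / k + 1) * (i + 1)) := by
          have e : k * ((2 / k + 1) * ((i : ℝ) + 1)) = 2 * (i + 1) + k * (i + 1) := by
            field_simp
          rw [e]
          nlinarith
        exact le_of_mul_le_mul_left this hk
      rw [div_pow, div_le_iff₀ (by positivity)]
      calc A i ^ 2 ≤ (2 / k + 1) * (i + 1) := h3
        _ = (2 / k + 1) * (1 / ((i : ℝ) + 1)) * (i + 1) ^ 2 := by field_simp
    have := hsq.sqrt
    rw [Real.sqrt_zero] at this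
    refine this.congr fun i => ?_
    rw [Real.sqrt_sq]
    exact (div_pos (hApos i) (by positivity)).le
  · have := hA i
    unfold sample
    push_cast
    rw [mul_div_cancel₀ _ (by positivity : ((i : ℝ) + 1) ≠ 0)]
    field_simp
    linarith

/-- The modulus of the Fourier transform of `exp (-q)` at `x + iy` is nondecreasing in `|y|`. -/
def VertMono (q : ℝ → ℝ) : Prop :=
  ∀ x y y' : ℝ, |y| ≤ |y'| →
    ‖∫ t : ℝ, ((Real.exp (-q t) : ℝ) : ℂ) * Complex.exp (Complex.I * (x + y * Complex.I) * t)‖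
      ≤ ‖∫ t : ℝ, ((Real.exp (-q t) : ℝ) : ℂ)
          * Complex.exp (Complex.I * (x + y' * Complex.I) * t)‖

theorem Potential.vertMono {Q P : ℝ → ℝ} (H : Potential Q P) {k : ℝ} (hk : 0 < k)
    (hQ : ∀ t, k * t ^ 2 - k ≤ Q t) (B : ℂ[X]) (hB : 0 < B.natDegree)
    (hBr : ∀ a, B.eval a = 0 → a.re = 0) (hBP : ∀ t : ℝ, B.eval (t : ℂ) = (P t : ℂ)) :
    VertMono Q := by
  obtain ⟨h, hpos, hlim, hN⟩ := H.exists_mesh hk hQ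
  have hlt : ∀ i n : ℕ, n < i + 1 → sample P (h i) n < 1 := by
    intro i n hn
    rw [← hN i]
    unfold sample
    have hhi := hpos i
    have hni : (n : ℝ) < i + 1 := by exact_mod_cast hn
    refine mul_lt_mul_of_pos_left ?_ (by positivity)
    push_cast
    exact H.strictP _ _ (by positivity) (mul_lt_mul_of_pos_right hni hhi)
  have hconv : ∀ z : ℂ, Tendsto (fun i => ∫ t, stepFn P (h i) z t) atTop
      (𝓝 (∫ t : ℝ, ((Real.exp (-Q t) : ℝ) : ℂ) * Complex.exp (Complex.I * z * t))) := by
    intro z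
    refine tendsto_integral_filter_of_dominated_convergence _
      (Eventually.of_forall fun i => (measurable_stepFn P (h i) z).aestronglyMeasurable) ?_
      (integrable_gauss hk (Real.exp (k / 8 + k / 4 + 2 * z.im ^ 2 / k)))
      (Eventually.of_forall fun t => H.tendsto_stepFn hpos hlim z t)
    filter_upwards [hlim.eventually (eventually_le_nhds one_pos)] with i hi
    exact Eventually.of_forall fun t =>
      H.norm_stepFn_le hk hQ (hpos i) hi (hN i) (hlt i) z t
  intro x y y' hy
  refine le_of_tendsto_of_tendsto' (hconv _).norm (hconv _).norm fun i => ?_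
  have hhi := hpos i
  rw [integral_stepFn hhi (hN i), integral_stepFn hhi (hN i), norm_mul (h i : ℂ),
    norm_mul (h i : ℂ)]
  refine mul_le_mul_of_nonneg_left ?_ (norm_nonneg (h i : ℂ))
  have hroots : ∀ ρ ∈ (genPoly (sample P (h i)) (i + 1)).roots, ‖ρ‖ = 1 := by
    refine genPoly_roots (by omega) H.sample_odd (H.sample_nonneg hhi) (hlt i) (hN i)
      (C ((h i / 2 : ℝ) : ℂ) * B.comp (C (h i : ℂ) * X)) ?_ ?_ ?_
    · have h1 : ((h i / 2 : ℝ) : ℂ) ≠ 0 := by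
        exact_mod_cast (by positivity : h i / 2 ≠ 0)
      have h2 : (h i : ℂ) ≠ 0 := by exact_mod_cast hhi.ne'
      rw [natDegree_C_mul h1, natDegree_comp, natDegree_C_mul_X _ h2, mul_one]
      exact hB
    · intro a ha
      rw [eval_mul, eval_C, eval_comp, eval_mul, eval_C, eval_X] at ha
      rcases mul_eq_zero.1 ha with h0 | h0
      · exact absurd h0 (by exact_mod_cast (by positivity : h i / 2 ≠ 0))
      · have := hBr _ h0
        rw [Complex.re_ofReal_mul] at this
        rcases mul_eq_zero.1 this with h0 | h0
        · exact absurd h0 hhi.ne'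
        · exact h0
    · intro n
      rw [eval_mul, eval_C, eval_comp, eval_mul, eval_C, eval_X]
      have := hBP (n * h i)
      push_cast at this
      rw [mul_comm (h i : ℂ), this, sample]
      push_cast
      ring
  have key := norm_trig_mono (genPoly_natDegree (H.sample_nonneg hhi) (hlt i) (hN i)) hroots
    (x * h i) (y := y * h i) (y' := y' * h i)
    (by rw [abs_mul, abs_mul]; exact mul_le_mul_of_nonneg_right hy (abs_nonneg _))
  have e : ∀ y : ℝ, ((x * h i : ℝ) : ℂ) + ((y * h i : ℝ) : ℂ) * Complex.I
      = ((x : ℂ) + y * Complex.I) * h i := by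
    intro y
    push_cast
    ring
  rw [e, e] at key
  exact key

end DeBruijn

/-! ### Polynomials with imaginary roots, class Q, and reality of zeros -/

namespace DeBruijn

open MeasureTheory Filter Topology

/-- Even real polynomials with nonnegative coefficients and only purely imaginary roots. -/
structure ImagRooted (Q : ℝ[X]) : Prop where
  even : Q.comp (-X) = Q
  coeff_nonneg : ∀ j, 0 ≤ Q.coeff j
  root_re : ∀ z : ℂ, aeval z Q = 0 → z.re = 0

theorem imagRooted_C {k : ℝ} (hk : 0 < k) : ImagRooted (C k) := by
  refine ⟨by simp, fun j => ?_, fun z hz => ?_⟩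
  · rw [coeff_C]
    split_ifs <;> positivity
  · simp at hz
    exact absurd hz hk.ne'

theorem imagRooted_X_sq : ImagRooted (X ^ 2) := by
  refine ⟨by simp, fun j => ?_, fun z hz => ?_⟩
  · rw [coeff_X_pow]
    split_ifs <;> positivity
  · simp at hz
    simp [hz]

theorem imagRooted_one_add {b : ℝ} (hb : 0 ≤ b) : ImagRooted (1 + C b * X ^ 2) := by
  refine ⟨by simp, fun j => ?_, fun z hz => ?_⟩
  · rw [coeff_add, coeff_C_mul, coeff_X_pow, coeff_one]
    split_ifs <;> simp [hb]
    linarith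
  · simp only [map_add, map_one, map_mul, aeval_C, map_pow, aeval_X] at hz
    have hre := congrArg Complex.re hz
    have him := congrArg Complex.im hz
    simp [sq] at hre him
    have hb0 : b ≠ 0 := by
      rintro rfl
      simp at hre
    rcases him with h | h
    · exact absurd h hb0
    · have h2 : z.re * z.im = 0 := by linarith
      rcases mul_eq_zero.1 h2 with h3 | h3
      · exact h3
      · rw [h3] at hre
        nlinarith [mul_nonneg hb (mul_self_nonneg z.re)]

theorem ImagRooted.mul {Q R : ℝ[X]} (hQ : ImagRooted Q) (hR : ImagRooted R) :
    ImagRooted (Q * R) := by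
  refine ⟨by rw [mul_comp, hQ.even, hR.even], fun j => ?_, fun z hz => ?_⟩
  · rw [coeff_mul]
    exact Finset.sum_nonneg fun i _ => mul_nonneg (hQ.coeff_nonneg _) (hR.coeff_nonneg _)
  · rw [map_mul] at hz
    rcases mul_eq_zero.1 hz with h | h
    · exact hQ.root_re z h
    · exact hR.root_re z h

theorem imagRooted_one : ImagRooted 1 := by
  simpa using imagRooted_C one_pos

theorem ImagRooted.pow {Q : ℝ[X]} (hQ : ImagRooted Q) (n : ℕ) : ImagRooted (Q ^ n) := by
  induction n with
  | zero => simpa using imagRooted_one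
  | succ n ih =>
    rw [pow_succ]
    exact ih.mul hQ

theorem ImagRooted.ne_zero {Q : ℝ[X]} (hQ : ImagRooted Q) : Q ≠ 0 := by
  rintro rfl
  have := hQ.root_re 1 (by simp)
  simp at this

theorem eval_strict_mono {R : ℝ[X]} (hR : ∀ j, 0 ≤ R.coeff j) (hd : 0 < R.natDegree) {a b : ℝ}
    (ha : 0 ≤ a) (hab : a < b) : R.eval a < R.eval b := by
  rw [eval_eq_sum_range, eval_eq_sum_range]
  refine Finset.sum_lt_sum (fun j _ => ?_) ⟨R.natDegree, by simp, ?_⟩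
  · exact mul_le_mul_of_nonneg_left (pow_le_pow_left₀ ha hab.le j) (hR j)
  · have h1 : R.coeff R.natDegree ≠ 0 := by
      rw [coeff_natDegree, leadingCoeff_ne_zero]
      rintro rfl
      simp at hd
    exact mul_lt_mul_of_pos_left (pow_lt_pow_left₀ hab ha hd.ne')
      (lt_of_le_of_ne (hR _) h1.symm)

theorem ImagRooted.vertMono {Q : ℝ[X]} (hQ : ImagRooted Q) (h0 : Q.eval 0 = 0)
    (hd : 2 ≤ Q.natDegree) {k : ℝ} (hk : 0 < k) (hg : ∀ t, k * t ^ 2 - k ≤ Q.eval t) :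
    VertMono (fun t => Q.eval t) := by
  have hPc : ∀ j, 0 ≤ (derivative Q).coeff j := fun j => by
    rw [coeff_derivative]
    exact mul_nonneg (hQ.coeff_nonneg _) (by positivity)
  have hPd : 0 < (derivative Q).natDegree := by
    rw [natDegree_derivative]
    omega
  have hstrict : ∀ a b : ℝ, 0 ≤ a → a < b → (derivative Q).eval a < (derivative Q).eval b :=
    fun a b ha hab => eval_strict_mono hPc hPd ha hab
  have hmvt : ∀ a b : ℝ, a < b → ∃ c ∈ Set.Ioo a b,
      (derivative Q).eval c = (Q.eval b - Q.eval a) / (b - a) := fun a b hab =>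
    exists_hasDerivAt_eq_slope (fun t => Q.eval t) (fun t => (derivative Q).eval t) hab
      Q.continuous.continuousOn (fun t _ => Q.hasDerivAt t)
  have H : Potential (fun t => Q.eval t) (fun t => (derivative Q).eval t) := by
    refine ⟨Q.continuous, (derivative Q).continuous, h0, fun t => ?_, fun t => ?_, hstrict,
      fun a b ha hab => ?_, fun a b ha hab => ?_⟩
    · have := congrArg (eval t) hQ.even
      simpa using this
    · have := congrArg (fun R => eval t (derivative R)) hQ.even
      simp [derivative_comp] at this
      linarith
    · rcases hab.eq_or_lt with rfl | hlt
      · simp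
      · obtain ⟨c, hc, he⟩ := hmvt a b hlt
        have h1 := hstrict a c ha hc.1
        rw [he, lt_div_iff₀ (by linarith)] at h1
        linarith
    · rcases hab.eq_or_lt with rfl | hlt
      · simp
      · obtain ⟨c, hc, he⟩ := hmvt a b hlt
        have h1 := hstrict c b (ha.trans hc.1.le) hc.2
        rw [he, div_lt_iff₀ (by linarith)] at h1
        linarith
  refine H.vertMono hk hg ((derivative Q).map (algebraMap ℝ ℂ)) ?_ (fun a ha => ?_) fun t => ?_
  · rwa [natDegree_map]
  · -- Gauss–Lucas: the roots of `Q'` lie in the convex hull of those of `Q`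
    have hdeg : 0 < (Q.map (algebraMap ℝ ℂ)).degree := by
      rw [← natDegree_pos_iff_degree_pos, natDegree_map]
      omega
    have hsub := rootSet_derivative_subset_convexHull_rootSet hdeg
    have hmem : a ∈ (derivative (Q.map (algebraMap ℝ ℂ))).rootSet ℂ := by
      rw [mem_rootSet, coe_aeval_eq_eval, derivative_map]
      refine ⟨?_, ha⟩
      rw [Ne, Polynomial.map_eq_zero]
      rintro hz
      rw [hz] at hPd
      simp at hPd
    have hconv : Convex ℝ {z : ℂ | z.re = 0} := by
      have := convex_hyperplane (𝕜 := ℝ) Complex.reLm.isLinear 0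
      simpa using this
    refine convexHull_min ?_ hconv (hsub hmem)
    intro z hz
    rw [mem_rootSet, coe_aeval_eq_eval, eval_map_algebraMap] at hz
    exact hQ.root_re z hz.2
  · rw [← Complex.coe_algebraMap, eval_map_algebraMap, aeval_algebraMap_apply]
    simp

theorem norm_integrand_le {k q : ℝ} (hk : 0 < k) (t : ℝ) (hq : k * t ^ 2 - k ≤ q) (y : ℝ) :
    Real.exp (-q) * Real.exp (|y| * |t|) ≤
      Real.exp (4 * k / 8 + 4 * k / 4 + 2 * y ^ 2 / (4 * k)) * Real.exp (-(4 * k / 16) * t ^ 2) := by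
  -- `dominate` concerns `exp (-q / 4)`, so `q` and `k` are scaled by `4`
  have := dominate (k := 4 * k) (y := y) (τ := t) (t := t) (q := 4 * q) (by positivity)
    (by linarith) (by simp)
  rwa [mul_div_cancel_left₀ _ (by norm_num : (4 : ℝ) ≠ 0)] at this

theorem norm_integrand_le' {k q : ℝ} (hk : 0 < k) (t : ℝ) (hq : k * t ^ 2 - k ≤ q) (z : ℂ) :
    ‖((Real.exp (-q) : ℝ) : ℂ) * Complex.exp (Complex.I * z * t)‖ ≤
      Real.exp (4 * k / 8 + 4 * k / 4 + 2 * z.im ^ 2 / (4 * k))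
        * Real.exp (-(4 * k / 16) * t ^ 2) := by
  refine le_trans ?_ (norm_integrand_le hk t hq z.im)
  rw [norm_mul, Complex.norm_real, Real.norm_eq_abs, abs_of_pos (Real.exp_pos _)]
  exact mul_le_mul_of_nonneg_left (norm_exp_le z t) (Real.exp_nonneg _)

theorem measurable_integrand {q : ℝ → ℝ} (hq : Measurable q) (z : ℂ) :
    Measurable fun t : ℝ => ((Real.exp (-q t) : ℝ) : ℂ) * Complex.exp (Complex.I * z * t) := by
  fun_prop

theorem integrable_integrand {q : ℝ → ℝ} (hq : Measurable q) {k : ℝ} (hk : 0 < k)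
    (hg : ∀ t, k * t ^ 2 - k ≤ q t) (z : ℂ) :
    Integrable fun t : ℝ => ((Real.exp (-q t) : ℝ) : ℂ) * Complex.exp (Complex.I * z * t) :=
  (integrable_gauss (k := 4 * k) (by positivity) _).mono'
    (measurable_integrand hq z).aestronglyMeasurable
    (Eventually.of_forall fun t => norm_integrand_le' hk t (hg t) z)

theorem VertMono.of_tendsto {q : ℝ → ℝ} {qs : ℕ → ℝ → ℝ} (hs : ∀ i, VertMono (qs i))
    (hm : ∀ i, Measurable (qs i)) {k : ℝ} (hk : 0 < k) (hg : ∀ i t, k * t ^ 2 - k ≤ qs i t)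
    (hlim : ∀ t, Tendsto (fun i => qs i t) atTop (𝓝 (q t))) : VertMono q := by
  have hconv : ∀ z : ℂ, Tendsto (fun i => ∫ t : ℝ, ((Real.exp (-qs i t) : ℝ) : ℂ)
        * Complex.exp (Complex.I * z * t)) atTop
      (𝓝 (∫ t : ℝ, ((Real.exp (-q t) : ℝ) : ℂ) * Complex.exp (Complex.I * z * t))) := by
    intro z
    refine tendsto_integral_of_dominated_convergence _
      (fun i => (measurable_integrand (hm i) z).aestronglyMeasurable)
      (integrable_gauss (k := 4 * k) (by positivity) _)
      (fun i => Eventually.of_forall fun t => norm_integrand_le' hk t (hg i t) z)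
      (Eventually.of_forall fun t => ?_)
    refine Tendsto.mul_const _ ((Complex.continuous_ofReal.tendsto _).comp ?_)
    exact (Real.continuous_exp.tendsto _).comp (hlim t).neg
  intro x y y' hy
  exact le_of_tendsto_of_tendsto' (hconv _).norm (hconv _).norm fun i => hs i x y y' hy

theorem differentiable_transform {q : ℝ → ℝ} (hq : Measurable q) {k : ℝ} (hk : 0 < k)
    (hg : ∀ t, k * t ^ 2 - k ≤ q t) : Differentiable ℂ fun z : ℂ =>
      ∫ t : ℝ, ((Real.exp (-q t) : ℝ) : ℂ) * Complex.exp (Complex.I * z * t) := by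
  intro z₀
  have hres := hasDerivAt_integral_of_dominated_loc_of_deriv_le (μ := volume)
    (F := fun (z : ℂ) (t : ℝ) => ((Real.exp (-q t) : ℝ) : ℂ) * Complex.exp (Complex.I * z * t))
    (F' := fun (z : ℂ) (t : ℝ) => ((Real.exp (-q t) : ℝ) : ℂ) *
      (Complex.exp (Complex.I * z * t) * (Complex.I * t)))
    (x₀ := z₀) (s := Metric.ball z₀ 1)
    (bound := fun t => Real.exp (4 * k / 8 + 4 * k / 4 + 2 * (|z₀.im| + 2) ^ 2 / (4 * k))
        * Real.exp (-(4 * k / 16) * t ^ 2))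
    (Metric.ball_mem_nhds z₀ one_pos)
    (Eventually.of_forall fun z => (measurable_integrand hq z).aestronglyMeasurable)
    (integrable_integrand hq hk hg z₀)
    (Measurable.aestronglyMeasurable (by fun_prop))
    (Eventually.of_forall fun t z hz => ?_)
    (integrable_gauss (k := 4 * k) (by positivity) _)
    (Eventually.of_forall fun t z _ => ?_)
  · exact hres.2.differentiableAt
  · refine le_trans ?_ (norm_integrand_le hk t (hg t) (|z₀.im| + 2))
    have him : |z.im| ≤ |z₀.im| + 1 := by
      have h1 : |(z - z₀).im| ≤ ‖z - z₀‖ := Complex.abs_im_le_norm _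
      have h2 : ‖z - z₀‖ < 1 := by simpa [dist_eq_norm] using hz
      rw [Complex.sub_im] at h1
      have := abs_sub_abs_le_abs_sub z.im z₀.im
      linarith
    have ht : |t| ≤ Real.exp |t| := by
      have := Real.add_one_le_exp |t|
      linarith
    rw [norm_mul, norm_mul, norm_mul, Complex.norm_real, Complex.norm_real, Complex.norm_I,
      one_mul, Real.norm_eq_abs, Real.norm_eq_abs, abs_of_pos (Real.exp_pos _)]
    refine mul_le_mul_of_nonneg_left ?_ (Real.exp_nonneg _)
    calc ‖Complex.exp (Complex.I * z * t)‖ * |t|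
        ≤ Real.exp (|z.im| * |t|) * Real.exp |t| :=
          mul_le_mul (norm_exp_le z t) ht (abs_nonneg _) (Real.exp_nonneg _)
      _ ≤ Real.exp (|(|z₀.im| + 2)| * |t|) := by
          rw [← Real.exp_add, Real.exp_le_exp, abs_of_nonneg (by positivity : 0 ≤ |z₀.im| + 2)]
          nlinarith [abs_nonneg t]
  · refine HasDerivAt.const_mul _ (HasDerivAt.cexp ?_)
    have := ((hasDerivAt_id z).const_mul Complex.I).mul_const (t : ℂ)
    simpa using this

/-- Vertical monotonicity propagates a nonreal zero to a whole vertical segment, which the identity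
theorem forbids. -/
theorem VertMono.im_eq_zero {q : ℝ → ℝ} (hv : VertMono q) (hq : Measurable q) {k : ℝ}
    (hk : 0 < k) (hg : ∀ t, k * t ^ 2 - k ≤ q t) {z : ℂ}
    (hz : ∫ t : ℝ, ((Real.exp (-q t) : ℝ) : ℂ) * Complex.exp (Complex.I * z * t) = 0) :
    z.im = 0 := by
  by_contra him
  set F : ℂ → ℂ := fun z =>
    ∫ t : ℝ, ((Real.exp (-q t) : ℝ) : ℂ) * Complex.exp (Complex.I * z * t) with hF
  have hseg : ∀ y : ℝ, |y| ≤ |z.im| → F (z.re + y * Complex.I) = 0 := by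
    intro y hy
    have h1 := hv z.re y z.im hy
    rw [Complex.re_add_im, hz, norm_zero] at h1
    exact norm_le_zero_iff.1 h1
  have hdiff : Differentiable ℂ F := differentiable_transform hq hk hg
  have han : AnalyticOnNhd ℂ F Set.univ := fun w _ => hdiff.analyticAt w
  have hseq : Tendsto (fun n : ℕ => (z.re : ℂ) + ((z.im * (1 / ((n : ℝ) + 1)) : ℝ) : ℂ) * Complex.I)
      atTop (𝓝[≠] (z.re : ℂ)) := by
    refine tendsto_nhdsWithin_iff.2 ⟨?_, Eventually.of_forall fun n => ?_⟩
    · have h1 := (tendsto_one_div_add_atTop_nhds_zero_nat (𝕜 := ℝ)).const_mul z.im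
      have h2 := ((Complex.continuous_ofReal.tendsto _).comp h1).mul_const Complex.I
      have h3 := h2.const_add (z.re : ℂ)
      simpa [Function.comp_def] using h3
    · have h1 : z.im * (1 / ((n : ℝ) + 1)) ≠ 0 := mul_ne_zero him (by positivity)
      simp only [Set.mem_compl_iff, Set.mem_singleton_iff, add_eq_left, mul_eq_zero,
        Complex.I_ne_zero, or_false]
      exact_mod_cast h1
  have hfreq : ∃ᶠ w in 𝓝[≠] (z.re : ℂ), F w = 0 := by
    refine hseq.frequently (Eventually.frequently (Eventually.of_forall fun n => hseg _ ?_))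
    rw [abs_mul]
    refine mul_le_of_le_one_right (abs_nonneg _) ?_
    rw [abs_of_nonneg (by positivity), div_le_one (by positivity)]
    linarith [(Nat.cast_nonneg n : (0 : ℝ) ≤ n)]
  have hzero := han.eqOn_zero_of_preconnected_of_frequently_eq_zero isPreconnected_univ
    (Set.mem_univ _) hfreq (Set.mem_univ (0 : ℂ))
  have hintegrable : Integrable fun t : ℝ => Real.exp (-q t) := by
    have := (integrable_integrand hq hk hg 0).norm
    refine this.congr (Eventually.of_forall fun t => ?_)
    simp only [mul_zero, zero_mul, Complex.exp_zero, mul_one, Complex.norm_real, Real.norm_eq_abs]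
    exact abs_of_pos (Real.exp_pos _)
  have hpos := integral_exp_pos hintegrable
  simp only [hF, mul_zero, zero_mul, Complex.exp_zero, mul_one, Pi.zero_apply] at hzero
  rw [integral_complex_ofReal] at hzero
  exact hpos.ne' (by exact_mod_cast hzero)

end DeBruijn

open MeasureTheory Filter Topology in
/-- A class Q function is a pointwise limit of even polynomials with purely imaginary roots, uniformly
bounded below by `k t² - k`. -/
theorem IsClassQ.vertMono {q : ℝ → ℝ} (hq : IsClassQ q) : ∃ k : ℝ, 0 < k ∧ Measurable q ∧
    (∀ t, k * t ^ 2 - k ≤ q t) ∧ DeBruijn.VertMono q := by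
  obtain ⟨k, m, μ, S, β, hk, hm, hμ, -, hsum, hqe, -⟩ := hq
  set b : ℕ → ℝ := S.indicator fun n => 1 / (β n) ^ 2 with hb
  have hb0 : ∀ n, 0 ≤ b n := fun n => Set.indicator_nonneg (fun _ _ => by positivity) n
  have hbsum : Summable b := summable_subtype_iff_indicator.1 hsum
  set R : ℕ → ℝ[X] := fun M => C k * (X ^ 2) ^ m * ((1 + C (μ / M) * X ^ 2) ^ M *
    ∏ n ∈ Finset.range M, (1 + C (b n) * X ^ 2)) with hR
  have hRe : ∀ M t, (R M).eval t = k * t ^ (2 * m) * ((1 + μ * t ^ 2 / M) ^ M *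
      ∏ n ∈ Finset.range M, (1 + b n * t ^ 2)) := by
    intro M t
    simp only [hR, eval_mul, eval_C, eval_pow, eval_X, eval_add, eval_one, eval_prod]
    rw [← pow_mul, div_mul_eq_mul_div]
  have hlim : ∀ t, Tendsto (fun M => (R M).eval t) atTop (𝓝 (q t)) := by
    intro t
    simp only [hRe]
    rw [hqe t, mul_assoc]
    refine Tendsto.const_mul _ (Tendsto.mul (Real.tendsto_one_add_div_pow_exp _) ?_)
    have hmult : Multipliable fun n => 1 + b n * t ^ 2 :=
      Real.multipliable_one_add_of_summable (hbsum.mul_right _)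
    have e : ∏' n : S, (1 + t ^ 2 / (β n) ^ 2) = ∏' n, (1 + b n * t ^ 2) := by
      rw [tprod_subtype S fun n => 1 + t ^ 2 / (β n) ^ 2]
      refine tprod_congr fun n => ?_
      by_cases hn : n ∈ S
      · simp [hb, hn]
        ring
      · simp [hb, hn]
    rw [e]
    exact hmult.hasProd.tendsto_prod_nat
  have hg : ∀ M t, k * t ^ 2 - k ≤ (R M).eval t := by
    intro M t
    rw [hRe]
    have h1 : 1 ≤ (1 + μ * t ^ 2 / M) ^ M := one_le_pow₀ (by
      rw [le_add_iff_nonneg_right]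
      positivity)
    have h2 : 1 ≤ ∏ n ∈ Finset.range M, (1 + b n * t ^ 2) := by
      calc (1 : ℝ) = ∏ _n ∈ Finset.range M, (1 : ℝ) := by simp
        _ ≤ ∏ n ∈ Finset.range M, (1 + b n * t ^ 2) :=
          Finset.prod_le_prod (fun _ _ => zero_le_one) fun n _ => by
            have := hb0 n
            rw [le_add_iff_nonneg_right]
            positivity
    have h3 : t ^ 2 - 1 ≤ t ^ (2 * m) := by
      rw [pow_mul]
      rcases le_total (t ^ 2) 1 with h | h
      · have : 0 ≤ (t ^ 2) ^ m := by positivity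
        linarith
      · have := le_self_pow₀ h hm.ne'
        linarith
    have h4 : 0 ≤ k * t ^ (2 * m) := by
      rw [pow_mul]
      positivity
    have h5 := one_le_mul_of_one_le_of_one_le h1 h2
    have h6 : k * t ^ (2 * m) ≤ k * t ^ (2 * m) * ((1 + μ * t ^ 2 / M) ^ M *
        ∏ n ∈ Finset.range M, (1 + b n * t ^ 2)) := le_mul_of_one_le_right h4 h5
    nlinarith
  have hmeas : ∀ M, Measurable fun t => (R M).eval t := fun M => (R M).continuous.measurable
  have hvert : ∀ M, DeBruijn.VertMono fun t => (R M).eval t := by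
    intro M
    have hI : DeBruijn.ImagRooted ((1 + C (μ / M) * X ^ 2) ^ M *
        ∏ n ∈ Finset.range M, (1 + C (b n) * X ^ 2)) :=
      ((DeBruijn.imagRooted_one_add (by positivity)).pow M).mul
        (Finset.prod_induction _ _ (fun _ _ => DeBruijn.ImagRooted.mul) DeBruijn.imagRooted_one
          fun n _ => DeBruijn.imagRooted_one_add (hb0 n))
    refine DeBruijn.ImagRooted.vertMono
      (((DeBruijn.imagRooted_C hk).mul (DeBruijn.imagRooted_X_sq.pow m)).mul hI) ?_ ?_ hk (hg M)
    · rw [hRe]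
      simp [hm.ne']
    · rw [natDegree_mul (mul_ne_zero (C_ne_zero.2 hk.ne') (by simp)) hI.ne_zero,
        natDegree_C_mul hk.ne', ← pow_mul, natDegree_X_pow]
      omega
  refine ⟨k, hk, measurable_of_tendsto_metrizable hmeas (tendsto_pi_nhds.2 hlim),
    fun t => ge_of_tendsto' (hlim t) fun M => hg M t,
    DeBruijn.VertMono.of_tendsto hvert hmeas hk hg hlim⟩

/-! ### The convolution -/

/-- For `q₁, q₂` of class Q and `c(t) = ∫ e^{-q₁(v)}·e^{-q₂(t-v)} dv`, every zero of the
complex Fourier transform `z ↦ ∫ c(t)·e^{izt} dt` is real. -/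
theorem zeros_real_convolution_CFT (q₁ q₂ : ℝ → ℝ) (h₁ : IsClassQ q₁) (h₂ : IsClassQ q₂)
    (C : ℝ → ℝ)
    (hC : ∀ t : ℝ, C t = ∫ v : ℝ, Real.exp (-(q₁ v)) * Real.exp (-(q₂ (t - v))))
    (z : ℂ)
    (hz : (∫ t : ℝ, ((C t : ℝ) : ℂ) * Complex.exp (Complex.I * z * t)) = 0) :
    z.im = 0 := by
  obtain ⟨k₁, hk₁, hm₁, hg₁, hv₁⟩ := h₁.vertMono
  obtain ⟨k₂, hk₂, hm₂, hg₂, hv₂⟩ := h₂.vertMono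
  have hconv := MeasureTheory.integral_convolution (ContinuousLinearMap.mul ℂ ℂ)
    (DeBruijn.integrable_integrand hm₁ hk₁ hg₁ z) (DeBruijn.integrable_integrand hm₂ hk₂ hg₂ z)
  have e : ∀ t : ℝ, ((C t : ℝ) : ℂ) * Complex.exp (Complex.I * z * t) =
      MeasureTheory.convolution
        (fun t : ℝ => ((Real.exp (-q₁ t) : ℝ) : ℂ) * Complex.exp (Complex.I * z * t))
        (fun t : ℝ => ((Real.exp (-q₂ t) : ℝ) : ℂ) * Complex.exp (Complex.I * z * t))
        (ContinuousLinearMap.mul ℂ ℂ) MeasureTheory.volume t := by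
    intro t
    rw [MeasureTheory.convolution, hC, ← integral_complex_ofReal,
      ← MeasureTheory.integral_mul_const]
    congr 1
    funext v
    have hexp : Complex.exp (Complex.I * z * t)
        = Complex.exp (Complex.I * z * v) * Complex.exp (Complex.I * z * ((t - v : ℝ) : ℂ)) := by
      rw [← Complex.exp_add]
      congr 1
      push_cast
      ring
    rw [ContinuousLinearMap.mul_apply', hexp]
    push_cast
    ring
  simp_rw [e] at hz
  rw [hconv, ContinuousLinearMap.mul_apply'] at hz
  rcases mul_eq_zero.1 hz with h | h
  · exact hv₁.im_eq_zero hm₁ hk₁ hg₁ h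
  · exact hv₂.im_eq_zero hm₂ hk₂ hg₂ h
end
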